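/- Let N ≥ 1 and q > 1. There exists C = C(N,q) > 0 such that for every r, ρ > 0, every compact set K ⊆ B_r, every η ∈ 𝒯_{r,ρ}(K), and every positive solution u of ∂_t u − Δu + u^q = 0 in Q_∞ whose initial trace vanishes outside K: u(x, (r+2ρ)²) ≤ C ‖R[η]‖_{L^{q'}}^{q'} / (ρ(r+ρ))^{N/2} for every x ∈ ℝ^N. -/

import Mathlib

open MeasureTheory Real Set Filter Metric

noncomputable section

abbrev Euc (N : ℕ) := EuclideanSpace ℝ (Fin N)

/-- Spatial Laplacian of `f : ℝ^N → ℝ`. -/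
def lapl {N : ℕ} (f : Euc N → ℝ) (x : Euc N) : ℝ :=
  ∑ i : Fin N,
    fderiv ℝ (fun y => fderiv ℝ f y (EuclideanSpace.single i 1)) x (EuclideanSpace.single i 1)

/-- The capacity `C_{2/q,q'}` of a set `A ⊆ ℝ^N`. -/
def capQ (N : ℕ) (q : ℝ) (A : Set (Euc N)) : ℝ :=
  sInf { c : ℝ | ∃ φ : Euc N → ℝ, ContDiff ℝ (⊤ : ℕ∞) φ ∧ HasCompactSupport φ ∧
      (∃ U : Set (Euc N), IsOpen U ∧ A ⊆ U ∧ ∀ x ∈ U, 1 ≤ φ x) ∧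
      c = (∫ x, φ x ^ (q / (q - 1))) +
          ∫ x, ∫ y, |φ x - φ y| ^ (q / (q - 1)) / ‖x - y‖ ^ ((N : ℝ) + 2 / (q - 1)) }

/-- The spherical shell piece `F_n` of `F` around `x` at time `t`. -/
def shell (N : ℕ) (F : Set (Euc N)) (x : Euc N) (t : ℝ) (n : ℕ) : Set (Euc N) :=
  {y | y ∈ F ∧ Real.sqrt ((n : ℝ) * t) ≤ dist x y ∧ dist x y ≤ Real.sqrt (((n : ℝ) + 1) * t)}

/-- The parabolic capacitary potential `W_F`. -/
def Wpot (N : ℕ) (q : ℝ) (F : Set (Euc N)) (x : Euc N) (t : ℝ) : ℝ :=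
  t ^ (-(N : ℝ) / 2) *
    ∑' n : ℕ,
      Real.sqrt (((n : ℝ) + 1) * t) ^ ((N : ℝ) - 2 / (q - 1)) * Real.exp (-(n : ℝ) / 4) *
        capQ N q ((fun y => (Real.sqrt (((n : ℝ) + 1) * t))⁻¹ • y) '' shell N F x t n)

/-- `u` is a positive solution of `∂ₜu - Δu + u^q = 0` in `Q_∞` whose initial
trace vanishes outside the closed set `F`. -/
def IsSol (N : ℕ) (q : ℝ) (u : Euc N → ℝ → ℝ) (F : Set (Euc N)) : Prop :=
  ContDiffOn ℝ 2 (fun p : Euc N × ℝ => u p.1 p.2) (Set.univ ×ˢ Set.Ioi (0 : ℝ)) ∧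
  (∀ x t, 0 < t → 0 < u x t) ∧
  (∀ x t, 0 < t → deriv (u x) t - lapl (fun y => u y t) x + u x t ^ q = 0) ∧
  (∀ E : Set (Euc N), IsCompact E → E ⊆ Fᶜ →
    Tendsto (fun t => sSup ((fun x => u x t) '' E)) (nhdsWithin 0 (Set.Ioi 0)) (nhds 0))

/-- The heat potential of a function. -/
def heatPot (N : ℕ) (η : Euc N → ℝ) (x : Euc N) (t : ℝ) : ℝ :=
  ∫ y, (4 * π * t) ^ (-(N : ℝ) / 2) * Real.exp (-‖x - y‖ ^ 2 / (4 * t)) * η y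

/-- The heat potential of a measure. -/
def heatPotM (N : ℕ) (μ : Measure (Euc N)) (x : Euc N) (t : ℝ) : ℝ :=
  ∫ y, (4 * π * t) ^ (-(N : ℝ) / 2) * Real.exp (-‖x - y‖ ^ 2 / (4 * t)) ∂μ

/-- The class `𝒯_{r,ρ}(K)` of test functions. -/
def TestFun (N : ℕ) (r ρ : ℝ) (K : Set (Euc N)) (η : Euc N → ℝ) : Prop :=
  ContDiff ℝ (⊤ : ℕ∞) η ∧ HasCompactSupport η ∧ tsupport η ⊆ Metric.ball (0 : Euc N) (r + ρ) ∧
  (∀ x, 0 ≤ η x ∧ η x ≤ 1) ∧ (∀ x ∈ K, η x = 1)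

/-- `‖R[η]‖_{L^{q'}}^{q'} = ∬_{Q_∞} (|∇ℍ[η]|² + |∂ₜℍ[η]|)^{q'} dx dt`. -/
def Rnorm (N : ℕ) (q : ℝ) (η : Euc N → ℝ) : ℝ :=
  ∫ t in Set.Ioi (0 : ℝ), ∫ x,
    (‖fderiv ℝ (fun y => heatPot N η y t) x‖ ^ 2 +
      |deriv (fun τ => heatPot N η x τ) t|) ^ (q / (q - 1))

/-! Put `q' = q/(q-1)`, `p = 2q'` and `Φ = 1 - ℍ[η]`, so that `0 ≤ Φ ≤ 1`. Testing the equation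
against `Φ^p` and absorbing the term coming from `∂ₜΦ^p + ΔΦ^p`, which is at most a multiple of
`Φ^(p-2) R[η]`, into `∬ u^q Φ^p` by Young's inequality gives `∫ u(·, s) Φ^p ≤ C ‖R[η]‖^{q'}` for all
`s > 0`. The initial layer contributes nothing: the Keller–Osserman estimate bounds `u` by a
multiple of `dist(x, K)^(-2/(q-1))` and of `t^(-1/(q-1))`, while `Φ` vanishes to second order on `K`
at `t = 0`, so `u Φ^(1/(q-1))` is bounded. A weight decaying at infinity makes the integrals
converge and is removed at the end. At time `s = (r + ρ)²` the heat potential has dropped below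
`π^(-N/2) < 1`, so `Φ` is bounded below and `∫ u(·, s) ≤ C ‖R[η]‖^{q'}`; comparing `u` with the
heat flow on `[(r + ρ)², (r + 2ρ)²]` turns this into the pointwise bound. -/

open scoped Topology RealInnerProductSpace

/-! ### The Laplacian of `C²` functions -/

section SecondDerivative

variable {E : Type*} [NormedAddCommGroup E] [NormedSpace ℝ E] {f g : E → ℝ} {x : E}

theorem eventually_differentiableAt_of_contDiffAt_two (hf : ContDiffAt ℝ 2 f x) :
    ∀ᶠ y in 𝓝 x, DifferentiableAt ℝ f y :=
  (hf.eventually (by simp)).mono fun _ hy => hy.differentiableAt two_ne_zero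

theorem differentiableAt_fderiv_apply (hf : ContDiffAt ℝ 2 f x) (v : E) :
    DifferentiableAt ℝ (fun y => fderiv ℝ f y v) x :=
  ((hf.fderiv_right (m := 1) (by norm_num)).differentiableAt one_ne_zero).clm_apply
    (differentiableAt_const v)

theorem contDiff_fderiv_apply (hf : ContDiff ℝ 2 f) (v : E) :
    ContDiff ℝ 1 fun y => fderiv ℝ f y v :=
  (hf.fderiv_right (m := 1) (by norm_num)).clm_apply contDiff_const

theorem continuous_fderiv_apply_const (hf : ContDiff ℝ 1 f) (v : E) :
    Continuous fun y => fderiv ℝ f y v :=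
  (hf.continuous_fderiv one_ne_zero).clm_apply continuous_const

theorem fderiv_fderiv_add (hf : ContDiffAt ℝ 2 f x) (hg : ContDiffAt ℝ 2 g x) (v : E) :
    fderiv ℝ (fun y => fderiv ℝ (fun z => f z + g z) y v) x v =
      fderiv ℝ (fun y => fderiv ℝ f y v) x v + fderiv ℝ (fun y => fderiv ℝ g y v) x v := by
  have hsum : (fun y => fderiv ℝ (fun z => f z + g z) y v) =ᶠ[𝓝 x]
      fun y => fderiv ℝ f y v + fderiv ℝ g y v := by
    filter_upwards [eventually_differentiableAt_of_contDiffAt_two hf,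
      eventually_differentiableAt_of_contDiffAt_two hg] with y hfy hgy
    rw [fderiv_fun_add hfy hgy, add_apply]
  rw [hsum.fderiv_eq, fderiv_fun_add (differentiableAt_fderiv_apply hf v)
    (differentiableAt_fderiv_apply hg v), add_apply]

theorem fderiv_fderiv_mul (hf : ContDiffAt ℝ 2 f x) (hg : ContDiffAt ℝ 2 g x) (v : E) :
    fderiv ℝ (fun y => fderiv ℝ (fun z => f z * g z) y v) x v =
      fderiv ℝ (fun y => fderiv ℝ f y v) x v * g x + 2 * (fderiv ℝ f x v * fderiv ℝ g x v) +
        f x * fderiv ℝ (fun y => fderiv ℝ g y v) x v := by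
  have hprod : (fun y => fderiv ℝ (fun z => f z * g z) y v) =ᶠ[𝓝 x]
      fun y => f y * fderiv ℝ g y v + g y * fderiv ℝ f y v := by
    filter_upwards [eventually_differentiableAt_of_contDiffAt_two hf,
      eventually_differentiableAt_of_contDiffAt_two hg] with y hfy hgy
    simp [fderiv_fun_mul hfy hgy]
  have hfx := hf.differentiableAt two_ne_zero
  have hgx := hg.differentiableAt two_ne_zero
  have hf' := differentiableAt_fderiv_apply hf v
  have hg' := differentiableAt_fderiv_apply hg v
  rw [hprod.fderiv_eq, fderiv_fun_add (hfx.fun_mul hg') (hgx.fun_mul hf'),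
    fderiv_fun_mul hfx hg', fderiv_fun_mul hgx hf']
  simp only [add_apply, smul_apply, smul_eq_mul]
  ring

theorem fderiv_fderiv_comp {φ φ' : ℝ → ℝ} {φ'' : ℝ} (hf : ContDiffAt ℝ 2 f x)
    (hφ : ∀ᶠ s in 𝓝 (f x), HasDerivAt φ (φ' s) s) (hφ' : HasDerivAt φ' φ'' (f x)) (v : E) :
    fderiv ℝ (fun y => fderiv ℝ (fun z => φ (f z)) y v) x v =
      φ' (f x) * fderiv ℝ (fun y => fderiv ℝ f y v) x v + φ'' * (fderiv ℝ f x v) ^ 2 := by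
  have hchain : (fun y => fderiv ℝ (fun z => φ (f z)) y v) =ᶠ[𝓝 x]
      fun y => φ' (f y) * fderiv ℝ f y v := by
    filter_upwards [eventually_differentiableAt_of_contDiffAt_two hf,
      hf.continuousAt.eventually hφ] with y hfy hφy
    rw [show fderiv ℝ (fun z => φ (f z)) y = φ' (f y) • fderiv ℝ f y from
      (hφy.comp_hasFDerivAt y hfy.hasFDerivAt).fderiv]
    rfl
  have hφf : HasFDerivAt (fun y => φ' (f y)) (φ'' • fderiv ℝ f x) x :=
    hφ'.comp_hasFDerivAt x (hf.differentiableAt two_ne_zero).hasFDerivAt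
  rw [hchain.fderiv_eq,
    (hφf.fun_mul (differentiableAt_fderiv_apply hf v).hasFDerivAt).fderiv]
  simp only [add_apply, smul_apply, smul_eq_mul]
  ring

theorem fderiv_fderiv_comp_smul (c : ℝ) (v : E) :
    fderiv ℝ (fun y => fderiv ℝ (fun z => f (c • z)) y v) x v =
      c ^ 2 * fderiv ℝ (fun y => fderiv ℝ f y v) (c • x) v := by
  have hscale : (fun y => fderiv ℝ (fun z => f (c • z)) y v) =
      c • fun y => (fun z => fderiv ℝ f z v) (c • y) := by
    funext y
    simp [fderiv_comp_smul]
  rw [hscale, fderiv_const_smul_field, Pi.smul_apply,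
    fderiv_comp_smul (f := fun z => fderiv ℝ f z v)]
  simp only [smul_apply, smul_eq_mul]
  ring

theorem deriv_deriv_nonpos_of_isLocalMax {h : ℝ → ℝ} {s : ℝ} (hmax : IsLocalMax h s)
    (hcont : ContinuousAt h s) : deriv (deriv h) s ≤ 0 := by
  by_contra! hpos
  have hmin := isLocalMin_of_deriv_deriv_pos hpos hmax.deriv_eq_zero hcont
  have hconst : h =ᶠ[𝓝 s] fun _ => h s := (hmax.and hmin).mono fun _ hy => le_antisymm hy.1 hy.2
  have hzero := hconst.deriv.deriv_eq
  simp only [deriv_const', deriv_const] at hzero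
  exact hpos.ne' hzero

theorem fderiv_fderiv_nonpos_of_isLocalMax (hf : ContDiffAt ℝ 2 f x) (hmax : IsLocalMax f x)
    (v : E) : fderiv ℝ (fun y => fderiv ℝ f y v) x v ≤ 0 := by
  have hline : ∀ s : ℝ, HasDerivAt (fun s : ℝ => x + s • v) v s := fun s => by
    simpa using ((hasDerivAt_id s).smul_const v).const_add x
  have hlim : Tendsto (fun s : ℝ => x + s • v) (𝓝 0) (𝓝 (x + (0 : ℝ) • v)) :=
    (hline 0).continuousAt.tendsto
  have hx : x + (0 : ℝ) • v = x := by simp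
  have hfirst : deriv (fun s : ℝ => f (x + s • v)) =ᶠ[𝓝 0] fun s => fderiv ℝ f (x + s • v) v := by
    rw [hx] at hlim
    filter_upwards [hlim.eventually (eventually_differentiableAt_of_contDiffAt_two hf)] with s hs
    exact (hs.hasFDerivAt.comp_hasDerivAt s (hline s)).deriv
  have hsecond : deriv (fun s : ℝ => fderiv ℝ f (x + s • v) v) 0 =
      fderiv ℝ (fun y => fderiv ℝ f y v) x v := by
    have hd := (differentiableAt_fderiv_apply hf v).hasFDerivAt
    rw [← hx] at hd
    simpa [Function.comp_def] using (hd.comp_hasDerivAt 0 (hline 0)).deriv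
  rw [← hsecond, ← hfirst.deriv_eq]
  rw [← hx] at hmax hf
  exact deriv_deriv_nonpos_of_isLocalMax (hlim.eventually hmax)
    (hf.continuousAt.comp (f := fun s : ℝ => x + s • v) (hline 0).continuousAt)

end SecondDerivative

section Laplacian

variable {N : ℕ} {f g : Euc N → ℝ} {x : Euc N}

theorem sum_fderiv_single_mul_fderiv_single (f g : Euc N → ℝ) (x : Euc N) :
    ∑ i, fderiv ℝ f x (EuclideanSpace.single i 1) * fderiv ℝ g x (EuclideanSpace.single i 1) =
      ⟪gradient f x, gradient g x⟫ := by
  rw [← (EuclideanSpace.basisFun (Fin N) ℝ).sum_inner_mul_inner]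
  have hcoord (h : Euc N → ℝ) (i : Fin N) :
      ⟪EuclideanSpace.basisFun (Fin N) ℝ i, gradient h x⟫ =
        fderiv ℝ h x (EuclideanSpace.single i 1) := by
    rw [real_inner_comm, gradient, InnerProductSpace.toDual_symm_apply,
      EuclideanSpace.basisFun_apply]
  simp only [real_inner_comm (EuclideanSpace.basisFun (Fin N) ℝ _), hcoord]

theorem norm_gradient_eq_norm_fderiv (f : Euc N → ℝ) (x : Euc N) :
    ‖gradient f x‖ = ‖fderiv ℝ f x‖ := by
  simp [gradient]

theorem sum_fderiv_single_sq (f : Euc N → ℝ) (x : Euc N) :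
    ∑ i, fderiv ℝ f x (EuclideanSpace.single i 1) ^ 2 = ‖fderiv ℝ f x‖ ^ 2 := by
  simp only [sq, sum_fderiv_single_mul_fderiv_single, real_inner_self_eq_norm_mul_norm,
    norm_gradient_eq_norm_fderiv]

theorem abs_inner_gradient_le (f g : Euc N → ℝ) (x : Euc N) :
    |⟪gradient f x, gradient g x⟫| ≤ ‖fderiv ℝ f x‖ * ‖fderiv ℝ g x‖ := by
  simpa only [norm_gradient_eq_norm_fderiv] using
    abs_real_inner_le_norm (gradient f x) (gradient g x)

theorem lapl_congr (h : f =ᶠ[𝓝 x] g) : lapl f x = lapl g x := by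
  refine Finset.sum_congr rfl fun i _ => ?_
  have hfderiv : (fun y => fderiv ℝ f y (EuclideanSpace.single i 1)) =ᶠ[𝓝 x]
      fun y => fderiv ℝ g y (EuclideanSpace.single i 1) :=
    (h.fderiv (𝕜 := ℝ)).mono fun y hy => congrArg (fun L => L (EuclideanSpace.single i 1)) hy
  rw [hfderiv.fderiv_eq]

theorem lapl_const (c : ℝ) (x : Euc N) : lapl (fun _ => c) x = 0 := by
  simp [lapl]

theorem lapl_add (hf : ContDiffAt ℝ 2 f x) (hg : ContDiffAt ℝ 2 g x) :
    lapl (fun y => f y + g y) x = lapl f x + lapl g x := by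
  simp only [lapl, fderiv_fderiv_add hf hg, Finset.sum_add_distrib]

theorem lapl_mul (hf : ContDiffAt ℝ 2 f x) (hg : ContDiffAt ℝ 2 g x) :
    lapl (fun y => f y * g y) x =
      lapl f x * g x + 2 * ⟪gradient f x, gradient g x⟫ + f x * lapl g x := by
  simp only [lapl, fderiv_fderiv_mul hf hg, Finset.sum_add_distrib, ← Finset.sum_mul,
    ← Finset.mul_sum, sum_fderiv_single_mul_fderiv_single]

theorem lapl_comp {φ φ' : ℝ → ℝ} {φ'' : ℝ} (hf : ContDiffAt ℝ 2 f x)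
    (hφ : ∀ᶠ s in 𝓝 (f x), HasDerivAt φ (φ' s) s) (hφ' : HasDerivAt φ' φ'' (f x)) :
    lapl (fun y => φ (f y)) x = φ' (f x) * lapl f x + φ'' * ‖fderiv ℝ f x‖ ^ 2 := by
  simp only [lapl, fderiv_fderiv_comp hf hφ hφ', Finset.sum_add_distrib, ← Finset.mul_sum,
    sum_fderiv_single_sq]

theorem lapl_const_mul (c : ℝ) (hf : ContDiffAt ℝ 2 f x) :
    lapl (fun y => c * f y) x = c * lapl f x := by
  rw [lapl_mul contDiffAt_const hf, lapl_const, gradient_fun_const, inner_zero_left]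
  ring

theorem lapl_const_sub (c : ℝ) (f : Euc N → ℝ) (x : Euc N) :
    lapl (fun y => c - f y) x = -lapl f x := by
  simp only [lapl, fderiv_const_sub, neg_apply, fderiv_fun_neg, Finset.sum_neg_distrib]

theorem lapl_comp_smul (f : Euc N → ℝ) (c : ℝ) (x : Euc N) :
    lapl (fun y => f (c • y)) x = c ^ 2 * lapl f (c • x) := by
  simp only [lapl, fderiv_fderiv_comp_smul, Finset.mul_sum]

theorem lapl_nonpos_of_isLocalMax (hf : ContDiffAt ℝ 2 f x) (hmax : IsLocalMax f x) :
    lapl f x ≤ 0 :=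
  Finset.sum_nonpos fun _ _ => fderiv_fderiv_nonpos_of_isLocalMax hf hmax _

theorem continuous_lapl (hf : ContDiff ℝ 2 f) : Continuous (lapl f) :=
  continuous_finsetSum _ fun _ _ =>
    continuous_fderiv_apply_const (contDiff_fderiv_apply hf _) _

theorem hasCompactSupport_lapl (hf : HasCompactSupport f) : HasCompactSupport (lapl f) := by
  refine HasCompactSupport.intro hf fun x hx => ?_
  rw [lapl_congr (notMem_tsupport_iff_eventuallyEq.1 hx)]
  exact lapl_const 0 x

theorem hasFDerivAt_norm_sub_sq (y x : Euc N) :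
    HasFDerivAt (fun z => ‖z - y‖ ^ 2) ((2 : ℝ) • innerSL ℝ (x - y)) x :=
  ((hasFDerivAt_id x).sub_const y).norm_sq.congr_fderiv (by ext; simp [two_smul])

theorem contDiff_norm_sub_sq (y : Euc N) {n : WithTop ℕ∞} :
    ContDiff ℝ n fun z => ‖z - y‖ ^ 2 :=
  (contDiff_id.sub contDiff_const).norm_sq ℝ

theorem norm_fderiv_norm_sub_sq (y x : Euc N) :
    ‖fderiv ℝ (fun z => ‖z - y‖ ^ 2) x‖ = 2 * ‖x - y‖ := by
  rw [(hasFDerivAt_norm_sub_sq y x).fderiv, norm_smul, innerSL_apply_norm,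
    Real.norm_two]

theorem lapl_norm_sub_sq (y x : Euc N) : lapl (fun z => ‖z - y‖ ^ 2) x = 2 * N := by
  have hsecond (v : Euc N) :
      fderiv ℝ (fun w => fderiv ℝ (fun z => ‖z - y‖ ^ 2) w v) x v = 2 * ‖v‖ ^ 2 := by
    have hfirst : (fun w => fderiv ℝ (fun z => ‖z - y‖ ^ 2) w v) = fun w => 2 * ⟪w - y, v⟫ := by
      funext w
      simp [(hasFDerivAt_norm_sub_sq y w).fderiv, inner_sub_left]
    have hinner : HasFDerivAt (fun w => 2 * ⟪w - y, v⟫) ((2 : ℝ) • innerSL ℝ v) x := by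
      have hlin := (innerSL ℝ v).hasFDerivAt.comp x ((hasFDerivAt_id x).sub_const y)
      refine (hlin.const_mul 2).congr_of_eventuallyEq (.of_forall fun w => ?_)
      simp [real_inner_comm, inner_sub_left, inner_sub_right]
    rw [hfirst, hinner.fderiv]
    simp
  simp only [lapl, hsecond, PiLp.norm_single]
  simp [mul_comm]

theorem lapl_radial (y x : Euc N) {φ φ' : ℝ → ℝ} {φ'' : ℝ}
    (hφ : ∀ᶠ s in 𝓝 (‖x - y‖ ^ 2), HasDerivAt φ (φ' s) s)
    (hφ' : HasDerivAt φ' φ'' (‖x - y‖ ^ 2)) :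
    lapl (fun z => φ (‖z - y‖ ^ 2)) x =
      2 * N * φ' (‖x - y‖ ^ 2) + 4 * ‖x - y‖ ^ 2 * φ'' := by
  rw [lapl_comp (contDiff_norm_sub_sq y).contDiffAt hφ hφ', lapl_norm_sub_sq,
    norm_fderiv_norm_sub_sq]
  ring

theorem integral_fderiv_mul_eq_neg {f g : Euc N → ℝ} (hf : ContDiff ℝ 1 f) (hg : ContDiff ℝ 1 g)
    (hc : HasCompactSupport g) (v : Euc N) :
    ∫ x, fderiv ℝ f x v * g x = -∫ x, f x * fderiv ℝ g x v := by
  have hf' := continuous_fderiv_apply_const hf v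
  have hg' := continuous_fderiv_apply_const hg v
  rw [integral_mul_fderiv_eq_neg_fderiv_mul_of_integrable, neg_neg]
  · exact (hf'.mul hg.continuous).integrable_of_hasCompactSupport hc.mul_left
  · exact (hf.continuous.mul hg').integrable_of_hasCompactSupport (hc.fderiv_apply ℝ v).mul_left
  · exact (hf.continuous.mul hg.continuous).integrable_of_hasCompactSupport hc.mul_left
  · exact fun x _ => hf.differentiable one_ne_zero x
  · exact fun x _ => hg.differentiable one_ne_zero x

theorem integral_fderiv_fderiv_mul {f g : Euc N → ℝ} (hf : ContDiff ℝ 2 f) (hg : ContDiff ℝ 2 g)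
    (hc : HasCompactSupport g) (v : Euc N) :
    ∫ x, fderiv ℝ (fun y => fderiv ℝ f y v) x v * g x =
      ∫ x, f x * fderiv ℝ (fun y => fderiv ℝ g y v) x v := by
  have hg1 : ContDiff ℝ 1 g := hg.of_le one_le_two
  have hf1 : ContDiff ℝ 1 f := hf.of_le one_le_two
  rw [integral_fderiv_mul_eq_neg (contDiff_fderiv_apply hf v) hg1 hc,
    integral_fderiv_mul_eq_neg hf1 (contDiff_fderiv_apply hg v) (hc.fderiv_apply ℝ v), neg_neg]

theorem integral_lapl_mul {f g : Euc N → ℝ} (hf : ContDiff ℝ 2 f) (hg : ContDiff ℝ 2 g)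
    (hc : HasCompactSupport g) : ∫ x, lapl f x * g x = ∫ x, f x * lapl g x := by
  simp only [lapl, Finset.sum_mul, Finset.mul_sum]
  rw [integral_finsetSum, integral_finsetSum]
  · exact Finset.sum_congr rfl fun i _ => integral_fderiv_fderiv_mul hf hg hc _
  · refine fun i _ => Continuous.integrable_of_hasCompactSupport ?_
      ((hc.fderiv_apply ℝ _).fderiv_apply ℝ _).mul_left
    exact hf.continuous.mul (continuous_fderiv_apply_const (contDiff_fderiv_apply hg _) _)
  · refine fun i _ => Continuous.integrable_of_hasCompactSupport ?_ hc.mul_left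
    exact (continuous_fderiv_apply_const (contDiff_fderiv_apply hf _) _).mul hg.continuous

theorem hasDerivAt_integral_of_contDiffOn {F : ℝ → Euc N → ℝ} {J : Set ℝ} {k : Set (Euc N)}
    {s : ℝ} (hJ : IsOpen J) (hk : IsCompact k)
    (hF : ContDiffOn ℝ 1 (fun p : ℝ × Euc N => F p.1 p.2) (J ×ˢ univ))
    (hsupp : ∀ s ∈ J, ∀ y, y ∉ k → F s y = 0) (hs : s ∈ J) :
    HasDerivAt (fun s => ∫ y, F s y) (∫ y, deriv (fun s => F s y) s) s := by
  have hopen : IsOpen (J ×ˢ (univ : Set (Euc N))) := hJ.prod isOpen_univ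
  obtain ⟨ε, hε, hball⟩ := nhds_basis_closedBall.mem_iff.1 (hJ.mem_nhds hs)
  set F' : ℝ × Euc N → ℝ := fun p => fderiv ℝ (fun p : ℝ × Euc N => F p.1 p.2) p (1, 0)
  have hderiv : ∀ σ ∈ J, ∀ y, HasDerivAt (fun s => F s y) (F' (σ, y)) σ := fun σ hσ y =>
    ((hF.contDiffAt (hopen.mem_nhds ⟨hσ, mem_univ y⟩)).differentiableAt
      one_ne_zero).hasFDerivAt.comp_hasDerivAt (f := fun s : ℝ => (s, y)) σ
      ((hasDerivAt_id σ).prodMk (hasDerivAt_const σ y))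
  have hF'cont : ContinuousOn F' (J ×ˢ univ) :=
    (hF.continuousOn_fderiv_of_isOpen hopen le_rfl).clm_apply continuousOn_const
  obtain ⟨M, hM⟩ := ((isCompact_closedBall s ε).prod hk).exists_bound_of_continuousOn
    (hF'cont.mono (prod_mono hball (subset_univ k)))
  have hslice {G : ℝ × Euc N → ℝ} (hG : ContinuousOn G (J ×ˢ univ)) {σ : ℝ} (hσ : σ ∈ J) :
      Continuous fun y => G (σ, y) :=
    hG.comp_continuous (by fun_prop) fun y => ⟨hσ, mem_univ y⟩
  have hbound : ∀ y, ∀ σ ∈ ball s ε, ‖F' (σ, y)‖ ≤ k.indicator (fun _ => M) y := by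
    intro y σ hσ
    by_cases hy : y ∈ k
    · simpa [hy] using hM (σ, y) ⟨ball_subset_closedBall hσ, hy⟩
    · have hσJ := hball (ball_subset_closedBall hσ)
      have hzero : (fun s => F s y) =ᶠ[𝓝 σ] fun _ => 0 :=
        by
        filter_upwards [hJ.mem_nhds hσJ] with τ hτ using hsupp τ hτ y hy
      simp [hy, (hderiv σ hσJ y).unique ((hasDerivAt_const σ 0).congr_of_eventuallyEq hzero)]
  simp only [fun y => (hderiv s hs y).deriv]
  refine (hasDerivAt_integral_of_dominated_loc_of_deriv_le (bound := k.indicator fun _ => M)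
    (ball_mem_nhds s hε) ?_ ?_ (hslice hF'cont hs).aestronglyMeasurable
    (.of_forall hbound) ?_ (.of_forall fun y σ hσ =>
      hderiv σ (hball (ball_subset_closedBall hσ)) y)).2
  · filter_upwards [hJ.mem_nhds hs] with σ hσ
      using (hslice hF.continuousOn hσ).aestronglyMeasurable
  · exact (hslice hF.continuousOn hs).integrable_of_hasCompactSupport
      (HasCompactSupport.intro hk (hsupp s hs))
  · exact (integrable_indicator_iff hk.measurableSet).2
      (integrableOn_const hk.measure_lt_top.ne (by simp))

theorem contDiffOn_integral_of_contDiffOn {P : Type*} [NormedAddCommGroup P] [NormedSpace ℝ P]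
    {F : P → Euc N → ℝ} {J : Set P} {k : Set (Euc N)} {n : ℕ∞} (hJ : IsOpen J) (hk : IsCompact k)
    (hF : ContDiffOn ℝ n (fun p : P × Euc N => F p.1 p.2) (J ×ˢ univ))
    (hsupp : ∀ s ∈ J, ∀ y, y ∉ k → F s y = 0) : ContDiffOn ℝ n (fun s => ∫ y, F s y) J := by
  have hconv := contDiffOn_convolution_right_with_param (μ := (volume : Measure (Euc N)))
    (f := fun _ => (1 : ℝ)) (ContinuousLinearMap.lsmul ℝ ℝ) hJ hk
    (fun p x hp hx => hsupp p hp x hx) (locallyIntegrable_const 1) hF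
  have hzero : ContDiffOn ℝ n (fun s : P => (s, (0 : Euc N))) J := by fun_prop
  refine (hconv.comp hzero fun s hs => ⟨hs, mem_univ _⟩).congr fun s _ => ?_
  simpa [Function.comp_def, convolution] using (integral_neg_eq_self (F s) volume).symm

end Laplacian

theorem nonneg_of_hasDerivAt_of_le_left {f : ℝ → ℝ} {a t f' : ℝ} (hat : a < t)
    (hf : HasDerivAt f f' t) (hle : ∀ s, a < s → s < t → f s ≤ f t) : 0 ≤ f' := by
  refine ge_of_tendsto (hasDerivAt_iff_tendsto_slope_left_right.1 hf).1 ?_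
  filter_upwards [Ioo_mem_nhdsLT hat] with s hs
  rw [slope_def_field]
  exact div_nonneg_of_nonpos (sub_nonpos.2 (hle s hs.1 hs.2)) (sub_nonpos.2 hs.2.le)

/-! ### Keller–Osserman estimates -/

section IsSol

variable {N : ℕ} {q : ℝ} {u : Euc N → ℝ → ℝ} {K : Set (Euc N)} {x : Euc N} {t : ℝ}

theorem IsSol.contDiffAt (hu : IsSol N q u K) (ht : 0 < t) :
    ContDiffAt ℝ 2 (fun p : Euc N × ℝ => u p.1 p.2) (x, t) :=
  hu.1.contDiffAt ((isOpen_univ.prod isOpen_Ioi).mem_nhds ⟨mem_univ _, ht⟩)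

theorem IsSol.contDiff_space (hu : IsSol N q u K) (ht : 0 < t) : ContDiff ℝ 2 fun x => u x t :=
  contDiff_iff_contDiffAt.2 fun x =>
    (hu.contDiffAt ht).comp x (f := fun x : Euc N => (x, t)) (by fun_prop)

theorem IsSol.differentiableAt_time (hu : IsSol N q u K) (ht : 0 < t) :
    DifferentiableAt ℝ (u x) t :=
  ((hu.contDiffAt ht).comp t (f := fun t : ℝ => (x, t)) (by fun_prop)).differentiableAt two_ne_zero

theorem IsSol.continuousOn (hu : IsSol N q u K) (D : Set (Euc N)) {a b : ℝ} (ha : 0 < a) :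
    ContinuousOn (fun p : Euc N × ℝ => u p.1 p.2) (D ×ˢ Icc a b) :=
  hu.1.continuousOn.mono (prod_mono (subset_univ _) fun _ hs => ha.trans_le hs.1)

theorem IsSol.bddAbove_image (hu : IsSol N q u K) {E : Set (Euc N)} (hE : IsCompact E)
    (ht : 0 < t) : BddAbove ((fun x => u x t) '' E) :=
  (hE.image (hu.contDiff_space ht).continuous).bddAbove

theorem IsSol.eventually_forall_mem_le (hu : IsSol N q u K) {E : Set (Euc N)} (hE : IsCompact E)
    (hEK : E ⊆ Kᶜ) {ε : ℝ} (hε : 0 < ε) : ∀ᶠ t in 𝓝[>] 0, ∀ x ∈ E, u x t ≤ ε := by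
  filter_upwards [(hu.2.2.2 E hE hEK).eventually_lt_const hε, self_mem_nhdsWithin]
    with t hlt ht x hx
  exact (le_csSup (hu.bddAbove_image hE ht) (mem_image_of_mem _ hx)).trans hlt.le

theorem IsSol.tendsto_of_notMem (hu : IsSol N q u K) (hx : x ∉ K) :
    Tendsto (u x) (𝓝[>] 0) (𝓝 0) := by
  simpa using hu.2.2.2 {x} isCompact_singleton (singleton_subset_iff.2 hx)

theorem IsSol.le_of_supersolution (hu : IsSol N q u K) (hq : 0 < q) {v : Euc N → ℝ → ℝ}
    {Ω : Set (Euc N)} (hΩ : IsOpen Ω) (hc : IsCompact (closure Ω)) {a b : ℝ} (ha : 0 < a)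
    (hvc : ContinuousOn (fun p : Euc N × ℝ => v p.1 p.2) (closure Ω ×ˢ Icc a b))
    (hv0 : ∀ x ∈ Ω, ∀ t ∈ Ioc a b, 0 ≤ v x t)
    (hvx : ∀ x ∈ Ω, ∀ t ∈ Ioc a b, ContDiffAt ℝ 2 (fun x => v x t) x)
    (hvt : ∀ x ∈ Ω, ∀ t ∈ Ioc a b, DifferentiableAt ℝ (v x) t)
    (hsuper : ∀ x ∈ Ω, ∀ t ∈ Ioc a b,
      0 ≤ deriv (v x) t - lapl (fun y => v y t) x + v x t ^ q)
    (hinit : ∀ x ∈ closure Ω, u x a ≤ v x a)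
    (hlateral : ∀ x ∈ frontier Ω, ∀ t ∈ Icc a b, u x t ≤ v x t) :
    ∀ x ∈ closure Ω, ∀ t ∈ Icc a b, u x t ≤ v x t := by
  intro x hx t ht
  by_contra! hlt
  obtain ⟨⟨x₀, t₀⟩, ⟨hx₀, ht₀⟩, hmax⟩ := (hc.prod isCompact_Icc).exists_isMaxOn
    ⟨(x, t), hx, ht⟩ ((hu.continuousOn _ ha).sub hvc)
  replace hmax : ∀ y ∈ closure Ω, ∀ s ∈ Icc a b, u y s - v y s ≤ u x₀ t₀ - v x₀ t₀ :=
    fun y hy s hs => hmax (mk_mem_prod hy hs)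
  have hpos : v x₀ t₀ < u x₀ t₀ := by linarith [hmax x hx t ht]
  have hxΩ : x₀ ∈ Ω := by
    by_contra hxΩ
    exact hpos.not_ge (hlateral x₀ ⟨hx₀, by rwa [hΩ.interior_eq]⟩ t₀ ht₀)
  have hat : a < t₀ := ht₀.1.lt_of_ne' (by rintro rfl; exact hpos.not_ge (hinit x₀ hx₀))
  have ht₀' : t₀ ∈ Ioc a b := ⟨hat, ht₀.2⟩
  have hux := (hu.contDiff_space (ha.trans hat)).contDiffAt (x := x₀)
  have hwx : ContDiffAt ℝ 2 (fun y => u y t₀ - v y t₀) x₀ := hux.sub (hvx x₀ hxΩ t₀ ht₀')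
  have htime : 0 ≤ deriv (u x₀) t₀ - deriv (v x₀) t₀ :=
    nonneg_of_hasDerivAt_of_le_left hat ((hu.differentiableAt_time (ha.trans hat)).hasDerivAt.sub
      (hvt x₀ hxΩ t₀ ht₀').hasDerivAt) fun s has hst => hmax x₀ hx₀ s ⟨has.le, hst.le.trans ht₀.2⟩
  have hspace : lapl (fun y => u y t₀) x₀ ≤ lapl (fun y => v y t₀) x₀ := by
    have hw : lapl (fun y => u y t₀ - v y t₀) x₀ ≤ 0 := by
      refine lapl_nonpos_of_isLocalMax hwx ?_
      filter_upwards [hΩ.mem_nhds hxΩ] with y hy using hmax y (subset_closure hy) t₀ ht₀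
    have hsplit := lapl_add (hvx x₀ hxΩ t₀ ht₀') hwx
    simp only [add_sub_cancel] at hsplit
    linarith
  have hpow := Real.rpow_lt_rpow (hv0 x₀ hxΩ t₀ ht₀') hpos hq
  linarith [hu.2.2.1 x₀ t₀ (ha.trans hat), hsuper x₀ hxΩ t₀ ht₀']

end IsSol

/-- The constant in the Keller–Osserman estimate, chosen so that `ossermanBarrier` is a
supersolution of `Δz = z ^ q`. -/
def ossermanConst (N : ℕ) (q : ℝ) : ℝ :=
  (2 * N * (2 / (q - 1)) + 4 * (2 / (q - 1)) * (2 / (q - 1) + 1)) ^ (1 / (q - 1))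

/-- Osserman's radial supersolution of `Δz = z ^ q` in the ball of radius `L` about `y`; it blows
up at the sphere `‖x - y‖ = L`. -/
def ossermanBarrier (N : ℕ) (q L : ℝ) (y x : Euc N) : ℝ :=
  ossermanConst N q * L ^ (2 / (q - 1)) * (L ^ 2 - ‖x - y‖ ^ 2) ^ (-(2 / (q - 1)))

section Osserman

variable {N : ℕ} {q L : ℝ} {x y : Euc N}

theorem ossermanConst_pos (N : ℕ) (hq : 1 < q) : 0 < ossermanConst N q := by
  have := sub_pos.2 hq
  unfold ossermanConst
  positivity

theorem sq_sub_norm_sq_pos (hx : ‖x - y‖ < L) : 0 < L ^ 2 - ‖x - y‖ ^ 2 :=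
  sub_pos.2 (by gcongr)

theorem ossermanBarrier_pos (hq : 1 < q) (hx : ‖x - y‖ < L) : 0 < ossermanBarrier N q L y x :=
  mul_pos (mul_pos (ossermanConst_pos N hq) (rpow_pos_of_pos ((norm_nonneg _).trans_lt hx) _))
    (rpow_pos_of_pos (sq_sub_norm_sq_pos hx) _)

theorem contDiffAt_ossermanBarrier (hx : ‖x - y‖ < L) :
    ContDiffAt ℝ 2 (ossermanBarrier N q L y) x :=
  contDiffAt_const.mul ((contDiffAt_const.sub
    (contDiff_norm_sub_sq y).contDiffAt).rpow_const_of_ne (sq_sub_norm_sq_pos hx).ne')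

theorem ossermanBarrier_self (hL : 0 < L) :
    ossermanBarrier N q L y y = ossermanConst N q * L ^ (-(2 / (q - 1))) := by
  have hexp : L ^ (2 / (q - 1)) * (L ^ 2) ^ (-(2 / (q - 1))) = L ^ (-(2 / (q - 1))) := by
    rw [← Real.rpow_natCast, ← Real.rpow_mul hL.le, ← Real.rpow_add hL]
    push_cast
    ring_nf
  rw [ossermanBarrier, sub_self, norm_zero, zero_pow two_ne_zero, sub_zero, mul_assoc, hexp]

theorem hasDerivAt_sub_rpow {s R : ℝ} (hs : s < R) (A e : ℝ) :
    HasDerivAt (fun s => A * (R - s) ^ e) (A * -e * (R - s) ^ (e - 1)) s :=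
  ((((hasDerivAt_id' s).const_sub R).rpow_const (Or.inl (sub_pos.2 hs).ne')).const_mul
    A).congr_deriv (by ring)

theorem lapl_mul_sq_sub_norm_sq_rpow (hx : ‖x - y‖ < L) (A p : ℝ) :
    lapl (fun z => A * (L ^ 2 - ‖z - y‖ ^ 2) ^ (-p)) x =
      A * (2 * N * p * (L ^ 2 - ‖x - y‖ ^ 2) + 4 * ‖x - y‖ ^ 2 * (p * (p + 1))) *
        (L ^ 2 - ‖x - y‖ ^ 2) ^ (-p - 2) := by
  have hpos := sq_sub_norm_sq_pos hx
  have hlt : ‖x - y‖ ^ 2 < L ^ 2 := sub_pos.1 hpos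
  have hpow : (L ^ 2 - ‖x - y‖ ^ 2) ^ (-p - 1) =
      (L ^ 2 - ‖x - y‖ ^ 2) * (L ^ 2 - ‖x - y‖ ^ 2) ^ (-p - 2) := by
    rw [show -p - 1 = 1 + (-p - 2) by ring, Real.rpow_add hpos, Real.rpow_one]
  rw [lapl_radial y x (φ := fun s => A * (L ^ 2 - s) ^ (-p))
    (by filter_upwards [Iio_mem_nhds hlt] with s hs using hasDerivAt_sub_rpow hs _ _)
    (hasDerivAt_sub_rpow hlt _ _), show -p - 1 - 1 = -p - 2 by ring, hpow]
  ring

theorem ossermanBarrier_rpow (hq : 1 < q) (hx : ‖x - y‖ < L) :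
    ossermanBarrier N q L y x ^ q = ossermanConst N q * L ^ (2 / (q - 1)) *
      ((2 * N * (2 / (q - 1)) + 4 * (2 / (q - 1)) * (2 / (q - 1) + 1)) * L ^ 2) *
        (L ^ 2 - ‖x - y‖ ^ 2) ^ (-(2 / (q - 1)) - 2) := by
  have hq1 : 0 < q - 1 := sub_pos.2 hq
  have hL : 0 < L := (norm_nonneg _).trans_lt hx
  have hpos := sq_sub_norm_sq_pos hx
  have hc : 0 < ossermanConst N q := ossermanConst_pos N hq
  rw [ossermanBarrier, Real.mul_rpow (by positivity) (by positivity),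
    Real.mul_rpow hc.le (by positivity), ← Real.rpow_mul hpos.le, ← Real.rpow_mul hL.le,
    show -(2 / (q - 1)) * q = -(2 / (q - 1)) - 2 by field_simp; ring,
    show 2 / (q - 1) * q = 2 / (q - 1) + (2 : ℕ) by push_cast; field_simp; ring,
    Real.rpow_add hL, Real.rpow_natCast]
  have hconst : ossermanConst N q ^ q = ossermanConst N q *
      (2 * N * (2 / (q - 1)) + 4 * (2 / (q - 1)) * (2 / (q - 1) + 1)) := by
    rw [ossermanConst, ← Real.rpow_mul (by positivity),
      show 1 / (q - 1) * q = 1 / (q - 1) + 1 by field_simp; ring, Real.rpow_add (by positivity),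
      Real.rpow_one]
  rw [hconst]
  ring

theorem lapl_ossermanBarrier_le (hq : 1 < q) (hx : ‖x - y‖ < L) :
    lapl (ossermanBarrier N q L y) x ≤ ossermanBarrier N q L y x ^ q := by
  have hL : 0 < L := (norm_nonneg _).trans_lt hx
  have hpos := sq_sub_norm_sq_pos hx
  have hc : 0 < ossermanConst N q := ossermanConst_pos N hq
  rw [ossermanBarrier_rpow hq hx,
    show ossermanBarrier N q L y = fun z => ossermanConst N q * L ^ (2 / (q - 1)) *
      (L ^ 2 - ‖z - y‖ ^ 2) ^ (-(2 / (q - 1))) from rfl, lapl_mul_sq_sub_norm_sq_rpow hx]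
  gcongr
  calc 2 * N * (2 / (q - 1)) * (L ^ 2 - ‖x - y‖ ^ 2) +
        4 * ‖x - y‖ ^ 2 * (2 / (q - 1) * (2 / (q - 1) + 1))
      ≤ 2 * N * (2 / (q - 1)) * L ^ 2 + 4 * L ^ 2 * (2 / (q - 1) * (2 / (q - 1) + 1)) := by
        gcongr
        exact sub_le_self _ (by positivity)
    _ = (2 * N * (2 / (q - 1)) + 4 * (2 / (q - 1)) * (2 / (q - 1) + 1)) * L ^ 2 := by ring

theorem eventually_le_ossermanBarrier (hq : 1 < q) (hL : 0 < L) (y : Euc N) (M : ℝ) :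
    ∀ᶠ δ in 𝓝[<] L, ∀ x, ‖x - y‖ = δ → M ≤ ossermanBarrier N q L y x := by
  have hgap : Tendsto (fun δ : ℝ => L ^ 2 - δ ^ 2) (𝓝[<] L) (𝓝[>] 0) := by
    refine tendsto_nhdsWithin_iff.2 ⟨?_, ?_⟩
    · have hcont : ContinuousAt (fun δ : ℝ => L ^ 2 - δ ^ 2) L := by fun_prop
      simpa using hcont.tendsto.mono_left nhdsWithin_le_nhds
    · filter_upwards [Ioo_mem_nhdsLT hL] with δ hδ
      exact sub_pos.2 (pow_lt_pow_left₀ hδ.2 hδ.1.le two_ne_zero)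
  have hblow : Tendsto (fun s : ℝ => ossermanConst N q * L ^ (2 / (q - 1)) *
      s ^ (-(2 / (q - 1)))) (𝓝[>] 0) atTop :=
    (tendsto_rpow_neg_nhdsGT_zero (neg_lt_zero.2 (by positivity))).const_mul_atTop
      (mul_pos (ossermanConst_pos N hq) (by positivity))
  filter_upwards [(hblow.comp hgap).eventually_ge_atTop M] with δ hδ x hx
  rwa [ossermanBarrier, hx]

end Osserman

section KellerOsserman

variable {N : ℕ} {q : ℝ} {u : Euc N → ℝ → ℝ} {K : Set (Euc N)}

theorem IsSol.le_add_ossermanConst (hu : IsSol N q u K) (hq : 1 < q) {f f' : ℝ → ℝ} {y : Euc N}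
    {L a b : ℝ} (hL : 0 < L) (ha : 0 < a) (hab : a ≤ b) (hf0 : ∀ t ∈ Icc a b, 0 ≤ f t)
    (hf : ∀ t ∈ Icc a b, HasDerivAt f (f' t) t) (hsuper : ∀ t ∈ Icc a b, 0 ≤ f' t + f t ^ q)
    (hinit : ∀ x ∈ closedBall y L, u x a ≤ f a) :
    u y b ≤ f b + ossermanConst N q * L ^ (-(2 / (q - 1))) := by
  obtain ⟨M, hM⟩ := ((isCompact_closedBall y L).prod isCompact_Icc).bddAbove_image
    (hu.continuousOn (closedBall y L) (b := b) ha)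
  obtain ⟨δ, hblow, hδ0, hδL⟩ := ((eventually_le_ossermanBarrier hq hL y M).and
    (Ioo_mem_nhdsLT hL)).exists
  have hclosure : closure (ball y δ) = closedBall y δ := closure_ball y hδ0.ne'
  have hlt {x : Euc N} (hx : x ∈ closedBall y δ) : ‖x - y‖ < L :=
    (mem_closedBall_iff_norm.1 hx).trans_lt hδL
  have hcmp := hu.le_of_supersolution (zero_lt_one.trans hq)
    (v := fun x t => f t + ossermanBarrier N q L y x) (Ω := ball y δ) (b := b) isOpen_ball
    (hclosure ▸ isCompact_closedBall y δ) ha ?_ ?_ ?_ ?_ ?_ ?_ ?_ y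
    (subset_closure (mem_ball_self hδ0)) b ⟨hab, le_rfl⟩
  · rwa [ossermanBarrier_self hL] at hcmp
  · rw [hclosure]
    have hfc : ContinuousOn f (Icc a b) := fun t ht => (hf t ht).continuousAt.continuousWithinAt
    have hzc : ContinuousOn (ossermanBarrier N q L y) (closedBall y δ) := fun x hx =>
      (contDiffAt_ossermanBarrier (hlt hx)).continuousAt.continuousWithinAt
    exact (hfc.comp continuousOn_snd fun p hp => hp.2).add
      (hzc.comp continuousOn_fst fun p hp => hp.1)
  · intro x hx t ht
    exact add_nonneg (hf0 t (Ioc_subset_Icc_self ht))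
      (ossermanBarrier_pos hq (hlt (ball_subset_closedBall hx))).le
  · exact fun x hx t _ =>
      contDiffAt_const.add (contDiffAt_ossermanBarrier (hlt (ball_subset_closedBall hx)))
  · exact fun x _ t ht => (hf t (Ioc_subset_Icc_self ht)).differentiableAt.add_const _
  · intro x hx t ht
    have hxL := hlt (ball_subset_closedBall hx)
    have ht' := Ioc_subset_Icc_self ht
    rw [deriv_add_const, (hf t ht').deriv,
      lapl_add contDiffAt_const (contDiffAt_ossermanBarrier hxL), lapl_const]
    linarith [hsuper t ht', lapl_ossermanBarrier_le hq hxL,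
      Real.add_rpow_le_rpow_add (hf0 t ht') (ossermanBarrier_pos hq hxL).le hq.le]
  · intro x hx
    rw [hclosure] at hx
    linarith [hinit x (closedBall_subset_closedBall hδL.le hx), ossermanBarrier_pos hq (hlt hx)]
  · intro x hx t ht
    rw [frontier_ball y hδ0.ne'] at hx
    have hxL := hlt (sphere_subset_closedBall hx)
    linarith [hf0 t ht, hblow x (mem_sphere_iff_norm.1 hx),
      hM (mem_image_of_mem _ (mk_mem_prod (mem_closedBall_iff_norm.2 hxL.le) ht))]

theorem IsSol.le_rpow_sub (hu : IsSol N q u K) (hq : 1 < q) {τ t : ℝ} (hτ : 0 < τ) (hτt : τ < t)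
    (x : Euc N) : u x t ≤ ((q - 1) * (t - τ)) ^ (-(1 / (q - 1))) := by
  have hq1 : 0 < q - 1 := sub_pos.2 hq
  set f : ℝ → ℝ := fun s => ((q - 1) * (s - τ)) ^ (-(1 / (q - 1))) with hf
  have hpos {s : ℝ} (hs : τ < s) : 0 < (q - 1) * (s - τ) := mul_pos hq1 (sub_pos.2 hs)
  have hderiv {s : ℝ} (hs : τ < s) : HasDerivAt f (-f s ^ q) s := by
    refine ((((hasDerivAt_id' s).sub_const τ).const_mul (q - 1)).rpow_const
      (Or.inl (hpos hs).ne')).congr_deriv ?_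
    rw [hf, ← Real.rpow_mul (hpos hs).le,
      show -(1 / (q - 1)) * q = -(1 / (q - 1)) - 1 by field_simp; ring]
    field_simp
  have hblow : Tendsto f (𝓝[>] τ) atTop := by
    refine (tendsto_rpow_neg_nhdsGT_zero (neg_lt_zero.2 (by positivity))).comp
      (tendsto_nhdsWithin_iff.2 ⟨?_, eventually_mem_nhdsWithin.mono fun s hs => hpos hs⟩)
    have hcont : ContinuousAt (fun s : ℝ => (q - 1) * (s - τ)) τ := by fun_prop
    simpa using hcont.tendsto.mono_left nhdsWithin_le_nhds
  have hle : ∀ L > 0, u x t ≤ f t + ossermanConst N q * L ^ (-(2 / (q - 1))) := by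
    intro L hL
    obtain ⟨M, hM⟩ := ((isCompact_closedBall x L).prod isCompact_Icc).bddAbove_image
      (hu.continuousOn (closedBall x L) (b := t) hτ)
    obtain ⟨a, hMa, hτa, hat⟩ := ((hblow.eventually_ge_atTop M).and (Ioo_mem_nhdsGT hτt)).exists
    exact hu.le_add_ossermanConst hq hL (hτ.trans hτa) hat.le
      (fun s hs => (Real.rpow_pos_of_pos (hpos (hτa.trans_le hs.1)) _).le)
      (fun s hs => hderiv (hτa.trans_le hs.1)) (fun s _ => (neg_add_cancel _).ge)
      fun z hz => (hM (mem_image_of_mem _ (mk_mem_prod hz ⟨hτa.le, hat.le⟩))).trans hMa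
  have hlim : Tendsto (fun L : ℝ => f t + ossermanConst N q * L ^ (-(2 / (q - 1)))) atTop
      (𝓝 (f t)) := by
    simpa using ((tendsto_rpow_neg_atTop (y := 2 / (q - 1)) (by positivity)).const_mul
      (ossermanConst N q)).const_add (f t)
  exact ge_of_tendsto hlim (eventually_gt_atTop 0 |>.mono hle)

theorem IsSol.exists_forall_le (hu : IsSol N q u K) (hq : 1 < q) {a : ℝ} (ha : 0 < a) :
    ∃ U, ∀ x, ∀ t ≥ a, u x t ≤ U := by
  refine ⟨((q - 1) * (a - a / 2)) ^ (-(1 / (q - 1))), fun x t ht =>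
    (hu.le_rpow_sub hq (half_pos ha) (by linarith) x).trans ?_⟩
  have hq1 : 0 < q - 1 := sub_pos.2 hq
  refine Real.rpow_le_rpow_of_nonpos (mul_pos hq1 (by linarith)) ?_ (by simp [hq.le])
  gcongr

theorem IsSol.le_of_closedBall_subset_compl (hu : IsSol N q u K) (hq : 1 < q) {x : Euc N}
    {t L : ℝ} (ht : 0 < t) (hL : 0 < L) (hLK : closedBall x L ⊆ Kᶜ) :
    u x t ≤ ossermanConst N q * L ^ (-(2 / (q - 1))) := by
  refine le_of_forall_pos_le_add fun ε hε => ?_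
  obtain ⟨a, hsmall, ha, hat⟩ := ((hu.eventually_forall_mem_le (isCompact_closedBall x L) hLK
    hε).and (Ioo_mem_nhdsGT ht)).exists
  rw [add_comm]
  refine hu.le_add_ossermanConst hq hL ha hat.le (f := fun _ => ε) (f' := fun _ => 0)
    (fun _ _ => hε.le) (fun _ _ => hasDerivAt_const _ _) (fun _ _ => ?_) hsmall
  positivity

end KellerOsserman

/-! ### The heat kernel -/

/-- The Gauss–Weierstrass kernel on `ℝ^N`, so that `heatPot N η x t = ∫ y, G(x - y, t) η(y)`. -/
def heatKernel (N : ℕ) (x : Euc N) (t : ℝ) : ℝ :=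
  (4 * π * t) ^ (-(N : ℝ) / 2) * Real.exp (-‖x‖ ^ 2 / (4 * t))

section HeatKernel

variable {N : ℕ} {t : ℝ}

theorem heatKernel_pos (x : Euc N) (ht : 0 < t) : 0 < heatKernel N x t := by
  unfold heatKernel
  positivity

theorem heatKernel_sub_comm (x y : Euc N) (t : ℝ) :
    heatKernel N (x - y) t = heatKernel N (y - x) t := by
  rw [heatKernel, norm_sub_rev, heatKernel]

theorem contDiffAt_heatKernel {p : Euc N × ℝ} (hp : 0 < p.2) {n : WithTop ℕ∞} :
    ContDiffAt ℝ n (fun p : Euc N × ℝ => heatKernel N p.1 p.2) p := by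
  unfold heatKernel
  refine ContDiffAt.mul (ContDiffAt.rpow_const_of_ne (by fun_prop) (by positivity)) ?_
  exact ((contDiffAt_fst.norm_sq ℝ).neg.div (by fun_prop) (by positivity)).exp

theorem contDiff_heatKernel (ht : 0 < t) {n : WithTop ℕ∞} :
    ContDiff ℝ n fun x => heatKernel N x t :=
  contDiff_iff_contDiffAt.2 fun x => (contDiffAt_heatKernel (p := (x, t)) ht).comp x
    (f := fun x : Euc N => (x, t)) (by fun_prop)

theorem heatKernel_eq_mul_exp (x : Euc N) (t : ℝ) :
    heatKernel N x t = (4 * π * t) ^ (-(N : ℝ) / 2) * rexp (-(1 / (4 * t)) * ‖x‖ ^ 2) := by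
  rw [heatKernel]
  ring_nf

theorem integral_heatKernel (ht : 0 < t) : ∫ x : Euc N, heatKernel N x t = 1 := by
  simp only [heatKernel_eq_mul_exp]
  rw [integral_const_mul, GaussianFourier.integral_rexp_neg_mul_sq_norm (by positivity),
    finrank_euclideanSpace_fin, show π / (1 / (4 * t)) = 4 * π * t by field_simp,
    ← Real.rpow_add (by positivity), neg_div, neg_add_cancel, Real.rpow_zero]

theorem integrable_heatKernel (ht : 0 < t) : Integrable fun x : Euc N => heatKernel N x t :=
  .of_integral_ne_zero (by rw [integral_heatKernel ht]; exact one_ne_zero)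

theorem integrable_heatKernel_sub (x : Euc N) (ht : 0 < t) :
    Integrable fun y => heatKernel N (x - y) t :=
  (integrable_heatKernel ht).comp_sub_left x

theorem integral_heatKernel_sub (x : Euc N) (ht : 0 < t) : ∫ y, heatKernel N (x - y) t = 1 := by
  rw [integral_sub_left_eq_self (fun y => heatKernel N y t), integral_heatKernel ht]

theorem two_rpow_mul_heatKernel_two_mul (x : Euc N) (ht : 0 < t) :
    2 ^ ((N : ℝ) / 2) * heatKernel N x (2 * t) = rexp (‖x‖ ^ 2 / (8 * t)) * heatKernel N x t := by
  rw [heatKernel, heatKernel, show 4 * π * (2 * t) = 2 * (4 * π * t) by ring,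
    Real.mul_rpow zero_le_two (by positivity), neg_div, ← mul_assoc, ← mul_assoc,
    ← Real.rpow_add two_pos, add_neg_cancel, Real.rpow_zero, one_mul,
    mul_left_comm (rexp _), ← Real.exp_add]
  congr 2
  field_simp
  ring

theorem heatKernel_le_two_mul (x : Euc N) (ht : 0 < t) :
    heatKernel N x t ≤ 2 ^ ((N : ℝ) / 2) * heatKernel N x (2 * t) := by
  rw [two_rpow_mul_heatKernel_two_mul x ht]
  exact le_mul_of_one_le_left (heatKernel_pos x ht).le (Real.one_le_exp (by positivity))

theorem norm_sq_mul_heatKernel_le (x : Euc N) (ht : 0 < t) :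
    ‖x‖ ^ 2 * heatKernel N x t ≤ 8 * t * (2 ^ ((N : ℝ) / 2) * heatKernel N x (2 * t)) := by
  rw [two_rpow_mul_heatKernel_two_mul x ht, ← mul_assoc]
  gcongr
  · exact (heatKernel_pos x ht).le
  · rw [← div_le_iff₀' (by positivity)]
    linarith [Real.add_one_le_exp (‖x‖ ^ 2 / (8 * t))]

theorem norm_mul_heatKernel_le (x : Euc N) (ht : 0 < t) :
    ‖x‖ * heatKernel N x t ≤ √(8 * t) * (2 ^ ((N : ℝ) / 2) * heatKernel N x (2 * t)) := by
  have hpos := (heatKernel_pos x ht).le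
  have hpos2 := heatKernel_pos x (t := 2 * t) (by positivity)
  refine (abs_le_of_sq_le_sq' ?_ (by positivity)).2
  calc (‖x‖ * heatKernel N x t) ^ 2 = ‖x‖ ^ 2 * heatKernel N x t * heatKernel N x t := by ring
    _ ≤ 8 * t * (2 ^ ((N : ℝ) / 2) * heatKernel N x (2 * t)) *
        (2 ^ ((N : ℝ) / 2) * heatKernel N x (2 * t)) :=
      mul_le_mul (norm_sq_mul_heatKernel_le x ht) (heatKernel_le_two_mul x ht) hpos
        (by positivity)
    _ = (√(8 * t) * (2 ^ ((N : ℝ) / 2) * heatKernel N x (2 * t))) ^ 2 := by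
      rw [mul_pow, Real.sq_sqrt (by positivity)]
      ring

theorem integrable_norm_sq_mul_heatKernel (ht : 0 < t) :
    Integrable fun x : Euc N => ‖x‖ ^ 2 * heatKernel N x t := by
  refine (((integrable_heatKernel (t := 2 * t) (by positivity)).const_mul
    (2 ^ ((N : ℝ) / 2))).const_mul (8 * t)).mono'
    ((continuous_norm.pow 2).mul (contDiff_heatKernel (n := 0) ht).continuous).aestronglyMeasurable
    (.of_forall fun x => ?_)
  rw [Real.norm_of_nonneg (mul_nonneg (by positivity) (heatKernel_pos x ht).le)]
  exact norm_sq_mul_heatKernel_le x ht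

theorem integral_norm_sq_mul_heatKernel_le (ht : 0 < t) :
    ∫ x : Euc N, ‖x‖ ^ 2 * heatKernel N x t ≤ 8 * 2 ^ ((N : ℝ) / 2) * t := by
  refine (integral_mono (integrable_norm_sq_mul_heatKernel ht)
    (((integrable_heatKernel (by positivity)).const_mul _).const_mul (8 * t))
    fun x => norm_sq_mul_heatKernel_le x ht).trans_eq ?_
  rw [integral_const_mul, integral_const_mul, integral_heatKernel (by positivity)]
  ring

theorem hasDerivAt_heatKernel (x : Euc N) (ht : 0 < t) :
    HasDerivAt (heatKernel N x)
      (heatKernel N x t * (‖x‖ ^ 2 / (4 * t ^ 2) - N / (2 * t))) t := by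
  have hpow := ((hasDerivAt_id' t).const_mul (4 * π)).rpow_const (p := -(N : ℝ) / 2)
    (Or.inl (by positivity))
  have hexp := ((hasDerivAt_const t (-‖x‖ ^ 2)).fun_div ((hasDerivAt_id' t).const_mul 4)
    (by positivity)).exp
  refine (hpow.fun_mul hexp).congr_deriv ?_
  rw [Real.rpow_sub_one (by positivity), heatKernel]
  field_simp
  ring

theorem lapl_heatKernel_sub (ht : 0 < t) (y x : Euc N) :
    lapl (fun z => heatKernel N (z - y) t) x =
      heatKernel N (x - y) t * (‖x - y‖ ^ 2 / (4 * t ^ 2) - N / (2 * t)) := by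
  have hexp (s : ℝ) : HasDerivAt (fun s => rexp (-s / (4 * t)))
      (rexp (-s / (4 * t)) * (-1 / (4 * t))) s :=
    ((hasDerivAt_id' s).fun_neg.div_const (4 * t)).exp
  unfold heatKernel
  rw [lapl_radial y x (φ := fun s => (4 * π * t) ^ (-(N : ℝ) / 2) * rexp (-s / (4 * t)))
    (.of_forall fun s => (hexp s).const_mul _) (((hexp _).mul_const _).const_mul _)]
  field_simp
  ring

theorem norm_fderiv_heatKernel (ht : 0 < t) (x : Euc N) :
    ‖fderiv ℝ (fun z => heatKernel N z t) x‖ = ‖x‖ * heatKernel N x t / (2 * t) := by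
  have hexp : HasDerivAt (fun s => (4 * π * t) ^ (-(N : ℝ) / 2) * rexp (-s / (4 * t)))
      (-(heatKernel N x t / (4 * t))) (‖x - 0‖ ^ 2) := by
    refine ((((hasDerivAt_id' _).fun_neg.div_const (4 * t)).exp).const_mul _).congr_deriv ?_
    rw [heatKernel, sub_zero]
    ring
  have hcomp := hexp.comp_hasFDerivAt x (hasFDerivAt_norm_sub_sq 0 x)
  have hfun : (fun z => heatKernel N z t) =
      (fun s => (4 * π * t) ^ (-(N : ℝ) / 2) * rexp (-s / (4 * t))) ∘ fun z => ‖z - 0‖ ^ 2 := by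
    funext z
    simp [heatKernel]
  have hpos := heatKernel_pos x ht
  rw [hfun, hcomp.fderiv, norm_smul, norm_smul, innerSL_apply_norm, norm_neg, sub_zero,
    Real.norm_of_nonneg (by positivity), Real.norm_two]
  ring

theorem norm_fderiv_heatKernel_le (ht : 0 < t) (x : Euc N) :
    ‖fderiv ℝ (fun z => heatKernel N z t) x‖ ≤
      √(8 * t) * 2 ^ ((N : ℝ) / 2) / (2 * t) * heatKernel N x (2 * t) := by
  rw [norm_fderiv_heatKernel ht, div_mul_eq_mul_div, mul_assoc]
  exact div_le_div_of_nonneg_right (norm_mul_heatKernel_le x ht) (by positivity)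

theorem abs_deriv_heatKernel_le (ht : 0 < t) (x : Euc N) :
    |deriv (heatKernel N x) t| ≤ (2 + N / 2) * 2 ^ ((N : ℝ) / 2) / t * heatKernel N x (2 * t) := by
  have hpos := heatKernel_pos x ht
  rw [(hasDerivAt_heatKernel x ht).deriv, abs_mul, abs_of_pos hpos]
  calc heatKernel N x t * |‖x‖ ^ 2 / (4 * t ^ 2) - N / (2 * t)|
      ≤ heatKernel N x t * (‖x‖ ^ 2 / (4 * t ^ 2) + N / (2 * t)) := by
        gcongr
        exact (abs_sub _ _).trans_eq
          (by rw [abs_of_nonneg (by positivity), abs_of_nonneg (by positivity)])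
    _ = ‖x‖ ^ 2 * heatKernel N x t / (4 * t ^ 2) + heatKernel N x t * (N / (2 * t)) := by ring
    _ ≤ 8 * t * (2 ^ ((N : ℝ) / 2) * heatKernel N x (2 * t)) / (4 * t ^ 2) +
        2 ^ ((N : ℝ) / 2) * heatKernel N x (2 * t) * (N / (2 * t)) := by
        gcongr ?_ / _ + ?_ * _
        exacts [norm_sq_mul_heatKernel_le x ht, heatKernel_le_two_mul x ht]
    _ = _ := by field_simp; ring

theorem heatKernel_le_mul_of_le {s T : ℝ} (hs : 0 < s) (hst : s ≤ t) (htT : t ≤ T) (x : Euc N) :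
    heatKernel N x t ≤ (T / s) ^ ((N : ℝ) / 2) * heatKernel N x T := by
  have ht := hs.trans_le hst
  have hT := ht.trans_le htT
  have hpow : (4 * π * s) ^ (-(N : ℝ) / 2) =
      (T / s) ^ ((N : ℝ) / 2) * (4 * π * T) ^ (-(N : ℝ) / 2) := by
    rw [neg_div, Real.rpow_neg (by positivity), Real.rpow_neg (by positivity),
      ← Real.inv_rpow (by positivity), ← Real.inv_rpow (by positivity),
      ← Real.mul_rpow (by positivity) (by positivity)]
    congr 1
    field_simp
  rw [heatKernel, heatKernel, ← mul_assoc, ← hpow]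
  gcongr ?_ * rexp ?_
  · exact Real.rpow_le_rpow_of_nonpos (by positivity) (by gcongr)
      (div_nonpos_of_nonpos_of_nonneg (neg_nonpos.2 N.cast_nonneg) zero_le_two)
  · rw [neg_div, neg_div, neg_le_neg_iff]
    gcongr

end HeatKernel

/-! ### The heat potential -/

section HeatPot

variable {N : ℕ} {η : Euc N → ℝ} {t : ℝ}

theorem heatPot_eq_integral_heatKernel (η : Euc N → ℝ) (x : Euc N) (t : ℝ) :
    heatPot N η x t = ∫ y, heatKernel N (x - y) t * η y := rfl

theorem contDiffOn_heatPot {n : ℕ∞} (hη : ContDiff ℝ n η) (hc : HasCompactSupport η) :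
    ContDiffOn ℝ n (fun p : Euc N × ℝ => heatPot N η p.1 p.2) (univ ×ˢ Ioi 0) := by
  refine contDiffOn_integral_of_contDiffOn
    (F := fun p : Euc N × ℝ => fun y => heatKernel N (p.1 - y) p.2 * η y)
    (isOpen_univ.prod isOpen_Ioi) hc ?_ fun p _ y hy => by
      rw [image_eq_zero_of_notMem_tsupport hy, mul_zero]
  rintro ⟨⟨x, t⟩, y⟩ hp
  have hkernel := (contDiffAt_heatKernel (p := (x - y, t)) (n := n) hp.1.2).comp ((x, t), y)
    (f := fun p : (Euc N × ℝ) × Euc N => (p.1.1 - p.2, p.1.2)) (by fun_prop)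
  exact (hkernel.mul (hη.contDiffAt.comp _ contDiffAt_snd)).contDiffWithinAt

theorem contDiffAt_heatPot {n : ℕ∞} (hη : ContDiff ℝ n η) (hc : HasCompactSupport η) (x : Euc N)
    (ht : 0 < t) : ContDiffAt ℝ n (fun p : Euc N × ℝ => heatPot N η p.1 p.2) (x, t) :=
  (contDiffOn_heatPot hη hc).contDiffAt ((isOpen_univ.prod isOpen_Ioi).mem_nhds ⟨mem_univ _, ht⟩)

theorem contDiff_heatPot {n : ℕ∞} (hη : ContDiff ℝ n η) (hc : HasCompactSupport η) (ht : 0 < t) :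
    ContDiff ℝ n fun x => heatPot N η x t :=
  contDiff_iff_contDiffAt.2 fun x => (contDiffAt_heatPot hη hc x ht).comp x
    (f := fun x : Euc N => (x, t)) (by fun_prop)

theorem integrable_heatKernel_sub_mul (hη : Continuous η) (hc : HasCompactSupport η) (x : Euc N)
    (ht : 0 < t) : Integrable fun y => heatKernel N (x - y) t * η y :=
  (((contDiff_heatKernel (n := 0) ht).continuous.comp
    (continuous_const.sub continuous_id)).mul hη).integrable_of_hasCompactSupport hc.mul_left

theorem fderiv_heatPot_apply_eq_integral (hη : ContDiff ℝ 1 η) (hc : HasCompactSupport η)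
    (ht : 0 < t) (x v : Euc N) :
    fderiv ℝ (fun x => heatPot N η x t) x v =
      ∫ y, fderiv ℝ (fun z => heatKernel N z t) (x - y) v * η y := by
  have hline : HasDerivAt (fun s : ℝ => x + s • v) v 0 := by
    simpa using ((hasDerivAt_id (0 : ℝ)).smul_const v).const_add x
  have hkernel : ContDiff ℝ 1 fun p : ℝ × Euc N => heatKernel N (x + p.1 • v - p.2) t :=
    (contDiff_heatKernel ht).comp (f := fun p : ℝ × Euc N => x + p.1 • v - p.2) (by fun_prop)
  have hparam := hasDerivAt_integral_of_contDiffOn (s := 0)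
    (F := fun s y => heatKernel N (x + s • v - y) t * η y) isOpen_univ hc
    (hkernel.mul (hη.comp contDiff_snd)).contDiffOn
    (fun s _ y hy => by rw [image_eq_zero_of_notMem_tsupport hy, mul_zero]) (mem_univ _)
  have hdiff : DifferentiableAt ℝ (fun x => heatPot N η x t) (x + (0 : ℝ) • v) :=
    (contDiff_heatPot (n := 1) (mod_cast hη) hc ht).differentiable one_ne_zero _
  have hchain := hdiff.hasFDerivAt.comp_hasDerivAt 0 hline
  have heq := hchain.unique hparam
  rw [zero_smul, add_zero] at heq
  refine heq.trans (integral_congr_ae (.of_forall fun y => ?_))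
  have hdiffG : DifferentiableAt ℝ (fun z => heatKernel N z t) (x + (0 : ℝ) • v - y) :=
    (contDiff_heatKernel (n := 1) ht).differentiable one_ne_zero _
  have hcomp := (hdiffG.hasFDerivAt.comp_hasDerivAt 0 (hline.sub_const y)).mul_const (η y)
  rw [zero_smul, add_zero] at hcomp
  exact hcomp.deriv

theorem fderiv_heatPot_apply (hη : ContDiff ℝ 1 η) (hc : HasCompactSupport η) (ht : 0 < t)
    (x v : Euc N) :
    fderiv ℝ (fun x => heatPot N η x t) x v = heatPot N (fun y => fderiv ℝ η y v) x t := by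
  have hreflect (y : Euc N) : fderiv ℝ (fun y => heatKernel N (x - y) t) y v =
      -fderiv ℝ (fun z => heatKernel N z t) (x - y) v := by
    have hdiff : DifferentiableAt ℝ (fun z => heatKernel N z t) (x - y) :=
      (contDiff_heatKernel (n := 1) ht).differentiable one_ne_zero _
    have hcomp := hdiff.hasFDerivAt.comp y ((hasFDerivAt_id y).const_sub x)
    exact (DFunLike.congr_fun hcomp.fderiv v).trans
      (map_neg (fderiv ℝ (fun z => heatKernel N z t) (x - y)) v)
  have hparts := integral_fderiv_mul_eq_neg (f := fun y => heatKernel N (x - y) t)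
    ((contDiff_heatKernel ht).comp (contDiff_const.sub contDiff_id)) hη hc v
  simp_rw [hreflect, neg_mul, integral_neg, neg_inj] at hparts
  rw [fderiv_heatPot_apply_eq_integral hη hc ht, hparts, heatPot_eq_integral_heatKernel]

theorem hasDerivAt_heatPot_integral (hη : ContDiff ℝ 1 η) (hc : HasCompactSupport η) (x : Euc N)
    (ht : 0 < t) :
    HasDerivAt (heatPot N η x) (∫ y, deriv (heatKernel N (x - y)) t * η y) t := by
  refine (hasDerivAt_integral_of_contDiffOn (F := fun s y => heatKernel N (x - y) s * η y)
    isOpen_Ioi hc ?_ (fun s _ y hy => by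
      rw [image_eq_zero_of_notMem_tsupport hy, mul_zero]) ht).congr_deriv ?_
  · rintro ⟨s, y⟩ hp
    have hkernel := (contDiffAt_heatKernel (p := (x - y, s)) (n := 1) hp.1).comp (s, y)
      (f := fun p : ℝ × Euc N => (x - p.2, p.1)) (by fun_prop)
    exact (hkernel.mul (hη.contDiffAt.comp _ contDiffAt_snd)).contDiffWithinAt
  · exact integral_congr_ae (.of_forall fun y =>
      deriv_mul_const (hasDerivAt_heatKernel (x - y) ht).differentiableAt _)

theorem hasDerivAt_heatPot (hη : ContDiff ℝ 2 η) (hc : HasCompactSupport η) (x : Euc N)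
    (ht : 0 < t) : HasDerivAt (heatPot N η x) (heatPot N (lapl η) x t) t := by
  refine (hasDerivAt_heatPot_integral (hη.of_le one_le_two) hc x ht).congr_deriv ?_
  have hparts := integral_lapl_mul (f := fun y => heatKernel N (y - x) t)
    ((contDiff_heatKernel ht).comp (contDiff_id.sub contDiff_const)) hη hc
  simp_rw [heatPot_eq_integral_heatKernel, heatKernel_sub_comm x, ← hparts, lapl_heatKernel_sub ht,
    (hasDerivAt_heatKernel _ ht).deriv, heatKernel_sub_comm x, norm_sub_rev x]

theorem lapl_heatPot (hη : ContDiff ℝ 2 η) (hc : HasCompactSupport η) (x : Euc N) (ht : 0 < t) :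
    lapl (fun x => heatPot N η x t) x = heatPot N (lapl η) x t := by
  have hfst (v : Euc N) : (fun y => fderiv ℝ (fun x => heatPot N η x t) y v) =
      fun y => heatPot N (fun y => fderiv ℝ η y v) y t :=
    funext fun y => fderiv_heatPot_apply (hη.of_le one_le_two) hc ht y v
  have hsnd (v : Euc N) : fderiv ℝ (fun y => heatPot N (fun y => fderiv ℝ η y v) y t) x v =
      heatPot N (fun y => fderiv ℝ (fun y => fderiv ℝ η y v) y v) x t :=
    fderiv_heatPot_apply (contDiff_fderiv_apply hη v) (hc.fderiv_apply ℝ v) ht x v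
  simp_rw [lapl, hfst, hsnd, heatPot_eq_integral_heatKernel, lapl, Finset.mul_sum]
  rw [integral_finsetSum]
  exact fun i _ => integrable_heatKernel_sub_mul
    (continuous_fderiv_apply_const (contDiff_fderiv_apply hη _) _)
    ((hc.fderiv_apply ℝ _).fderiv_apply ℝ _) x ht

theorem heatPot_nonneg (hη : ∀ y, 0 ≤ η y) (x : Euc N) (ht : 0 < t) : 0 ≤ heatPot N η x t :=
  integral_nonneg fun y => mul_nonneg (heatKernel_pos _ ht).le (hη y)

theorem heatPot_le_of_forall_le {M : ℝ} (hη : Continuous η) (hc : HasCompactSupport η)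
    (hM : ∀ y, η y ≤ M) (x : Euc N) (ht : 0 < t) : heatPot N η x t ≤ M := by
  calc heatPot N η x t ≤ ∫ y, heatKernel N (x - y) t * M :=
        integral_mono (integrable_heatKernel_sub_mul hη hc x ht)
          ((integrable_heatKernel_sub x ht).mul_const M)
          fun y => mul_le_mul_of_nonneg_left (hM y) (heatKernel_pos _ ht).le
    _ = M := by rw [integral_mul_const, integral_heatKernel_sub x ht, one_mul]

theorem abs_heatPot_le {f : Euc N → ℝ} (hη : Continuous η) (hc : HasCompactSupport η)
    (hf : ∀ y, |f y| ≤ η y) (x : Euc N) (ht : 0 < t) : |heatPot N f x t| ≤ heatPot N η x t := by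
  rw [← Real.norm_eq_abs, heatPot_eq_integral_heatKernel]
  refine norm_integral_le_of_norm_le (integrable_heatKernel_sub_mul hη hc x ht)
    (.of_forall fun y => ?_)
  have hpos := heatKernel_pos (x - y) ht
  rw [norm_mul, Real.norm_of_nonneg hpos.le]
  exact mul_le_mul_of_nonneg_left (hf y) hpos.le

theorem heatPot_const_mul (c : ℝ) (x : Euc N) (t : ℝ) :
    heatPot N (fun y => c * η y) x t = c * heatPot N η x t := by
  simp only [heatPot_eq_integral_heatKernel, mul_left_comm _ c, integral_const_mul]

theorem heatPot_eq_convolution (η : Euc N → ℝ) (t : ℝ) :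
    (fun x => heatPot N η x t) =
      convolution η (fun x => heatKernel N x t) (ContinuousLinearMap.lsmul ℝ ℝ) volume :=
  funext fun _ => integral_congr_ae (.of_forall fun _ => mul_comm _ _)

theorem integrable_heatPot (hη : Integrable η) (ht : 0 < t) :
    Integrable fun x => heatPot N η x t := by
  rw [heatPot_eq_convolution]
  exact hη.integrable_convolution _ (integrable_heatKernel ht)

theorem integral_heatPot (hη : Integrable η) (ht : 0 < t) :
    ∫ x, heatPot N η x t = ∫ x, η x := by
  rw [heatPot_eq_convolution, integral_convolution _ hη (integrable_heatKernel ht),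
    integral_heatKernel ht, ContinuousLinearMap.lsmul_apply, smul_eq_mul, mul_one]

theorem norm_fderiv_heatPot_le (hη : ContDiff ℝ 1 η) (hc : HasCompactSupport η)
    (h0 : ∀ y, 0 ≤ η y) (x : Euc N) (ht : 0 < t) :
    ‖fderiv ℝ (fun x => heatPot N η x t) x‖ ≤
      √(8 * t) * 2 ^ ((N : ℝ) / 2) / (2 * t) * heatPot N η x (2 * t) := by
  have hpot := heatPot_nonneg h0 x (t := 2 * t) (by positivity)
  refine ContinuousLinearMap.opNorm_le_bound _ (by positivity) fun v => ?_
  rw [fderiv_heatPot_apply_eq_integral hη hc ht, heatPot_eq_integral_heatKernel,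
    ← integral_const_mul, mul_comm, ← integral_const_mul]
  refine norm_integral_le_of_norm_le (((integrable_heatKernel_sub_mul hη.continuous hc x
    (by positivity)).const_mul _).const_mul _) (.of_forall fun y => ?_)
  rw [norm_mul, Real.norm_of_nonneg (h0 y), ← mul_assoc, ← mul_assoc]
  refine mul_le_mul_of_nonneg_right ?_ (h0 y)
  refine (ContinuousLinearMap.le_opNorm _ v).trans ?_
  rw [mul_comm, mul_assoc]
  gcongr
  exact norm_fderiv_heatKernel_le ht _

theorem abs_deriv_heatPot_le (hη : ContDiff ℝ 1 η) (hc : HasCompactSupport η)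
    (h0 : ∀ y, 0 ≤ η y) (x : Euc N) (ht : 0 < t) :
    |deriv (heatPot N η x) t| ≤
      (2 + N / 2) * 2 ^ ((N : ℝ) / 2) / t * heatPot N η x (2 * t) := by
  rw [(hasDerivAt_heatPot_integral hη hc x ht).deriv, heatPot_eq_integral_heatKernel,
    ← integral_const_mul, ← Real.norm_eq_abs]
  refine norm_integral_le_of_norm_le ((integrable_heatKernel_sub_mul hη.continuous hc x
    (by positivity)).const_mul _) (.of_forall fun y => ?_)
  rw [norm_mul, Real.norm_of_nonneg (h0 y), ← mul_assoc]
  exact mul_le_mul_of_nonneg_right (abs_deriv_heatKernel_le ht _) (h0 y)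

end HeatPot

/-! ### Integrability of `R[η]^p` -/

/-- The density `R[η] = |∇ℍ[η]|² + |∂ₜℍ[η]|`, for which `Rnorm N q η` is the integral of
`R[η] ^ q'` over `Q_∞`. -/
def heatPotR (N : ℕ) (η : Euc N → ℝ) (x : Euc N) (t : ℝ) : ℝ :=
  ‖fderiv ℝ (fun y => heatPot N η y t) x‖ ^ 2 + |deriv (heatPot N η x) t|

section HeatPotR

variable {N : ℕ} {η : Euc N → ℝ} {p t : ℝ}

theorem heatPotR_nonneg (η : Euc N → ℝ) (x : Euc N) (t : ℝ) : 0 ≤ heatPotR N η x t := by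
  unfold heatPotR
  positivity

theorem rpow_le_rpow_sub_one_mul {a b : ℝ} (ha : 0 ≤ a) (hab : a ≤ b) (hp : 1 ≤ p) :
    a ^ p ≤ b ^ (p - 1) * a := by
  rcases ha.eq_or_lt with rfl | ha
  · rw [Real.zero_rpow (by linarith), mul_zero]
  · rw [← sub_add_cancel p 1, Real.rpow_add_one ha.ne', add_sub_cancel_right]
    gcongr

theorem continuousOn_heatPotR (hη : ContDiff ℝ 1 η) (hc : HasCompactSupport η) :
    ContinuousOn (fun p : ℝ × Euc N => heatPotR N η p.2 p.1) (Ioi 0 ×ˢ univ) := by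
  set H : Euc N × ℝ → ℝ := fun p => heatPot N η p.1 p.2
  have hH : ContinuousOn (fderiv ℝ H) (univ ×ˢ Ioi 0) :=
    (contDiffOn_heatPot (n := 1) hη hc).continuousOn_fderiv_of_isOpen
      (isOpen_univ.prod isOpen_Ioi) le_rfl
  have hswap : ContinuousOn (fun p : ℝ × Euc N => fderiv ℝ H (p.2, p.1)) (Ioi 0 ×ˢ univ) :=
    hH.comp (by fun_prop) fun p hp => ⟨mem_univ _, hp.1⟩
  have hcont : ContinuousOn (fun p : ℝ × Euc N => ‖(fderiv ℝ H (p.2, p.1)).comp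
      (.inl ℝ (Euc N) ℝ)‖ ^ 2 + |fderiv ℝ H (p.2, p.1) (0, 1)|) (Ioi 0 ×ˢ univ) :=
    (((hswap.clm_comp continuousOn_const).norm).pow 2).add
      (hswap.clm_apply continuousOn_const).abs
  refine hcont.congr ?_
  rintro ⟨t, x⟩ ⟨ht, -⟩
  have hd : HasFDerivAt H (fderiv ℝ H (x, t)) (x, t) :=
    ((contDiffAt_heatPot (n := 1) hη hc x ht).differentiableAt one_ne_zero).hasFDerivAt
  have hspace : HasFDerivAt (fun y => heatPot N η y t) _ x :=
    hd.comp (f := fun y : Euc N => (y, t)) x (hasFDerivAt_prodMk_left x t)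
  have htime : HasDerivAt (heatPot N η x) (fderiv ℝ H (x, t) (0, 1)) t :=
    hd.comp_hasDerivAt (f := fun s : ℝ => (x, s)) t
      ((hasDerivAt_const t x).prodMk (hasDerivAt_id' t))
  simp only [heatPotR, hspace.fderiv, htime.deriv]

theorem exists_heatPotR_le_mul_heatPot (hη : ContDiff ℝ 2 η) (hc : HasCompactSupport η) :
    ∃ (M : ℝ) (g : Euc N → ℝ), 0 ≤ M ∧ Continuous g ∧ HasCompactSupport g ∧
      (∀ y, 0 ≤ g y ∧ g y ≤ M) ∧
      ∀ x t, 0 < t → heatPotR N η x t ≤ (M + 1) * heatPot N g x t := by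
  set g : Euc N → ℝ := fun y => ‖fderiv ℝ η y‖ + |lapl η y|
  have hg : Continuous g := (hη.continuous_fderiv two_ne_zero).norm.add (continuous_lapl hη).abs
  have hgc : HasCompactSupport g :=
    (hc.fderiv (𝕜 := ℝ)).norm.add (hasCompactSupport_lapl hc).norm
  have hg0 (y : Euc N) : 0 ≤ g y := by positivity
  obtain ⟨M, hM⟩ := hg.bounded_above_of_compact_support hgc
  have hgM (y : Euc N) : g y ≤ M := (le_abs_self _).trans (hM y)
  refine ⟨M, g, (hg0 0).trans (hgM 0), hg, hgc, fun y => ⟨hg0 y, hgM y⟩, fun x t ht => ?_⟩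
  have hpot0 := heatPot_nonneg hg0 x ht
  have hpotM := heatPot_le_of_forall_le hg hgc hgM x ht
  have hgrad : ‖fderiv ℝ (fun y => heatPot N η y t) x‖ ≤ heatPot N g x t := by
    refine ContinuousLinearMap.opNorm_le_bound _ hpot0 fun v => ?_
    rw [fderiv_heatPot_apply (hη.of_le one_le_two) hc ht, mul_comm, ← heatPot_const_mul]
    refine abs_heatPot_le (by fun_prop) hgc.mul_left (fun y => ?_) x ht
    rw [mul_comm]
    exact ((fderiv ℝ η y).le_opNorm v).trans (mul_le_mul_of_nonneg_right
      (le_add_of_nonneg_right (abs_nonneg _)) (norm_nonneg v))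
  have htime : |deriv (heatPot N η x) t| ≤ heatPot N g x t := by
    rw [(hasDerivAt_heatPot hη hc x ht).deriv]
    exact abs_heatPot_le hg hgc (fun y => le_add_of_nonneg_left (norm_nonneg _)) x ht
  calc heatPotR N η x t ≤ heatPot N g x t ^ 2 + heatPot N g x t := by unfold heatPotR; gcongr
    _ ≤ (M + 1) * heatPot N g x t := by nlinarith

theorem exists_heatPotR_rpow_le_heatPot (hη : ContDiff ℝ 2 η) (hc : HasCompactSupport η)
    (hp : 1 ≤ p) :
    ∃ f : Euc N → ℝ, Continuous f ∧ HasCompactSupport f ∧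
      ∀ x t, 0 < t → heatPotR N η x t ^ p ≤ heatPot N f x t := by
  obtain ⟨M, g, hM, hg, hgc, hgM, hle⟩ := exists_heatPotR_le_mul_heatPot hη hc
  refine ⟨fun y => ((M + 1) * M) ^ (p - 1) * (M + 1) * g y, by fun_prop, hgc.mul_left,
    fun x t ht => ?_⟩
  have hpotM := heatPot_le_of_forall_le hg hgc (fun y => (hgM y).2) x ht
  calc heatPotR N η x t ^ p ≤ ((M + 1) * M) ^ (p - 1) * heatPotR N η x t :=
        rpow_le_rpow_sub_one_mul (heatPotR_nonneg η x t) ((hle x t ht).trans (by gcongr)) hp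
    _ ≤ ((M + 1) * M) ^ (p - 1) * ((M + 1) * heatPot N g x t) := by gcongr; exact hle x t ht
    _ = _ := by rw [heatPot_const_mul, mul_assoc]

theorem exists_heatPotR_rpow_le_rpow_neg_mul_heatPot (hη : ContDiff ℝ 1 η)
    (hc : HasCompactSupport η) (h01 : ∀ y, 0 ≤ η y ∧ η y ≤ 1) (hp : 1 ≤ p) :
    ∃ D : ℝ, ∀ x t, 0 < t →
      heatPotR N η x t ^ p ≤ D * t ^ (-p) * heatPot N η x (2 * t) := by
  set c : ℝ := 2 ^ ((N : ℝ) / 2)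
  set D : ℝ := 2 * c ^ 2 + (2 + N / 2) * c
  refine ⟨D ^ p, fun x t ht => ?_⟩
  have h0 := heatPot_nonneg (fun y => (h01 y).1) x (t := 2 * t) (by positivity)
  have h1 := heatPot_le_of_forall_le hη.continuous hc (fun y => (h01 y).2) x (t := 2 * t)
    (by positivity)
  have hgrad := norm_fderiv_heatPot_le hη hc (fun y => (h01 y).1) x ht
  have htime := abs_deriv_heatPot_le hη hc (fun y => (h01 y).1) x ht
  set h := heatPot N η x (2 * t)
  have hR : heatPotR N η x t ≤ D * (t⁻¹ * h) :=
    calc heatPotR N η x t ≤ (√(8 * t) * c / (2 * t) * h) ^ 2 + (2 + N / 2) * c / t * h := by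
          unfold heatPotR
          gcongr
      _ = 2 * c ^ 2 / t * (h * h) + (2 + N / 2) * c / t * h := by
          rw [mul_pow, div_pow, mul_pow, Real.sq_sqrt (by positivity)]
          field_simp
          ring
      _ ≤ 2 * c ^ 2 / t * h + (2 + N / 2) * c / t * h := by
          gcongr
          exact mul_le_of_le_one_left h0 h1
      _ = D * (t⁻¹ * h) := by ring
  calc heatPotR N η x t ^ p ≤ (D * (t⁻¹ * h)) ^ p := by
        gcongr
        exact heatPotR_nonneg η x t
    _ = D ^ p * t ^ (-p) * h ^ p := by
        rw [Real.mul_rpow (by positivity) (by positivity), Real.mul_rpow (by positivity) h0,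
          Real.inv_rpow ht.le, Real.rpow_neg ht.le, mul_assoc]
    _ ≤ D ^ p * t ^ (-p) * h := by
        gcongr
        exact Real.rpow_le_self_of_le_one h0 h1 hp

theorem integrable_heatPotR_rpow (hη : ContDiff ℝ 2 η) (hc : HasCompactSupport η) (hp : 1 ≤ p)
    (ht : 0 < t) : Integrable fun x => heatPotR N η x t ^ p := by
  obtain ⟨f, hf, hfc, hle⟩ := exists_heatPotR_rpow_le_heatPot hη hc hp
  have hcont : Continuous fun x => heatPotR N η x t :=
    continuousOn_univ.1 ((continuousOn_heatPotR (hη.of_le one_le_two) hc).comp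
      (f := fun x : Euc N => (t, x)) (by fun_prop) fun x _ => ⟨ht, mem_univ _⟩)
  refine (integrable_heatPot (hf.integrable_of_hasCompactSupport hfc) ht).mono'
    (hcont.rpow_const fun x => Or.inr (by linarith)).aestronglyMeasurable (.of_forall fun x => ?_)
  rw [Real.norm_of_nonneg (Real.rpow_nonneg (heatPotR_nonneg η x t) _)]
  exact hle x t ht

theorem aestronglyMeasurable_integral_heatPotR_rpow (hη : ContDiff ℝ 1 η)
    (hc : HasCompactSupport η) (hp : 0 ≤ p) :
    AEStronglyMeasurable (fun t => ∫ x, heatPotR N η x t ^ p) (volume.restrict (Ioi 0)) := by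
  have hcont : ContinuousOn (fun z : ℝ × Euc N => heatPotR N η z.2 z.1 ^ p) (Ioi 0 ×ˢ univ) :=
    (continuousOn_heatPotR hη hc).rpow_const fun x _ => Or.inr hp
  have hmeas := hcont.aestronglyMeasurable (μ := volume.prod volume)
    (measurableSet_Ioi.prod MeasurableSet.univ)
  rw [← Measure.prod_restrict, Measure.restrict_univ] at hmeas
  exact hmeas.integral_prod_right'

theorem integral_heatPotR_rpow_nonneg (η : Euc N → ℝ) (p t : ℝ) :
    0 ≤ ∫ x, heatPotR N η x t ^ p :=
  integral_nonneg fun x => Real.rpow_nonneg (heatPotR_nonneg η x t) p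

theorem integrableOn_integral_heatPotR_rpow (hη : ContDiff ℝ 2 η) (hc : HasCompactSupport η)
    (h01 : ∀ y, 0 ≤ η y ∧ η y ≤ 1) (hp : 1 < p) :
    IntegrableOn (fun t => ∫ x, heatPotR N η x t ^ p) (Ioi 0) := by
  have hmeas := aestronglyMeasurable_integral_heatPotR_rpow (hη.of_le one_le_two) hc
    (zero_le_one.trans hp.le)
  rw [← Ioc_union_Ioi_eq_Ioi (zero_le_one' ℝ)]
  refine IntegrableOn.union ?_ ?_
  · obtain ⟨f, hf, hfc, hle⟩ := exists_heatPotR_rpow_le_heatPot hη hc hp.le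
    have hfi := hf.integrable_of_hasCompactSupport (μ := volume) hfc
    refine (integrableOn_const (C := ∫ x, f x) measure_Ioc_lt_top.ne).mono'
      (hmeas.mono_set Ioc_subset_Ioi_self)
      ((ae_restrict_iff' measurableSet_Ioc).2 (.of_forall fun t ht => ?_))
    rw [Real.norm_of_nonneg (integral_heatPotR_rpow_nonneg η p t), ← integral_heatPot hfi ht.1]
    exact integral_mono (integrable_heatPotR_rpow hη hc hp.le ht.1) (integrable_heatPot hfi ht.1)
      fun x => hle x t ht.1
  · obtain ⟨D, hle⟩ := exists_heatPotR_rpow_le_rpow_neg_mul_heatPot (hη.of_le one_le_two) hc h01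
      hp.le
    have hηi := hη.continuous.integrable_of_hasCompactSupport (μ := volume) hc
    refine (((integrableOn_Ioi_rpow_of_lt (neg_lt_neg hp) one_pos).const_mul D).mul_const
      (∫ x, η x)).mono' (hmeas.mono_set (Ioi_subset_Ioi zero_le_one))
      ((ae_restrict_iff' measurableSet_Ioi).2 (.of_forall fun t ht => ?_))
    have ht0 : 0 < t := one_pos.trans ht
    rw [Real.norm_of_nonneg (integral_heatPotR_rpow_nonneg η p t),
      ← integral_heatPot hηi (mul_pos two_pos ht0), ← integral_const_mul]
    exact integral_mono (integrable_heatPotR_rpow hη hc hp.le ht0)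
      ((integrable_heatPot hηi (mul_pos two_pos ht0)).const_mul _) fun x => hle x t ht0

theorem one_lt_conjExponent {q : ℝ} (hq : 1 < q) : 1 < q / (q - 1) :=
  (Real.HolderConjugate.conjExponent hq).symm.lt

theorem intervalIntegral_heatPotR_rpow_le_Rnorm {q a b : ℝ} (hq : 1 < q) (hη : ContDiff ℝ 2 η)
    (hc : HasCompactSupport η) (h01 : ∀ y, 0 ≤ η y ∧ η y ≤ 1) (ha : 0 ≤ a) (hab : a ≤ b) :
    ∫ t in a..b, ∫ x, heatPotR N η x t ^ (q / (q - 1)) ≤ Rnorm N q η := by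
  rw [intervalIntegral.integral_of_le hab]
  exact setIntegral_mono_set
    (integrableOn_integral_heatPotR_rpow hη hc h01 (one_lt_conjExponent hq))
    (.of_forall fun t => integral_heatPotR_rpow_nonneg η _ t)
    (Ioc_subset_Ioi_self.trans (Ioi_subset_Ioi ha)).eventuallyLE

end HeatPotR

/-! ### Bounds for `1 - ℍ[η]` -/

section OneSubHeatPot

variable {N : ℕ} {η : Euc N → ℝ} {K : Set (Euc N)} {t : ℝ}

theorem exists_sub_le_mul_norm_sq_of_eq_max (hη : ContDiff ℝ 2 η) (hc : HasCompactSupport η)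
    {M : ℝ} (hM : ∀ y, η y ≤ M) (hK : ∀ z ∈ K, η z = M) :
    ∃ L : ℝ, 0 ≤ L ∧ ∀ z ∈ K, ∀ y, M - η y ≤ L * ‖y - z‖ ^ 2 := by
  obtain ⟨L, hL⟩ := (hη.fderiv_right (m := 1) le_rfl).lipschitzWith_of_hasCompactSupport
    (hc.fderiv (𝕜 := ℝ)) one_ne_zero
  refine ⟨L, L.2, fun z hz y => ?_⟩
  have hcrit : fderiv ℝ η z = 0 :=
    IsLocalMax.fderiv_eq_zero (.of_forall fun y => (hM y).trans_eq (hK z hz).symm)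
  have hderiv : ∀ w ∈ closedBall z ‖y - z‖, ‖fderiv ℝ η w‖ ≤ L * ‖y - z‖ := fun w hw => by
    have hdist := hL.dist_le_mul w z
    rw [hcrit, dist_zero_right] at hdist
    exact hdist.trans (mul_le_mul_of_nonneg_left hw L.2)
  have hmean := (convex_closedBall z ‖y - z‖).norm_image_sub_le_of_norm_fderiv_le
    (fun w _ => hη.differentiable two_ne_zero w) hderiv (mem_closedBall_self (norm_nonneg _))
    (mem_closedBall_iff_norm.2 le_rfl)
  rw [hK z hz, norm_sub_rev] at hmean
  exact (le_norm_self _).trans (hmean.trans_eq (by ring))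

theorem integrable_heatKernel_sub_mul_one_sub (hη : Continuous η) (hc : HasCompactSupport η)
    (x : Euc N) (ht : 0 < t) : Integrable fun y => heatKernel N (x - y) t * (1 - η y) := by
  simp_rw [mul_one_sub]
  exact (integrable_heatKernel_sub x ht).sub (integrable_heatKernel_sub_mul hη hc x ht)

theorem one_sub_heatPot (hη : Continuous η) (hc : HasCompactSupport η) (x : Euc N) (ht : 0 < t) :
    1 - heatPot N η x t = ∫ y, heatKernel N (x - y) t * (1 - η y) := by
  simp_rw [mul_one_sub]
  rw [integral_sub (integrable_heatKernel_sub x ht) (integrable_heatKernel_sub_mul hη hc x ht),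
    integral_heatKernel_sub x ht, heatPot_eq_integral_heatKernel]

theorem exists_one_sub_heatPot_le (hη : ContDiff ℝ 2 η) (hc : HasCompactSupport η)
    (h1 : ∀ y, η y ≤ 1) (hK : ∀ z ∈ K, η z = 1) :
    ∃ C : ℝ, 0 ≤ C ∧ ∀ z ∈ K, ∀ x t, 0 < t →
      1 - heatPot N η x t ≤ C * (‖x - z‖ ^ 2 + t) := by
  obtain ⟨L, hL, hquad⟩ := exists_sub_le_mul_norm_sq_of_eq_max hη hc h1 hK
  set c : ℝ := 8 * 2 ^ ((N : ℝ) / 2)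
  refine ⟨2 * L * (1 + c), by positivity, fun z hz x t ht => ?_⟩
  have hker := integrable_heatKernel_sub x ht
  have hmom := (integrable_norm_sq_mul_heatKernel (N := N) ht).comp_sub_left x
  have hpoint (y : Euc N) : heatKernel N (x - y) t * (1 - η y) ≤
      2 * L * (‖x - y‖ ^ 2 * heatKernel N (x - y) t) +
        2 * L * ‖x - z‖ ^ 2 * heatKernel N (x - y) t := by
    have htri : ‖y - z‖ ≤ ‖x - y‖ + ‖x - z‖ :=
      (norm_sub_le_norm_sub_add_norm_sub y x z).trans_eq (by rw [norm_sub_rev y x])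
    calc heatKernel N (x - y) t * (1 - η y)
        ≤ heatKernel N (x - y) t * (L * (2 * (‖x - y‖ ^ 2 + ‖x - z‖ ^ 2))) := by
          refine mul_le_mul_of_nonneg_left ((hquad z hz y).trans ?_) (heatKernel_pos _ ht).le
          gcongr
          exact (pow_le_pow_left₀ (norm_nonneg _) htri 2).trans add_sq_le
      _ = _ := by ring
  calc 1 - heatPot N η x t = ∫ y, heatKernel N (x - y) t * (1 - η y) :=
        one_sub_heatPot hη.continuous hc x ht
    _ ≤ ∫ y, 2 * L * (‖x - y‖ ^ 2 * heatKernel N (x - y) t) +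
        2 * L * ‖x - z‖ ^ 2 * heatKernel N (x - y) t :=
      integral_mono (integrable_heatKernel_sub_mul_one_sub hη.continuous hc x ht)
        ((hmom.const_mul _).add (hker.const_mul _)) hpoint
    _ = 2 * L * (∫ y : Euc N, ‖y‖ ^ 2 * heatKernel N y t) + 2 * L * ‖x - z‖ ^ 2 := by
      rw [integral_add (hmom.const_mul _) (hker.const_mul _), integral_const_mul,
        integral_const_mul, integral_heatKernel_sub x ht, mul_one,
        integral_sub_left_eq_self fun y => ‖y‖ ^ 2 * heatKernel N y t]
    _ ≤ 2 * L * (c * t) + 2 * L * ‖x - z‖ ^ 2 := by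
      gcongr
      exact integral_norm_sq_mul_heatKernel_le ht
    _ ≤ 2 * L * (c * t) + 2 * L * ‖x - z‖ ^ 2 + 2 * L * (t + c * ‖x - z‖ ^ 2) :=
      le_add_of_nonneg_right (by positivity)
    _ = 2 * L * (1 + c) * (‖x - z‖ ^ 2 + t) := by ring

theorem volume_real_ball_zero_le {R : ℝ} (hR : 0 < R) :
    volume.real (ball (0 : Euc N) R) ≤ (2 * R) ^ N := by
  have hsub : ball (0 : Euc N) R ⊆ (WithLp.ofLp : Euc N → Fin N → ℝ) ⁻¹' ball 0 R := by
    intro x hx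
    rw [mem_ball_zero_iff] at hx
    rw [mem_preimage, mem_ball_zero_iff, pi_norm_lt_iff hR]
    exact fun i => (PiLp.norm_apply_le x i).trans_lt hx
  have hvol := measure_mono (μ := volume) hsub
  rw [(PiLp.volume_preserving_ofLp (Fin N)).measure_preimage
    measurableSet_ball.nullMeasurableSet, Real.volume_pi_ball _ hR, Fintype.card_fin] at hvol
  exact ENNReal.toReal_le_of_le_ofReal (by positivity) hvol

theorem heatKernel_le_rpow (x : Euc N) (ht : 0 < t) :
    heatKernel N x t ≤ (4 * π * t) ^ (-(N : ℝ) / 2) := by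
  refine mul_le_of_le_one_right (by positivity) (Real.exp_le_one_iff.2 ?_)
  rw [neg_div]
  exact neg_nonpos.2 (by positivity)

theorem hasCompactSupport_of_tsupport_subset_ball {R : ℝ} (hs : tsupport η ⊆ ball 0 R) :
    HasCompactSupport η :=
  HasCompactSupport.of_support_subset_isCompact (isCompact_closedBall 0 R)
    ((subset_tsupport η).trans (hs.trans ball_subset_closedBall))

theorem heatPot_sq_le_pi_rpow (hη : Continuous η) (h01 : ∀ y, 0 ≤ η y ∧ η y ≤ 1) {R : ℝ}
    (hR : 0 < R) (hs : tsupport η ⊆ ball 0 R) (x : Euc N) :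
    heatPot N η x (R ^ 2) ≤ π ^ (-(N : ℝ) / 2) := by
  have hc := hasCompactSupport_of_tsupport_subset_ball hs
  have hR2 : 0 < R ^ 2 := by positivity
  set A : ℝ := (4 * π * R ^ 2) ^ (-(N : ℝ) / 2) with hA
  have hpoint (y : Euc N) :
      heatKernel N (x - y) (R ^ 2) * η y ≤ (ball (0 : Euc N) R).indicator (fun _ => A) y := by
    by_cases hy : y ∈ ball (0 : Euc N) R
    · rw [indicator_of_mem hy]
      exact (mul_le_of_le_one_right (heatKernel_pos _ hR2).le (h01 y).2).trans
        (heatKernel_le_rpow _ hR2)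
    · rw [indicator_of_notMem hy, image_eq_zero_of_notMem_tsupport fun h => hy (hs h), mul_zero]
  calc heatPot N η x (R ^ 2) ≤ ∫ y, (ball (0 : Euc N) R).indicator (fun _ => A) y :=
        integral_mono (integrable_heatKernel_sub_mul hη hc x hR2)
          ((integrableOn_const measure_ball_lt_top.ne).integrable_indicator measurableSet_ball)
          hpoint
    _ = volume.real (ball (0 : Euc N) R) * A := by
      rw [integral_indicator measurableSet_ball, setIntegral_const, smul_eq_mul]
    _ ≤ (2 * R) ^ N * A := by gcongr; exact volume_real_ball_zero_le hR
    _ = π ^ (-(N : ℝ) / 2) := by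
      rw [hA, show 4 * π * R ^ 2 = π * (2 * R) ^ (2 : ℝ) by rw [Real.rpow_two]; ring,
        Real.mul_rpow (by positivity) (by positivity), ← Real.rpow_mul (by positivity),
        ← Real.rpow_natCast, mul_left_comm, ← Real.rpow_add (by positivity),
        mul_div_cancel₀ _ two_ne_zero, add_neg_cancel, Real.rpow_zero, mul_one]

theorem pi_rpow_neg_natCast_div_two_lt_one (hN : 1 ≤ N) : π ^ (-(N : ℝ) / 2) < 1 := by
  have : (1 : ℝ) ≤ N := mod_cast hN
  exact Real.rpow_lt_one_of_one_lt_of_neg (by linarith [Real.pi_gt_three]) (by linarith)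

end OneSubHeatPot

/-! ### Testing the equation -/

/-- The standard smooth cutoff at scale `n + 1`: it equals `1` on the ball of radius `n + 1` and
vanishes outside the ball of radius `2 * (n + 1)`. It makes test functions compactly supported. -/
def cutoff (N n : ℕ) (x : Euc N) : ℝ :=
  (⟨1, 2, one_pos, one_lt_two⟩ : ContDiffBump (0 : Euc N)) (((n : ℝ) + 1)⁻¹ • x)

section Cutoff

variable {N : ℕ}

theorem contDiff_cutoff (N n : ℕ) : ContDiff ℝ 2 (cutoff N n) :=
  (ContDiffBump.contDiff _ (n := 2)).comp (by fun_prop)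

theorem cutoff_nonneg (n : ℕ) (x : Euc N) : 0 ≤ cutoff N n x := ContDiffBump.nonneg _

theorem cutoff_le_one (n : ℕ) (x : Euc N) : cutoff N n x ≤ 1 := ContDiffBump.le_one _

theorem hasCompactSupport_cutoff (N n : ℕ) : HasCompactSupport (cutoff N n) :=
  (ContDiffBump.hasCompactSupport _).comp_smul (by positivity)

theorem tendsto_cutoff (x : Euc N) : Tendsto (fun n => cutoff N n x) atTop (𝓝 1) := by
  have hlim : Tendsto (fun n : ℕ => ((n : ℝ) + 1)⁻¹ • x) atTop (𝓝 0) := by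
    simpa using (tendsto_one_div_add_atTop_nhds_zero_nat (𝕜 := ℝ)).smul_const x
  refine tendsto_const_nhds.congr' ?_
  filter_upwards [hlim.eventually (closedBall_mem_nhds 0 one_pos)] with n hn
  exact (ContDiffBump.one_of_mem_closedBall _ hn).symm

theorem exists_cutoff_deriv_le (N : ℕ) : ∃ C, ∀ n x,
    ‖fderiv ℝ (cutoff N n) x‖ ≤ C * ((n : ℝ) + 1)⁻¹ ∧
      |lapl (cutoff N n) x| ≤ C * ((n : ℝ) + 1)⁻¹ := by
  set β : ContDiffBump (0 : Euc N) := ⟨1, 2, one_pos, one_lt_two⟩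
  have hsmooth : ContDiff ℝ 2 β := β.contDiff
  obtain ⟨C₁, hC₁⟩ := (hsmooth.continuous_fderiv two_ne_zero).bounded_above_of_compact_support
    (β.hasCompactSupport.fderiv (𝕜 := ℝ))
  obtain ⟨C₂, hC₂⟩ := (continuous_lapl hsmooth).bounded_above_of_compact_support
    (hasCompactSupport_lapl β.hasCompactSupport)
  refine ⟨max C₁ C₂, fun n x => ?_⟩
  have hscale : ((n : ℝ) + 1)⁻¹ ≤ 1 := inv_le_one_of_one_le₀ (by simp)
  have hcutoff : cutoff N n = fun x => β (((n : ℝ) + 1)⁻¹ • x) := rfl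
  constructor
  · rw [hcutoff, fderiv_comp_smul, norm_smul, Real.norm_of_nonneg (by positivity), mul_comm]
    gcongr
    exact (hC₁ _).trans (le_max_left _ _)
  · rw [hcutoff, lapl_comp_smul, abs_mul, abs_of_nonneg (by positivity), mul_comm]
    refine mul_le_mul ((hC₂ _).trans (le_max_right _ _)) ?_ (by positivity)
      ((norm_nonneg _).trans ((hC₂ 0).trans (le_max_right _ _)))
    exact pow_le_of_le_one (by positivity) hscale two_ne_zero

end Cutoff

section Energy

variable {N : ℕ} {q a b t : ℝ} {u φ : Euc N → ℝ → ℝ} {K : Set (Euc N)} {J : Set ℝ}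
  {χ : Euc N → ℝ}

theorem IsSol.deriv_mul_mul (hu : IsSol N q u K) (ht : 0 < t) {x : Euc N}
    (hφ : ContDiffAt ℝ 2 (fun p : Euc N × ℝ => φ p.1 p.2) (x, t)) (hχ : ContDiffAt ℝ 2 χ x) :
    deriv (fun s => u x s * φ x s * χ x) t =
      (u x t * (deriv (φ x) t + lapl (fun y => φ y t) x) - u x t ^ q * φ x t) * χ x +
      u x t * (2 * ⟪gradient (fun y => φ y t) x, gradient χ x⟫ + φ x t * lapl χ x) +
      (lapl (fun y => u y t) x * (φ x t * χ x) - u x t * lapl (fun y => φ y t * χ y) x) := by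
  have hφx : ContDiffAt ℝ 2 (fun y => φ y t) x :=
    hφ.comp x (f := fun y : Euc N => (y, t)) (by fun_prop)
  have hφt : DifferentiableAt ℝ (φ x) t :=
    (hφ.comp t (f := fun s : ℝ => (x, s)) (by fun_prop)).differentiableAt two_ne_zero
  have hderiv := ((hu.differentiableAt_time (x := x) ht).hasDerivAt.fun_mul
    hφt.hasDerivAt).mul_const (χ x)
  rw [hderiv.deriv, lapl_mul hφx hχ]
  linear_combination (φ x t * χ x) * hu.2.2.1 x t ht

theorem IsSol.hasDerivAt_integral_mul_mul (hu : IsSol N q u K) (hJ : IsOpen J) (hJ0 : J ⊆ Ioi 0)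
    (hφ : ContDiffOn ℝ 2 (fun p : Euc N × ℝ => φ p.1 p.2) (univ ×ˢ J)) (hχ : ContDiff ℝ 2 χ)
    (hc : HasCompactSupport χ) (ht : t ∈ J) :
    HasDerivAt (fun t => ∫ x, u x t * φ x t * χ x)
      (∫ x, deriv (fun s => u x s * φ x s * χ x) t) t := by
  refine hasDerivAt_integral_of_contDiffOn (F := fun t x => u x t * φ x t * χ x) hJ hc ?_
    (fun s _ y hy => by simp [image_eq_zero_of_notMem_tsupport hy]) ht
  have hswap : MapsTo (fun p : ℝ × Euc N => (p.2, p.1)) (J ×ˢ univ) (univ ×ˢ J) :=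
    fun p hp => ⟨mem_univ _, hp.1⟩
  have huφ := (hu.1.mono (prod_mono_right hJ0)).mul hφ
  exact ((huφ.comp (by fun_prop) hswap).mul (hχ.comp contDiff_snd).contDiffOn).of_le one_le_two

theorem IsSol.integral_deriv_mul_mul_le (hu : IsSol N q u K) (ht : 0 < t)
    (hφ : ∀ x, ContDiffAt ℝ 2 (fun p : Euc N × ℝ => φ p.1 p.2) (x, t)) (hχ : ContDiff ℝ 2 χ)
    (hc : HasCompactSupport χ) {B : Euc N → ℝ} (hB : Integrable B) (hB0 : ∀ x, 0 ≤ B x)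
    (hle : ∀ x, (u x t * (deriv (φ x) t + lapl (fun y => φ y t) x) - u x t ^ q * φ x t) * χ x +
      u x t * (2 * ⟪gradient (fun y => φ y t) x, gradient χ x⟫ + φ x t * lapl χ x) ≤ B x) :
    ∫ x, deriv (fun s => u x s * φ x s * χ x) t ≤ ∫ x, B x := by
  by_cases hinteg : Integrable fun x => deriv (fun s => u x s * φ x s * χ x) t
  swap
  · rw [integral_undef hinteg]
    exact integral_nonneg hB0
  have hux := hu.contDiff_space ht
  have hφχ : ContDiff ℝ 2 fun x => φ x t * χ x := contDiff_iff_contDiffAt.2 fun x =>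
    ((hφ x).comp x (f := fun y : Euc N => (y, t)) (by fun_prop)).mul hχ.contDiffAt
  have hφχc : HasCompactSupport fun x => φ x t * χ x := hc.mul_left
  have hinteg₁ : Integrable fun x => lapl (fun y => u y t) x * (φ x t * χ x) :=
    ((continuous_lapl hux).mul hφχ.continuous).integrable_of_hasCompactSupport hφχc.mul_left
  have hinteg₂ : Integrable fun x => u x t * lapl (fun y => φ y t * χ y) x :=
    (hux.continuous.mul (continuous_lapl hφχ)).integrable_of_hasCompactSupport
      (hasCompactSupport_lapl hφχc).mul_left
  calc ∫ x, deriv (fun s => u x s * φ x s * χ x) t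
      ≤ ∫ x, (B x + (lapl (fun y => u y t) x * (φ x t * χ x) -
          u x t * lapl (fun y => φ y t * χ y) x)) := by
        refine integral_mono hinteg (hB.add (hinteg₁.sub hinteg₂)) fun x => ?_
        rw [hu.deriv_mul_mul ht (hφ x) hχ.contDiffAt]
        gcongr
        exact hle x
    _ = ∫ x, B x := by
        rw [integral_add hB (by exact hinteg₁.sub hinteg₂), integral_sub hinteg₁ hinteg₂,
          integral_lapl_mul hux hφχ hφχc, sub_self, add_zero]

theorem mul_add_mul_inner_gradient_add_le {f χ : Euc N → ℝ} {x : Euc N} {A H v U g δ : ℝ}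
    (hAH : A ≤ H) (hH : 0 ≤ H) (hv : 0 ≤ v) (hvU : v ≤ U) (hf : |f x| ≤ g)
    (hf' : ‖fderiv ℝ f x‖ ≤ g) (hχ0 : 0 ≤ χ x) (hχ1 : χ x ≤ 1) (hχ' : ‖fderiv ℝ χ x‖ ≤ δ)
    (hχ'' : |lapl χ x| ≤ δ) :
    A * χ x + v * (2 * ⟪gradient f x, gradient χ x⟫ + f x * lapl χ x) ≤
      H + U * (3 * δ) * g := by
  have hg : 0 ≤ g := (abs_nonneg _).trans hf
  have hinner : ⟪gradient f x, gradient χ x⟫ ≤ g * δ :=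
    (le_abs_self _).trans ((abs_inner_gradient_le f χ x).trans
      (mul_le_mul hf' hχ' (norm_nonneg _) hg))
  have hlapl : f x * lapl χ x ≤ g * δ :=
    (le_abs_self _).trans ((abs_mul _ _).trans_le (mul_le_mul hf hχ'' (abs_nonneg _) hg))
  have hδ : 0 ≤ δ := (norm_nonneg _).trans hχ'
  calc A * χ x + v * (2 * ⟪gradient f x, gradient χ x⟫ + f x * lapl χ x)
      ≤ H * χ x + v * (2 * (g * δ) + g * δ) := by gcongr
    _ ≤ H * 1 + U * (2 * (g * δ) + g * δ) := by gcongr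
    _ = H + U * (3 * δ) * g := by ring

theorem IsSol.tendsto_integral_mul_cutoff (hu : IsSol N q u K) (ht : 0 < t) {U : ℝ}
    (hU : ∀ x, u x t ≤ U) {f g : Euc N → ℝ} (hf : Continuous f) (hg : Integrable g)
    (hfg : ∀ x, |f x| ≤ g x) :
    Tendsto (fun n => ∫ x, u x t * f x * cutoff N n x) atTop (𝓝 (∫ x, u x t * f x)) := by
  have hcont := (hu.contDiff_space ht).continuous.mul hf
  refine tendsto_integral_of_dominated_convergence (fun x => U * g x)
    (fun n => (hcont.mul (contDiff_cutoff N n).continuous).aestronglyMeasurable)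
    (hg.const_mul U) (fun n => Eventually.of_forall fun x => ?_)
    (Eventually.of_forall fun x => by simpa using (tendsto_cutoff x).const_mul (u x t * f x))
  have hu0 := (hu.2.1 x t ht).le
  rw [norm_mul, norm_mul, Real.norm_of_nonneg hu0, Real.norm_of_nonneg (cutoff_nonneg n x)]
  calc u x t * ‖f x‖ * cutoff N n x ≤ u x t * ‖f x‖ :=
        mul_le_of_le_one_right (by positivity) (cutoff_le_one n x)
    _ ≤ U * g x := mul_le_mul (hU x) (hfg x) (norm_nonneg _) (hu0.trans (hU x))

theorem IsSol.integral_mul_mul_sub_le (hu : IsSol N q u K) (ha : 0 < a) (hab : a ≤ b)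
    (hJ : IsOpen J) (hJ0 : J ⊆ Ioi 0) (habJ : Icc a b ⊆ J)
    (hφ : ContDiffOn ℝ 2 (fun p : Euc N × ℝ => φ p.1 p.2) (univ ×ˢ J))
    (hχ : ContDiff ℝ 2 χ) (hc : HasCompactSupport χ) {B : Euc N → ℝ → ℝ}
    (hB0 : ∀ t ∈ Icc a b, ∀ x, 0 ≤ B x t) (hB : ∀ t ∈ Icc a b, Integrable fun x => B x t)
    (hBI : IntegrableOn (fun t => ∫ x, B x t) (Icc a b))
    (hle : ∀ t ∈ Icc a b, ∀ x,
      (u x t * (deriv (φ x) t + lapl (fun y => φ y t) x) - u x t ^ q * φ x t) * χ x +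
      u x t * (2 * ⟪gradient (fun y => φ y t) x, gradient χ x⟫ + φ x t * lapl χ x) ≤ B x t) :
    (∫ x, u x b * φ x b * χ x) - ∫ x, u x a * φ x a * χ x ≤ ∫ t in a..b, ∫ x, B x t := by
  have hderiv (t : ℝ) (ht : t ∈ Icc a b) :=
    hu.hasDerivAt_integral_mul_mul hJ hJ0 hφ hχ hc (habJ ht)
  refine intervalIntegral.sub_le_integral_of_hasDeriv_right_of_le hab
    (fun t ht => (hderiv t ht).continuousAt.continuousWithinAt)
    (fun t ht => (hderiv t (Ioo_subset_Icc_self ht)).hasDerivWithinAt) hBI fun t ht => ?_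
  have ht' := Ioo_subset_Icc_self ht
  exact hu.integral_deriv_mul_mul_le (ha.trans ht.1)
    (fun x => hφ.contDiffAt ((isOpen_univ.prod hJ).mem_nhds ⟨mem_univ x, habJ ht'⟩)) hχ hc
    (hB t ht') (hB0 t ht') (hle t ht')

theorem IsSol.integral_mul_mul_sub_le_add (hu : IsSol N q u K) (ha : 0 < a) (hab : a ≤ b)
    (hJ : IsOpen J) (hJ0 : J ⊆ Ioi 0) (habJ : Icc a b ⊆ J)
    (hφ : ContDiffOn ℝ 2 (fun p : Euc N × ℝ => φ p.1 p.2) (univ ×ˢ J))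
    (hχ : ContDiff ℝ 2 χ) (hc : HasCompactSupport χ) (hχ0 : ∀ x, 0 ≤ χ x) (hχ1 : ∀ x, χ x ≤ 1)
    {δ : ℝ} (hχ' : ∀ x, ‖fderiv ℝ χ x‖ ≤ δ) (hχ'' : ∀ x, |lapl χ x| ≤ δ)
    {U : ℝ} (hU : ∀ t ∈ Icc a b, ∀ x, u x t ≤ U)
    {g : Euc N → ℝ} (hg : Integrable g) (hφg : ∀ t ∈ Icc a b, ∀ x, |φ x t| ≤ g x)
    (hφg' : ∀ t ∈ Icc a b, ∀ x, ‖fderiv ℝ (fun y => φ y t) x‖ ≤ g x)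
    {H : Euc N → ℝ → ℝ} (hH0 : ∀ t ∈ Icc a b, ∀ x, 0 ≤ H x t)
    (hH : ∀ t ∈ Icc a b, Integrable fun x => H x t)
    (hHI : IntegrableOn (fun t => ∫ x, H x t) (Icc a b))
    (hle : ∀ t ∈ Icc a b, ∀ x,
      u x t * (deriv (φ x) t + lapl (fun y => φ y t) x) - u x t ^ q * φ x t ≤ H x t) :
    (∫ x, u x b * φ x b * χ x) - ∫ x, u x a * φ x a * χ x ≤
      (∫ t in a..b, ∫ x, H x t) + U * (3 * δ) * ((b - a) * ∫ x, g x) := by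
  have haI := left_mem_Icc.2 hab
  have hg0 (x : Euc N) : 0 ≤ g x := (abs_nonneg _).trans (hφg a haI x)
  have hU0 : 0 ≤ U := (hu.2.1 0 a ha).le.trans (hU a haI 0)
  have hδ0 : 0 ≤ δ := (norm_nonneg _).trans (hχ' 0)
  have hBint {t : ℝ} (ht : t ∈ Icc a b) :
      ∫ x, (H x t + U * (3 * δ) * g x) = (∫ x, H x t) + U * (3 * δ) * ∫ x, g x := by
    rw [integral_add (hH t ht) (hg.const_mul _), integral_const_mul]
  calc (∫ x, u x b * φ x b * χ x) - ∫ x, u x a * φ x a * χ x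
      ≤ ∫ t in a..b, ∫ x, (H x t + U * (3 * δ) * g x) := by
        refine hu.integral_mul_mul_sub_le ha hab hJ hJ0 habJ hφ hχ hc
          (fun t ht x => add_nonneg (hH0 t ht x) (mul_nonneg (by positivity) (hg0 x)))
          (fun t ht => (hH t ht).add (hg.const_mul _)) ?_ fun t ht x => ?_
        · exact (hHI.add (integrableOn_const (C := U * (3 * δ) * ∫ x, g x) (by simp))).congr_fun
            (fun t ht => (hBint ht).symm) measurableSet_Icc
        · exact mul_add_mul_inner_gradient_add_le (hle t ht x) (hH0 t ht x)
            (hu.2.1 x t (ha.trans_le ht.1)).le (hU t ht x) (hφg t ht x) (hφg' t ht x)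
            (hχ0 x) (hχ1 x) (hχ' x) (hχ'' x)
    _ = (∫ t in a..b, ∫ x, H x t) + U * (3 * δ) * ((b - a) * ∫ x, g x) := by
        rw [intervalIntegral.integral_congr fun t ht => hBint (by rwa [uIcc_of_le hab] at ht),
          intervalIntegral.integral_add ((intervalIntegrable_iff_integrableOn_Icc_of_le hab).2 hHI)
          intervalIntegrable_const, intervalIntegral.integral_const, smul_eq_mul]
        ring

/-- The test function `φ` need not have compact support: it is enough that `φ` and `∇φ` are
dominated by an integrable function, because `u` is bounded away from the initial time. -/
theorem IsSol.integral_mul_le (hu : IsSol N q u K) (hq : 1 < q) (ha : 0 < a) (hab : a ≤ b)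
    (hJ : IsOpen J) (hJ0 : J ⊆ Ioi 0) (habJ : Icc a b ⊆ J)
    (hφ : ContDiffOn ℝ 2 (fun p : Euc N × ℝ => φ p.1 p.2) (univ ×ˢ J))
    {g : Euc N → ℝ} (hg : Integrable g) (hφg : ∀ t ∈ Icc a b, ∀ x, |φ x t| ≤ g x)
    (hφg' : ∀ t ∈ Icc a b, ∀ x, ‖fderiv ℝ (fun y => φ y t) x‖ ≤ g x)
    {H : Euc N → ℝ → ℝ} (hH0 : ∀ t ∈ Icc a b, ∀ x, 0 ≤ H x t)
    (hH : ∀ t ∈ Icc a b, Integrable fun x => H x t)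
    (hHI : IntegrableOn (fun t => ∫ x, H x t) (Icc a b))
    (hle : ∀ t ∈ Icc a b, ∀ x,
      u x t * (deriv (φ x) t + lapl (fun y => φ y t) x) - u x t ^ q * φ x t ≤ H x t) :
    ∫ x, u x b * φ x b ≤ (∫ x, u x a * φ x a) + ∫ t in a..b, ∫ x, H x t := by
  obtain ⟨U, hU⟩ := hu.exists_forall_le hq ha
  obtain ⟨C, hC⟩ := exists_cutoff_deriv_le N
  have hcut (n : ℕ) := hu.integral_mul_mul_sub_le_add ha hab hJ hJ0 habJ hφ (contDiff_cutoff N n)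
    (hasCompactSupport_cutoff N n) (cutoff_nonneg n) (cutoff_le_one n) (fun x => (hC n x).1)
    (fun x => (hC n x).2) (fun t ht x => hU x t ht.1) hg hφg hφg' hH0 hH hHI hle
  have hleft (t : ℝ) (ht : t ∈ Icc a b) := hu.tendsto_integral_mul_cutoff (ha.trans_le ht.1)
    (fun x => hU x t ht.1) (hφ.continuousOn.comp_continuous (f := fun x => (x, t)) (by fun_prop)
      fun x => ⟨mem_univ x, habJ ht⟩) hg (hφg t ht)
  have hδ : Tendsto (fun n : ℕ => U * (3 * (C * ((n : ℝ) + 1)⁻¹))) atTop (𝓝 0) := by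
    simpa using ((tendsto_one_div_add_atTop_nhds_zero_nat (𝕜 := ℝ)).const_mul C).const_mul
      3 |>.const_mul U
  have hright := (hδ.mul_const ((b - a) * ∫ x, g x)).const_add (∫ t in a..b, ∫ x, H x t)
  rw [zero_mul, add_zero] at hright
  rw [← sub_le_iff_le_add']
  exact le_of_tendsto_of_tendsto' ((hleft b (right_mem_Icc.2 hab)).sub
    (hleft a (left_mem_Icc.2 hab))) hright hcut

end Energy

/-! ### Comparison with the heat semigroup -/

section HeatKernelComparison

variable {N : ℕ} {q s t T σ : ℝ} {u : Euc N → ℝ → ℝ} {K : Set (Euc N)}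

theorem exists_sub_mul_norm_sq_le {f : Euc N → ℝ} {x : Euc N} (hf0 : ∀ y, 0 ≤ f y)
    (hf : ContinuousAt f x) {ε : ℝ} (hε : 0 < ε) :
    ∃ M ≥ 0, ∀ y, f x - ε - M * ‖y - x‖ ^ 2 ≤ f y := by
  obtain ⟨δ, hδ, hball⟩ := Metric.continuousAt_iff.1 hf ε hε
  have hM : 0 ≤ f x / δ ^ 2 := div_nonneg (hf0 x) (sq_nonneg δ)
  refine ⟨f x / δ ^ 2, hM, fun y => ?_⟩
  rcases lt_or_ge (dist y x) δ with hy | hy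
  · have hclose := (abs_lt.1 (hball hy)).1
    have : 0 ≤ f x / δ ^ 2 * ‖y - x‖ ^ 2 := by positivity
    linarith
  · have : f x ≤ f x / δ ^ 2 * ‖y - x‖ ^ 2 := by
      rw [div_mul_eq_mul_div, le_div_iff₀ (by positivity)]
      rw [dist_eq_norm] at hy
      gcongr
      exact hf0 x
    linarith [hf0 y]

theorem exists_sub_le_integral_mul_heatKernel {f : Euc N → ℝ} {x : Euc N} (hf0 : ∀ y, 0 ≤ f y)
    (hf : ContinuousAt f x) {ε : ℝ} (hε : 0 < ε) :
    ∃ C, ∀ σ > 0, Integrable (fun y => f y * heatKernel N (y - x) σ) →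
      f x - ε - C * σ ≤ ∫ y, f y * heatKernel N (y - x) σ := by
  obtain ⟨M, hM, hlow⟩ := exists_sub_mul_norm_sq_le hf0 hf hε
  refine ⟨M * (8 * 2 ^ ((N : ℝ) / 2)), fun σ hσ hinteg => ?_⟩
  have hinteg₀ := ((integrable_heatKernel (N := N) hσ).comp_sub_right x).const_mul (f x - ε)
  have hinteg₂ := ((integrable_norm_sq_mul_heatKernel (N := N) hσ).comp_sub_right x).const_mul M
  calc f x - ε - M * (8 * 2 ^ ((N : ℝ) / 2)) * σ
      = (f x - ε) * 1 - M * (8 * 2 ^ ((N : ℝ) / 2) * σ) := by ring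
    _ ≤ (f x - ε) * (∫ y, heatKernel N (y - x) σ) -
          M * ∫ y, ‖y - x‖ ^ 2 * heatKernel N (y - x) σ := by
        rw [integral_sub_right_eq_self (fun y => heatKernel N y σ), integral_heatKernel hσ,
          integral_sub_right_eq_self (fun y : Euc N => ‖y‖ ^ 2 * heatKernel N y σ)]
        gcongr
        exact integral_norm_sq_mul_heatKernel_le hσ
    _ = ∫ y, ((f x - ε) * heatKernel N (y - x) σ -
          M * (‖y - x‖ ^ 2 * heatKernel N (y - x) σ)) := by
        rw [integral_sub hinteg₀ hinteg₂, integral_const_mul, integral_const_mul]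
    _ ≤ ∫ y, f y * heatKernel N (y - x) σ := by
        refine integral_mono (hinteg₀.sub hinteg₂) hinteg fun y => ?_
        linarith [mul_le_mul_of_nonneg_right (hlow y) (heatKernel_pos (y - x) hσ).le]

theorem IsSol.integrable_mul_heatKernel_sub (hu : IsSol N q u K) (hq : 1 < q) (hs : 0 < s)
    (ht : 0 < t) (x : Euc N) : Integrable fun y => u y s * heatKernel N (y - x) t := by
  obtain ⟨U, hU⟩ := hu.exists_forall_le hq hs
  refine ((integrable_heatKernel ht).comp_sub_right x).bdd_mul
    (hu.contDiff_space hs).continuous.aestronglyMeasurable (c := U) (.of_forall fun y => ?_)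
  rw [Real.norm_of_nonneg (hu.2.1 y s hs).le]
  exact hU y s le_rfl

theorem deriv_heatKernel_sub_time_add_lapl (hst : s < T) (x y : Euc N) :
    deriv (fun t => heatKernel N (y - x) (T - t)) s +
      lapl (fun z => heatKernel N (z - x) (T - s)) y = 0 := by
  have hderiv := (hasDerivAt_heatKernel (y - x) (sub_pos.2 hst)).comp s
    ((hasDerivAt_id' s).const_sub T)
  rw [Function.comp_def] at hderiv
  rw [hderiv.deriv, lapl_heatKernel_sub (sub_pos.2 hst)]
  ring

theorem exists_integrable_heatKernel_sub_time_le (hst : s ≤ t) (htT : t < T) (x : Euc N) :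
    ∃ g : Euc N → ℝ, Integrable g ∧ ∀ τ ∈ Icc s t, ∀ y,
      |heatKernel N (y - x) (T - τ)| ≤ g y ∧
        ‖fderiv ℝ (fun z => heatKernel N (z - x) (T - τ)) y‖ ≤ g y := by
  have hd : 0 < T - t := sub_pos.2 htT
  have hD : 0 < T - s := sub_pos.2 (hst.trans_lt htT)
  set c := √(8 * (T - s)) * 2 ^ ((N : ℝ) / 2) / (2 * (T - t))
  set G : Euc N → ℝ := fun y =>
    (2 * (T - s) / (T - t)) ^ ((N : ℝ) / 2) * heatKernel N (y - x) (2 * (T - s))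
  have hc : 0 ≤ c := by positivity
  have hG (y : Euc N) : 0 ≤ G y :=
    mul_nonneg (by positivity) (heatKernel_pos (y - x) (mul_pos two_pos hD)).le
  have hle {τ : ℝ} (hτ : T - t ≤ τ) (hτ' : τ ≤ 2 * (T - s)) (y : Euc N) :
      heatKernel N (y - x) τ ≤ G y := heatKernel_le_mul_of_le hd hτ hτ' _
  refine ⟨fun y => (1 + c) * G y, (((integrable_heatKernel (mul_pos two_pos hD)).comp_sub_right
    x).const_mul _).const_mul _, fun τ hτ y => ⟨?_, ?_⟩⟩
  · rw [abs_of_pos (heatKernel_pos _ (by linarith [hτ.2]))]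
    exact (hle (by linarith [hτ.2]) (by linarith [hτ.1]) y).trans
      (le_mul_of_one_le_left (hG y) (le_add_of_nonneg_right hc))
  · have hτ0 : 0 < T - τ := by linarith [hτ.2]
    rw [fderiv_comp_sub (f := fun z => heatKernel N z (T - τ))]
    calc ‖fderiv ℝ (fun z => heatKernel N z (T - τ)) (y - x)‖
        ≤ √(8 * (T - τ)) * 2 ^ ((N : ℝ) / 2) / (2 * (T - τ)) *
            heatKernel N (y - x) (2 * (T - τ)) := norm_fderiv_heatKernel_le hτ0 _
      _ ≤ c * G y := by
          refine mul_le_mul ?_ (hle (by linarith [hτ.2]) (by linarith [hτ.1]) y)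
            (heatKernel_pos _ (mul_pos two_pos hτ0)).le hc
          simp only [c]
          gcongr
          exacts [hτ.1, hτ.2]
      _ ≤ (1 + c) * G y := by
          gcongr
          exacts [hG y, le_add_of_nonneg_left zero_le_one]

theorem IsSol.integral_mul_heatKernel_le (hu : IsSol N q u K) (hq : 1 < q) (hs : 0 < s)
    (hst : s ≤ t) (hσ : 0 < σ) (x : Euc N) :
    ∫ y, u y t * heatKernel N (y - x) σ ≤ ∫ y, u y s * heatKernel N (y - x) (t + σ - s) := by
  obtain ⟨g, hg, hle⟩ := exists_integrable_heatKernel_sub_time_le hst (lt_add_of_pos_right t hσ) x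
  have henergy := hu.integral_mul_le hq hs hst (isOpen_Ioo (a := 0) (b := t + σ))
    (φ := fun y τ => heatKernel N (y - x) (t + σ - τ)) (H := fun _ _ => 0) (g := g)
    Ioo_subset_Ioi_self (Icc_subset_Ioo hs (lt_add_of_pos_right t hσ)) (fun p hp => ?_) hg
    (fun τ hτ y => (hle τ hτ y).1) (fun τ hτ y => (hle τ hτ y).2) (fun _ _ _ => le_rfl)
    (fun _ _ => integrable_zero _ _ _) (by simp) (fun τ hτ y => ?_)
  · simpa using henergy
  · exact ((contDiffAt_heatKernel (p := (p.1 - x, t + σ - p.2)) (sub_pos.2 hp.2.2)).comp p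
      (f := fun p : Euc N × ℝ => (p.1 - x, t + σ - p.2)) (by fun_prop)).contDiffWithinAt
  · have hτσ : τ < t + σ := by linarith [hτ.2]
    rw [deriv_heatKernel_sub_time_add_lapl hτσ, mul_zero, zero_sub, neg_nonpos]
    exact mul_nonneg (Real.rpow_nonneg (hu.2.1 y τ (hs.trans_le hτ.1)).le _)
      (heatKernel_pos _ (sub_pos.2 hτσ)).le

theorem IsSol.tendsto_integral_mul_heatKernel (hu : IsSol N q u K) (hq : 1 < q) (hs : 0 < s)
    (ht : 0 < t) (x : Euc N) :
    Tendsto (fun σ => ∫ y, u y s * heatKernel N (y - x) (t + σ)) (𝓝[>] 0)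
      (𝓝 (∫ y, u y s * heatKernel N (y - x) t)) := by
  have hcont (y : Euc N) : Tendsto (fun σ => heatKernel N (y - x) (t + σ)) (𝓝[>] 0)
      (𝓝 (heatKernel N (y - x) t)) := by
    have hat : ContinuousAt (heatKernel N (y - x)) (t + 0) := by
      rw [add_zero]
      exact (hasDerivAt_heatKernel (y - x) ht).continuousAt
    have hcomp := (hat.comp (f := fun σ => t + σ) (by fun_prop)).tendsto
    rw [Function.comp_apply, add_zero] at hcomp
    exact hcomp.mono_left nhdsWithin_le_nhds
  refine tendsto_integral_filter_of_dominated_convergence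
    (fun y => ((2 * t) / t) ^ ((N : ℝ) / 2) * (u y s * heatKernel N (y - x) (2 * t))) ?_ ?_
    ((hu.integrable_mul_heatKernel_sub hq hs (by positivity) x).const_mul _)
    (.of_forall fun y => (hcont y).const_mul _)
  · filter_upwards [self_mem_nhdsWithin] with σ hσ
    exact (hu.integrable_mul_heatKernel_sub hq hs (add_pos ht hσ) x).aestronglyMeasurable
  · filter_upwards [Ioo_mem_nhdsGT ht] with σ hσ
    refine .of_forall fun y => ?_
    have hu0 := (hu.2.1 y s hs).le
    rw [Real.norm_of_nonneg (mul_nonneg hu0 (heatKernel_pos _ (add_pos ht hσ.1)).le),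
      mul_left_comm]
    gcongr
    exact heatKernel_le_mul_of_le ht (by linarith [hσ.1]) (by linarith [hσ.2]) _

theorem IsSol.le_integral_mul_heatKernel (hu : IsSol N q u K) (hq : 1 < q) (hs : 0 < s)
    (hst : s < t) (x : Euc N) : u x t ≤ ∫ y, u y s * heatKernel N (y - x) (t - s) := by
  have ht := hs.trans hst
  refine le_of_forall_pos_le_add fun ε hε => ?_
  obtain ⟨C, hC⟩ := exists_sub_le_integral_mul_heatKernel (f := fun y => u y t)
    (fun y => (hu.2.1 y t ht).le) (hu.contDiff_space ht).continuous.continuousAt (x := x) hε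
  have hle : ∀ σ > 0, u x t - ε - C * σ ≤ ∫ y, u y s * heatKernel N (y - x) (t - s + σ) := by
    intro σ hσ
    rw [← add_sub_right_comm]
    exact (hC σ hσ (hu.integrable_mul_heatKernel_sub hq ht hσ x)).trans
      (hu.integral_mul_heatKernel_le hq hs hst.le hσ x)
  have hlim : Tendsto (fun σ => u x t - ε - C * σ) (𝓝[>] 0) (𝓝 (u x t - ε)) := by
    refine Tendsto.mono_left (Continuous.tendsto' (by fun_prop) _ _ ?_) nhdsWithin_le_nhds
    rw [mul_zero, sub_zero]
  rw [← sub_le_iff_le_add]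
  exact le_of_tendsto_of_tendsto hlim
    (hu.tendsto_integral_mul_heatKernel hq hs (sub_pos.2 hst) x)
    (eventually_mem_nhdsWithin.mono hle)

end HeatKernelComparison

/-! ### Test functions for the weighted estimate -/

/-- The polynomial weight `(1 + ε|x|²)^{-N}`. It is integrable for `ε > 0` and increases to `1`
as `ε → 0`. -/
def polyWeight (N : ℕ) (ε : ℝ) (x : Euc N) : ℝ :=
  (1 + ε * ‖x‖ ^ 2) ^ (-(N : ℝ))

section PolyWeight

variable {N : ℕ} {ε : ℝ}

theorem polyWeight_pos (hε : 0 ≤ ε) (x : Euc N) : 0 < polyWeight N ε x :=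
  Real.rpow_pos_of_pos (by positivity) _

theorem polyWeight_le_one (hε : 0 ≤ ε) (x : Euc N) : polyWeight N ε x ≤ 1 :=
  Real.rpow_le_one_of_one_le_of_nonpos (le_add_of_nonneg_right (by positivity))
    (neg_nonpos.2 N.cast_nonneg)

theorem contDiff_polyWeight (hε : 0 ≤ ε) : ContDiff ℝ 2 (polyWeight N ε) :=
  (contDiff_const.add (contDiff_const.mul (contDiff_norm_sq ℝ))).rpow_const_of_ne
    fun x => (by positivity : (0 : ℝ) < 1 + ε * ‖x‖ ^ 2).ne'

theorem integrable_polyWeight (hN : 1 ≤ N) (hε : 0 < ε) : Integrable (polyWeight N ε) := by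
  have hdim : (Module.finrank ℝ (Euc N) : ℝ) < 2 * N := by
    rw [finrank_euclideanSpace_fin]
    have : (1 : ℝ) ≤ N := mod_cast hN
    linarith
  have hweight : Integrable fun x : Euc N => (1 + ‖x‖ ^ 2) ^ (-(2 * (N : ℝ)) / 2) :=
    integrable_rpow_neg_one_add_norm_sq hdim
  refine (hweight.comp_smul (Real.sqrt_pos.2 hε).ne').congr (.of_forall fun x => ?_)
  dsimp only
  rw [norm_smul, mul_pow, Real.norm_of_nonneg (Real.sqrt_nonneg ε), Real.sq_sqrt hε.le,
    neg_div, mul_div_cancel_left₀ _ two_ne_zero, polyWeight]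

theorem hasDerivAt_one_add_mul_rpow {a s : ℝ} (h : 0 < 1 + ε * s) :
    HasDerivAt (fun s => (1 + ε * s) ^ a) (ε * a * (1 + ε * s) ^ (a - 1)) s := by
  simpa using (((hasDerivAt_id s).const_mul ε).const_add 1).rpow_const (p := a) (.inl h.ne')

theorem norm_fderiv_polyWeight_le (hε : 0 ≤ ε) (x : Euc N) :
    ‖fderiv ℝ (polyWeight N ε) x‖ ≤ N * √ε * polyWeight N ε x := by
  set s : ℝ := 1 + ε * ‖x‖ ^ 2
  have hs0 : 0 < s := by positivity
  have hderiv := (hasDerivAt_one_add_mul_rpow (a := -(N : ℝ)) hs0).comp_hasFDerivAt x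
    (hasStrictFDerivAt_norm_sq x).hasFDerivAt
  have hnorm : ‖fderiv ℝ (polyWeight N ε) x‖ = ε * N * s ^ (-(N : ℝ) - 1) * (2 * ‖x‖) := by
    rw [show polyWeight N ε = (fun s => (1 + ε * s) ^ (-(N : ℝ))) ∘ fun x => ‖x‖ ^ 2 from rfl,
      hderiv.fderiv, norm_smul, ← Nat.cast_smul_eq_nsmul ℝ, norm_smul, innerSL_apply_norm,
      Real.norm_eq_abs, Real.norm_eq_abs, mul_neg, neg_mul, abs_neg,
      abs_of_nonneg (by positivity), Nat.abs_cast, Nat.cast_ofNat]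
  have hamgm : 2 * (√ε * ‖x‖) ≤ s := by
    have := two_mul_le_add_sq 1 (√ε * ‖x‖)
    rw [mul_pow, Real.sq_sqrt hε] at this
    linarith
  calc ‖fderiv ℝ (polyWeight N ε) x‖ = N * √ε * s ^ (-(N : ℝ) - 1) * (2 * (√ε * ‖x‖)) := by
        rw [hnorm]
        linear_combination (-2 * N * s ^ (-(N : ℝ) - 1) * ‖x‖) * Real.mul_self_sqrt hε
    _ ≤ N * √ε * s ^ (-(N : ℝ) - 1) * s := by gcongr
    _ = N * √ε * polyWeight N ε x := by
      rw [mul_assoc, ← Real.rpow_add_one hs0.ne', sub_add_cancel, polyWeight]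

theorem lapl_polyWeight_le (hε : 0 ≤ ε) (x : Euc N) :
    lapl (polyWeight N ε) x ≤ N * (N + 1) * ε * polyWeight N ε x := by
  set s : ℝ := 1 + ε * ‖x‖ ^ 2
  have hs0 : 0 < s := by positivity
  have hev : ∀ᶠ r in 𝓝 (‖x‖ ^ 2), 0 < 1 + ε * r :=
    ContinuousAt.eventually_lt continuousAt_const (by fun_prop) hs0
  have hlapl := lapl_radial (N := N) 0 x (φ := fun r => (1 + ε * r) ^ (-(N : ℝ)))
    (by rw [sub_zero]; exact hev.mono fun r hr => hasDerivAt_one_add_mul_rpow hr)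
    ((hasDerivAt_one_add_mul_rpow (by rwa [sub_zero])).const_mul (ε * -(N : ℝ)))
  simp only [sub_zero] at hlapl
  have hpow : s ^ (-(N : ℝ) - 1 - 1) * s ^ 2 = s ^ (-(N : ℝ)) := by
    rw [← Real.rpow_natCast, ← Real.rpow_add hs0]
    congr 1
    push_cast
    ring
  calc lapl (polyWeight N ε) x
      = N * (N + 1) * ε * s ^ (-(N : ℝ) - 1 - 1) * (4 * (ε * ‖x‖ ^ 2)) -
          2 * N * (ε * N * s ^ (-(N : ℝ) - 1)) := hlapl.trans (by ring)
    _ ≤ N * (N + 1) * ε * s ^ (-(N : ℝ) - 1 - 1) * (4 * (ε * ‖x‖ ^ 2)) :=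
      sub_le_self _ (by positivity)
    _ ≤ N * (N + 1) * ε * s ^ (-(N : ℝ) - 1 - 1) * s ^ 2 := by
      gcongr
      linarith [four_mul_le_sq_add 1 (ε * ‖x‖ ^ 2)]
    _ = N * (N + 1) * ε * polyWeight N ε x := by rw [mul_assoc, hpow, polyWeight]

end PolyWeight

/-- The weight `exp(-κεt) (1 + ε|x|²)^{-N}`. The rate `κ = N(N + 1) + pN²` is what makes
`∂ₜω + Δω ≤ -pN²ε ω`, which absorbs the cross term `2∇V·∇ω` in `Δ(Vω)` for a `p`-th power `V`. -/
def parabolicWeight (N : ℕ) (p ε : ℝ) (x : Euc N) (t : ℝ) : ℝ :=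
  Real.exp (-((N * (N + 1) + p * N ^ 2) * ε) * t) * polyWeight N ε x

section ParabolicWeight

variable {N : ℕ} {p ε t : ℝ}

theorem parabolicWeight_pos (hε : 0 ≤ ε) (x : Euc N) : 0 < parabolicWeight N p ε x t :=
  mul_pos (Real.exp_pos _) (polyWeight_pos hε x)

theorem parabolicWeight_le_polyWeight (hp : 0 ≤ p) (hε : 0 ≤ ε) (ht : 0 ≤ t) (x : Euc N) :
    parabolicWeight N p ε x t ≤ polyWeight N ε x :=
  mul_le_of_le_one_left (polyWeight_pos hε x).le
    (Real.exp_le_one_iff.2 (mul_nonpos_of_nonpos_of_nonneg (neg_nonpos.2 (by positivity)) ht))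

theorem contDiff_parabolicWeight (hε : 0 ≤ ε) :
    ContDiff ℝ 2 fun z : Euc N × ℝ => parabolicWeight N p ε z.1 z.2 :=
  (contDiff_const.mul contDiff_snd).exp.mul ((contDiff_polyWeight hε).comp contDiff_fst)

theorem norm_fderiv_parabolicWeight_le (hε : 0 ≤ ε) (x : Euc N) :
    ‖fderiv ℝ (fun y => parabolicWeight N p ε y t) x‖ ≤
      N * √ε * parabolicWeight N p ε x t := by
  unfold parabolicWeight
  rw [fderiv_const_mul ((contDiff_polyWeight hε).differentiable two_ne_zero x), norm_smul,
    Real.norm_of_nonneg (Real.exp_pos _).le, mul_left_comm]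
  exact mul_le_mul_of_nonneg_left (norm_fderiv_polyWeight_le hε x) (Real.exp_pos _).le

theorem deriv_parabolicWeight_add_lapl_le (hε : 0 ≤ ε) (x : Euc N) :
    deriv (parabolicWeight N p ε x) t + lapl (fun y => parabolicWeight N p ε y t) x ≤
      -(p * (N * √ε) ^ 2 * parabolicWeight N p ε x t) := by
  have hderiv : deriv (parabolicWeight N p ε x) t =
      -((N * (N + 1) + p * N ^ 2) * ε) * parabolicWeight N p ε x t := by
    unfold parabolicWeight
    rw [((hasDerivAt_const_mul _).exp.mul_const (polyWeight N ε x)).deriv]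
    ring
  have hlapl : lapl (fun y => parabolicWeight N p ε y t) x ≤
      N * (N + 1) * ε * parabolicWeight N p ε x t := by
    unfold parabolicWeight
    rw [lapl_const_mul _ (contDiff_polyWeight hε).contDiffAt, mul_left_comm]
    exact mul_le_mul_of_nonneg_left (lapl_polyWeight_le hε x) (Real.exp_pos _).le
  rw [hderiv, mul_pow, Real.sq_sqrt hε]
  linear_combination hlapl

end ParabolicWeight

section RpowMul

variable {N : ℕ} {p κ t : ℝ} {f ω : Euc N → ℝ → ℝ} {x : Euc N}

theorem lapl_rpow {f : Euc N → ℝ} (hf : ContDiffAt ℝ 2 f x) (hp : 2 ≤ p) :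
    lapl (fun y => f y ^ p) x =
      p * f x ^ (p - 1) * lapl f x + p * (p - 1) * f x ^ (p - 2) * ‖fderiv ℝ f x‖ ^ 2 := by
  rw [lapl_comp (φ := fun s => s ^ p) hf
    (.of_forall fun s => Real.hasDerivAt_rpow_const (.inr (one_le_two.trans hp)))
    ((Real.hasDerivAt_rpow_const (.inr (by linarith))).const_mul p)]
  ring_nf

theorem norm_fderiv_rpow_mul_le {f ω : Euc N → ℝ} (hf : DifferentiableAt ℝ f x)
    (hf0 : 0 ≤ f x) (hf1 : f x ≤ 1) (hωd : DifferentiableAt ℝ ω x) (hω0 : 0 ≤ ω x)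
    (hω : ‖fderiv ℝ ω x‖ ≤ κ * ω x) (hp : 1 ≤ p) :
    ‖fderiv ℝ (fun y => f y ^ p * ω y) x‖ ≤ (κ + p * ‖fderiv ℝ f x‖) * ω x := by
  have hderiv := (hf.hasFDerivAt.rpow_const (.inr hp)).fun_mul hωd.hasFDerivAt
  rw [hderiv.fderiv]
  refine (norm_add_le _ _).trans ?_
  rw [norm_smul, norm_smul, norm_smul, Real.norm_of_nonneg (Real.rpow_nonneg hf0 p),
    Real.norm_of_nonneg hω0, Real.norm_of_nonneg (by positivity)]
  calc f x ^ p * ‖fderiv ℝ ω x‖ + ω x * (p * f x ^ (p - 1) * ‖fderiv ℝ f x‖)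
      ≤ 1 * (κ * ω x) + ω x * (p * 1 * ‖fderiv ℝ f x‖) := by
        gcongr
        · exact Real.rpow_le_one hf0 hf1 (by linarith)
        · exact Real.rpow_le_one hf0 hf1 (by linarith)
    _ = (κ + p * ‖fderiv ℝ f x‖) * ω x := by ring

theorem two_mul_inner_gradient_rpow_le {f ω : Euc N → ℝ} (hf : DifferentiableAt ℝ f x)
    (hf0 : 0 ≤ f x) (hω0 : 0 ≤ ω x) (hω : ‖fderiv ℝ ω x‖ ≤ κ * ω x) (hp : 2 ≤ p) :
    2 * ⟪gradient (fun y => f y ^ p) x, gradient ω x⟫ ≤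
      p * ω x * (f x ^ (p - 2) * ‖fderiv ℝ f x‖ ^ 2 + κ ^ 2 * f x ^ p) := by
  have hnorm : ‖fderiv ℝ (fun y => f y ^ p) x‖ = p * f x ^ (p - 1) * ‖fderiv ℝ f x‖ := by
    rw [(hf.hasFDerivAt.rpow_const (p := p) (.inr (by linarith))).fderiv, norm_smul,
      Real.norm_of_nonneg (by positivity)]
  have hpow1 : f x ^ (p - 1) = f x ^ (p - 2) * f x := by
    rw [← Real.rpow_add_one' hf0 (by linarith)]
    ring_nf
  have hpow2 : f x ^ p = f x ^ (p - 2) * f x ^ 2 := by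
    rw [← Real.rpow_add_natCast' hf0 (by push_cast; linarith)]
    push_cast
    ring_nf
  calc 2 * ⟪gradient (fun y => f y ^ p) x, gradient ω x⟫
      ≤ 2 * (‖fderiv ℝ (fun y => f y ^ p) x‖ * ‖fderiv ℝ ω x‖) := by
        gcongr
        exact (le_abs_self _).trans (abs_inner_gradient_le _ _ x)
    _ ≤ 2 * (p * f x ^ (p - 1) * ‖fderiv ℝ f x‖ * (κ * ω x)) := by
        rw [hnorm]
        gcongr
    _ = p * ω x * f x ^ (p - 2) * (2 * ‖fderiv ℝ f x‖ * (κ * f x)) := by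
        rw [hpow1]
        ring
    _ ≤ p * ω x * f x ^ (p - 2) * (‖fderiv ℝ f x‖ ^ 2 + (κ * f x) ^ 2) := by
        gcongr
        exact two_mul_le_add_sq _ _
    _ = _ := by
        rw [hpow2]
        ring

theorem deriv_add_lapl_rpow_mul_le (hp : 2 ≤ p) (hft : DifferentiableAt ℝ (f x) t)
    (hfx : ContDiffAt ℝ 2 (fun y => f y t) x) (hf0 : 0 ≤ f x t) (hf1 : f x t ≤ 1)
    (hωt : DifferentiableAt ℝ (ω x) t) (hωx : ContDiffAt ℝ 2 (fun y => ω y t) x)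
    (hω0 : 0 ≤ ω x t) (hω : ‖fderiv ℝ (fun y => ω y t) x‖ ≤ κ * ω x t)
    (hω' : deriv (ω x) t + lapl (fun y => ω y t) x ≤ -(p * κ ^ 2 * ω x t)) :
    deriv (fun s => f x s ^ p * ω x s) t + lapl (fun y => f y t ^ p * ω y t) x ≤
      ω x t * (f x t ^ (p - 2) * (p * |deriv (f x) t + lapl (fun y => f y t) x| +
        p ^ 2 * ‖fderiv ℝ (fun y => f y t) x‖ ^ 2)) := by
  have hcross := two_mul_inner_gradient_rpow_le (hfx.differentiableAt two_ne_zero) hf0 hω0 hω hp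
  have hderiv : deriv (fun s => f x s ^ p * ω x s) t =
      deriv (f x) t * p * f x t ^ (p - 1) * ω x t + f x t ^ p * deriv (ω x) t :=
    ((hft.hasDerivAt.rpow_const (.inr (by linarith))).mul hωt.hasDerivAt).deriv
  have habs : f x t ^ (p - 1) * (deriv (f x) t + lapl (fun y => f y t) x) ≤
      f x t ^ (p - 2) * |deriv (f x) t + lapl (fun y => f y t) x| :=
    (mul_le_mul_of_nonneg_left (le_abs_self _) (Real.rpow_nonneg hf0 _)).trans <|
      mul_le_mul_of_nonneg_right (Real.rpow_le_rpow_of_exponent_ge' hf0 hf1 (by linarith)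
        (by linarith)) (abs_nonneg _)
  rw [hderiv, lapl_mul (hfx.rpow_const_of_le (by exact_mod_cast hp)) hωx, lapl_rpow hfx hp]
  have : 0 ≤ p * ω x t := mul_nonneg (by linarith) hω0
  linear_combination (p * ω x t) * habs + hcross + f x t ^ p * hω'

end RpowMul

/-! ### The initial layer -/

section InitialLayer

variable {N : ℕ} {q p t : ℝ} {u : Euc N → ℝ → ℝ} {η : Euc N → ℝ} {K : Set (Euc N)}

theorem one_sub_heatPot_nonneg (hη : Continuous η) (hc : HasCompactSupport η)
    (h1 : ∀ y, η y ≤ 1) (x : Euc N) (ht : 0 < t) : 0 ≤ 1 - heatPot N η x t :=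
  sub_nonneg.2 (heatPot_le_of_forall_le hη hc h1 x ht)

theorem one_sub_heatPot_le_one (h0 : ∀ y, 0 ≤ η y) (x : Euc N) (ht : 0 < t) :
    1 - heatPot N η x t ≤ 1 :=
  sub_le_self _ (heatPot_nonneg h0 x ht)

theorem mul_rpow_le_of_le_mul_rpow_neg {v φ A B s k : ℝ} (hs : 0 < s) (hk : 0 ≤ k) (hφ : 0 ≤ φ)
    (hA : 0 ≤ A) (hB : 0 ≤ B) (hv : v ≤ A * s ^ (-k)) (hφs : φ ≤ B * s) :
    v * φ ^ k ≤ A * B ^ k :=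
  calc v * φ ^ k ≤ A * s ^ (-k) * (B * s) ^ k := by gcongr
    _ = A * B ^ k * (s ^ (-k) * s ^ k) := by rw [Real.mul_rpow hB hs.le]; ring
    _ = A * B ^ k := by rw [← Real.rpow_add hs, neg_add_cancel, Real.rpow_zero, mul_one]

theorem IsSol.le_mul_rpow_neg (hu : IsSol N q u K) (hq : 1 < q) (ht : 0 < t) (x : Euc N) :
    u x t ≤ ((q - 1) / 2) ^ (-(1 / (q - 1))) * t ^ (-(1 / (q - 1))) := by
  rw [← Real.mul_rpow (div_nonneg (sub_pos.2 hq).le zero_le_two) ht.le]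
  exact (hu.le_rpow_sub hq (half_pos ht) (half_lt_self ht) x).trans_eq (by ring_nf)

theorem IsSol.le_mul_sq_rpow_neg (hu : IsSol N q u K) (hq : 1 < q) (ht : 0 < t) {x : Euc N} {L : ℝ}
    (hL : 0 < L) (hLK : closedBall x L ⊆ Kᶜ) :
    u x t ≤ ossermanConst N q * (L ^ 2) ^ (-(1 / (q - 1))) := by
  rw [← Real.rpow_natCast, ← Real.rpow_mul hL.le, Nat.cast_ofNat, mul_neg, mul_one_div]
  exact hu.le_of_closedBall_subset_compl hq ht hL hLK

theorem IsSol.exists_mul_one_sub_heatPot_rpow_le (hu : IsSol N q u K) (hq : 1 < q)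
    (hη : ContDiff ℝ 2 η) (hc : HasCompactSupport η) (h01 : ∀ y, 0 ≤ η y ∧ η y ≤ 1)
    (hK : ∀ z ∈ K, η z = 1) :
    ∃ D : ℝ, ∀ x t, 0 < t → u x t * (1 - heatPot N η x t) ^ (1 / (q - 1)) ≤ D := by
  have : 0 < q - 1 := sub_pos.2 hq
  have hk : 0 ≤ 1 / (q - 1) := by positivity
  obtain ⟨C, hC, hΦ⟩ := exists_one_sub_heatPot_le hη hc (fun y => (h01 y).2) hK
  have hA := (ossermanConst_pos N hq).le
  set A := ossermanConst N q
  set B : ℝ := ((q - 1) / 2) ^ (-(1 / (q - 1)))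
  refine ⟨max A (max (B * (2 * C) ^ (1 / (q - 1))) (A * (20 * C) ^ (1 / (q - 1)))),
    fun x t ht => ?_⟩
  have hΦ0 := one_sub_heatPot_nonneg hη.continuous hc (fun y => (h01 y).2) x ht
  have hΦ1 := one_sub_heatPot_le_one (fun y => (h01 y).1) x ht
  rcases K.eq_empty_or_nonempty with rfl | hne
  · have hle := hu.le_mul_sq_rpow_neg hq ht (x := x) one_pos (by simp)
    rw [one_pow, Real.one_rpow, mul_one] at hle
    exact ((mul_le_of_le_one_right (hu.2.1 x t ht).le
      (Real.rpow_le_one hΦ0 hΦ1 hk)).trans hle).trans (le_max_left _ _)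
  rcases lt_or_ge (infDist x K) √t with hnear | hfar
  · obtain ⟨z, hz, hxz⟩ := (infDist_lt_iff hne).1 hnear
    have hxz2 : ‖x - z‖ ^ 2 ≤ t :=
      (Real.le_sqrt (norm_nonneg _) ht.le).1 ((dist_eq_norm x z).symm.trans_le hxz.le)
    refine le_max_of_le_right (le_max_of_le_left ?_)
    exact mul_rpow_le_of_le_mul_rpow_neg ht hk hΦ0 (by positivity) (by positivity)
      (hu.le_mul_rpow_neg hq ht x) ((hΦ z hz x t ht).trans (by nlinarith))
  · set d := infDist x K
    have hd : 0 < d := (Real.sqrt_pos.2 ht).trans_le hfar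
    obtain ⟨z, hz, hxz⟩ := (infDist_lt_iff hne).1 (by linarith : d < 2 * d)
    have hxz2 : ‖x - z‖ ^ 2 ≤ (2 * d) ^ 2 :=
      pow_le_pow_left₀ (norm_nonneg _) ((dist_eq_norm x z).symm.trans_le hxz.le) 2
    have htd : t ≤ d ^ 2 := (Real.sqrt_le_left hd.le).1 hfar
    have hball : closedBall x (d / 2) ⊆ Kᶜ := fun y hy hyK =>
      (half_lt_self hd).not_ge ((infDist_le_dist_of_mem hyK).trans (mem_closedBall'.1 hy))
    refine le_max_of_le_right (le_max_of_le_right ?_)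
    exact mul_rpow_le_of_le_mul_rpow_neg (by positivity) hk hΦ0 hA (by positivity)
      (hu.le_mul_sq_rpow_neg hq ht (half_pos hd) hball) ((hΦ z hz x t ht).trans (by nlinarith))

theorem IsSol.tendsto_mul_one_sub_heatPot_rpow (hu : IsSol N q u K) (hq : 1 < q)
    (hη : ContDiff ℝ 2 η) (hc : HasCompactSupport η) (h01 : ∀ y, 0 ≤ η y ∧ η y ≤ 1)
    (hK : ∀ z ∈ K, η z = 1) (hp : 1 / (q - 1) < p) (x : Euc N) :
    Tendsto (fun t => u x t * (1 - heatPot N η x t) ^ p) (𝓝[>] 0) (𝓝 0) := by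
  have hk : 0 < 1 / (q - 1) := one_div_pos.2 (sub_pos.2 hq)
  have hΦ0 {t : ℝ} (ht : 0 < t) := one_sub_heatPot_nonneg hη.continuous hc (fun y => (h01 y).2) x ht
  have hnonneg : ∀ᶠ t in 𝓝[>] 0, 0 ≤ u x t * (1 - heatPot N η x t) ^ p :=
    eventually_mem_nhdsWithin.mono fun t ht =>
      mul_nonneg (hu.2.1 x t ht).le (Real.rpow_nonneg (hΦ0 ht) _)
  by_cases hx : x ∈ K
  · obtain ⟨C, -, hΦ⟩ := exists_one_sub_heatPot_le hη hc (fun y => (h01 y).2) hK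
    obtain ⟨D, hD⟩ := hu.exists_mul_one_sub_heatPot_rpow_le hq hη hc h01 hK
    have hΦt : Tendsto (fun t => 1 - heatPot N η x t) (𝓝[>] 0) (𝓝 0) := by
      have hlim : Tendsto (fun t : ℝ => C * t) (𝓝[>] 0) (𝓝 0) :=
        (Continuous.tendsto' (by fun_prop) 0 0 (mul_zero C)).mono_left nhdsWithin_le_nhds
      refine squeeze_zero' (eventually_mem_nhdsWithin.mono fun t ht => hΦ0 ht)
        (eventually_mem_nhdsWithin.mono fun t ht => (hΦ x hx x t ht).trans_eq ?_) hlim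
      rw [sub_self, norm_zero, zero_pow two_ne_zero, zero_add]
    have hlim := (hΦt.rpow_const (p := p - 1 / (q - 1)) (.inr (by linarith))).const_mul D
    rw [Real.zero_rpow (by linarith), mul_zero] at hlim
    refine squeeze_zero' hnonneg (eventually_mem_nhdsWithin.mono fun t ht => ?_) hlim
    calc u x t * (1 - heatPot N η x t) ^ p
        = u x t * (1 - heatPot N η x t) ^ (1 / (q - 1)) *
            (1 - heatPot N η x t) ^ (p - 1 / (q - 1)) := by
          rw [mul_assoc, ← Real.rpow_add_of_nonneg (hΦ0 ht) hk.le (by linarith),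
            add_sub_cancel]
      _ ≤ D * (1 - heatPot N η x t) ^ (p - 1 / (q - 1)) :=
          mul_le_mul_of_nonneg_right (hD x t ht) (Real.rpow_nonneg (hΦ0 ht) _)
  · refine squeeze_zero' hnonneg (eventually_mem_nhdsWithin.mono fun t ht => ?_)
      (hu.tendsto_of_notMem hx)
    exact mul_le_of_le_one_right (hu.2.1 x t ht).le (Real.rpow_le_one (hΦ0 ht)
      (one_sub_heatPot_le_one (fun y => (h01 y).1) x ht) (by linarith))

end InitialLayer

/-! ### The weighted integral estimate -/

/-- The function `(1 - ℍ[η])^p ω` with the weight `ω = parabolicWeight N p ε`, against which the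
equation is tested. The factor `(1 - ℍ[η])^p` suppresses the initial singularities of `u`. -/
def heatTestFun (N : ℕ) (p ε : ℝ) (η : Euc N → ℝ) (x : Euc N) (t : ℝ) : ℝ :=
  (1 - heatPot N η x t) ^ p * parabolicWeight N p ε x t

section HeatTestFun

variable {N : ℕ} {q p ε s t : ℝ} {u : Euc N → ℝ → ℝ} {η : Euc N → ℝ} {K : Set (Euc N)}

theorem contDiffOn_heatTestFun (hη : ContDiff ℝ 2 η) (hc : HasCompactSupport η) (hp : 2 ≤ p)
    (hε : 0 ≤ ε) :
    ContDiffOn ℝ 2 (fun z : Euc N × ℝ => heatTestFun N p ε η z.1 z.2) (univ ×ˢ Ioi 0) :=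
  ((contDiffOn_const.sub (contDiffOn_heatPot (n := 2) hη hc)).rpow_const_of_le (m := 2)
    (by exact_mod_cast hp)).mul (contDiff_parabolicWeight hε).contDiffOn

theorem heatTestFun_nonneg (hη : Continuous η) (hc : HasCompactSupport η) (h1 : ∀ y, η y ≤ 1)
    (hε : 0 ≤ ε) (x : Euc N) (ht : 0 < t) : 0 ≤ heatTestFun N p ε η x t :=
  mul_nonneg (Real.rpow_nonneg (one_sub_heatPot_nonneg hη hc h1 x ht) p)
    (parabolicWeight_pos hε x).le

theorem heatTestFun_le_polyWeight (hη : Continuous η) (hc : HasCompactSupport η)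
    (h01 : ∀ y, 0 ≤ η y ∧ η y ≤ 1) (hp : 0 ≤ p) (hε : 0 ≤ ε) (x : Euc N) (ht : 0 < t) :
    heatTestFun N p ε η x t ≤ polyWeight N ε x :=
  (mul_le_of_le_one_left (parabolicWeight_pos hε x).le <|
    Real.rpow_le_one (one_sub_heatPot_nonneg hη hc (fun y => (h01 y).2) x ht)
      (one_sub_heatPot_le_one (fun y => (h01 y).1) x ht) hp).trans
    (parabolicWeight_le_polyWeight hp hε ht.le x)

theorem exists_norm_fderiv_heatPot_le (hη : ContDiff ℝ 2 η) (hc : HasCompactSupport η) :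
    ∃ M : ℝ, 0 ≤ M ∧ ∀ x t, 0 < t → ‖fderiv ℝ (fun y => heatPot N η y t) x‖ ≤ M := by
  obtain ⟨M, g, hM, hg, hgc, hgM, hle⟩ := exists_heatPotR_le_mul_heatPot hη hc
  refine ⟨√((M + 1) * M), Real.sqrt_nonneg _, fun x t ht => Real.le_sqrt_of_sq_le ?_⟩
  calc ‖fderiv ℝ (fun y => heatPot N η y t) x‖ ^ 2 ≤ heatPotR N η x t :=
        le_add_of_nonneg_right (abs_nonneg _)
    _ ≤ (M + 1) * heatPot N g x t := hle x t ht
    _ ≤ (M + 1) * M := by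
        gcongr
        exact heatPot_le_of_forall_le hg hgc (fun y => (hgM y).2) x ht

theorem exists_norm_fderiv_heatTestFun_le (hη : ContDiff ℝ 2 η) (hc : HasCompactSupport η)
    (h01 : ∀ y, 0 ≤ η y ∧ η y ≤ 1) (hp : 1 ≤ p) (hε : 0 ≤ ε) :
    ∃ M : ℝ, 0 ≤ M ∧ ∀ x t, 0 < t →
      ‖fderiv ℝ (fun y => heatTestFun N p ε η y t) x‖ ≤ M * polyWeight N ε x := by
  obtain ⟨M, hM, hle⟩ := exists_norm_fderiv_heatPot_le hη hc
  refine ⟨N * √ε + p * M, by positivity, fun x t ht => ?_⟩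
  have hdiff := (contDiff_heatPot (n := 2) hη hc ht).differentiable two_ne_zero x
  have hω : DifferentiableAt ℝ (fun y => parabolicWeight N p ε y t) x :=
    ((contDiff_polyWeight hε).differentiable two_ne_zero x).const_mul _
  have hbound := norm_fderiv_rpow_mul_le (hdiff.const_sub 1)
    (one_sub_heatPot_nonneg hη.continuous hc (fun y => (h01 y).2) x ht)
    (one_sub_heatPot_le_one (fun y => (h01 y).1) x ht) hω (parabolicWeight_pos hε x).le
    (norm_fderiv_parabolicWeight_le hε x) hp
  rw [fderiv_const_sub, norm_neg] at hbound
  refine hbound.trans ?_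
  gcongr
  · exact (parabolicWeight_pos hε x).le
  · exact hle x t ht
  · exact parabolicWeight_le_polyWeight (by linarith) hε ht.le x

theorem deriv_heatTestFun_add_lapl_le (hη : ContDiff ℝ 2 η) (hc : HasCompactSupport η)
    (h01 : ∀ y, 0 ≤ η y ∧ η y ≤ 1) (hp : 2 ≤ p) (hε : 0 ≤ ε) (x : Euc N) (ht : 0 < t) :
    deriv (heatTestFun N p ε η x) t + lapl (fun y => heatTestFun N p ε η y t) x ≤
      parabolicWeight N p ε x t *
        ((1 - heatPot N η x t) ^ (p - 2) * (p ^ 2 * heatPotR N η x t)) := by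
  have hderiv := hasDerivAt_heatPot hη hc x ht
  have hωd : DifferentiableAt ℝ (parabolicWeight N p ε x) t := by
    unfold parabolicWeight
    fun_prop
  have hω0 := (parabolicWeight_pos (p := p) (t := t) hε x).le
  have hΦ0 := one_sub_heatPot_nonneg hη.continuous hc (fun y => (h01 y).2) x ht
  have hbound := deriv_add_lapl_rpow_mul_le (f := fun y s => 1 - heatPot N η y s) hp
    (hderiv.differentiableAt.const_sub 1)
    (contDiffAt_const.sub (contDiff_heatPot (n := 2) hη hc ht).contDiffAt) hΦ0
    (one_sub_heatPot_le_one (fun y => (h01 y).1) x ht) hωd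
    (contDiffAt_const.mul (contDiff_polyWeight hε).contDiffAt) hω0
    (norm_fderiv_parabolicWeight_le hε x) (deriv_parabolicWeight_add_lapl_le hε x)
  refine hbound.trans ?_
  rw [fderiv_const_sub, norm_neg, lapl_const_sub, lapl_heatPot hη hc x ht, deriv_const_sub,
    hderiv.deriv, heatPotR, hderiv.deriv, ← neg_add, abs_neg, ← two_mul, abs_mul, abs_two]
  gcongr
  have hp' : p * 2 ≤ p ^ 2 := by nlinarith
  linarith [mul_le_mul_of_nonneg_right hp' (abs_nonneg (heatPot N (lapl η) x t))]

theorem mul_sub_rpow_mul_rpow_le {U φ X : ℝ} (hq : 1 < q) (hU : 0 ≤ U) (hφ : 0 ≤ φ)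
    (hX : 0 ≤ X) :
    U * (φ ^ (2 * (q / (q - 1)) - 2) * X) - U ^ q * φ ^ (2 * (q / (q - 1))) ≤
      X ^ (q / (q - 1)) := by
  have hq1 : q - 1 ≠ 0 := (sub_pos.2 hq).ne'
  have hconj := Real.HolderConjugate.conjExponent hq
  have hyoung := Real.young_inequality_of_nonneg
    (mul_nonneg hU (Real.rpow_nonneg hφ (2 * (q / (q - 1)) - 2))) hX hconj
  rw [Real.mul_rpow hU (by positivity), ← Real.rpow_mul hφ,
    show (2 * (q / (q - 1)) - 2) * q = 2 * (q / (q - 1)) by field_simp; ring] at hyoung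
  rw [← mul_assoc, sub_le_iff_le_add']
  exact hyoung.trans (add_le_add (div_le_self (by positivity) hq.le)
    (div_le_self (by positivity) hconj.symm.lt.le))

theorem mul_deriv_heatTestFun_add_lapl_sub_le (hq : 1 < q) (hp : p = 2 * (q / (q - 1)))
    (hη : ContDiff ℝ 2 η) (hc : HasCompactSupport η) (h01 : ∀ y, 0 ≤ η y ∧ η y ≤ 1)
    (hε : 0 ≤ ε) (x : Euc N) (ht : 0 < t) {U : ℝ} (hU : 0 ≤ U) :
    U * (deriv (heatTestFun N p ε η x) t + lapl (fun y => heatTestFun N p ε η y t) x) -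
      U ^ q * heatTestFun N p ε η x t ≤
        (p ^ 2) ^ (q / (q - 1)) * heatPotR N η x t ^ (q / (q - 1)) := by
  have hp2 : 2 ≤ p := by linarith [one_lt_conjExponent hq]
  have hΦ0 := one_sub_heatPot_nonneg hη.continuous hc (fun y => (h01 y).2) x ht
  have hR := heatPotR_nonneg η x t
  have hω0 := (parabolicWeight_pos (p := p) (t := t) hε x).le
  have hω1 : parabolicWeight N p ε x t ≤ 1 :=
    (parabolicWeight_le_polyWeight (by linarith) hε ht.le x).trans (polyWeight_le_one hε x)
  have hyoung := mul_sub_rpow_mul_rpow_le hq hU hΦ0 (mul_nonneg (sq_nonneg p) hR)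
  rw [← hp] at hyoung
  calc _ ≤ U * (parabolicWeight N p ε x t *
        ((1 - heatPot N η x t) ^ (p - 2) * (p ^ 2 * heatPotR N η x t))) -
          U ^ q * heatTestFun N p ε η x t := by
        gcongr
        exact deriv_heatTestFun_add_lapl_le hη hc h01 hp2 hε x ht
    _ = parabolicWeight N p ε x t *
        (U * ((1 - heatPot N η x t) ^ (p - 2) * (p ^ 2 * heatPotR N η x t)) -
          U ^ q * (1 - heatPot N η x t) ^ p) := by
        rw [heatTestFun]
        ring
    _ ≤ parabolicWeight N p ε x t * (p ^ 2 * heatPotR N η x t) ^ (q / (q - 1)) := by gcongr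
    _ ≤ (p ^ 2 * heatPotR N η x t) ^ (q / (q - 1)) :=
        mul_le_of_le_one_left (by positivity) hω1
    _ = _ := Real.mul_rpow (sq_nonneg p) hR

theorem IsSol.integral_mul_heatTestFun_le (hu : IsSol N q u K) (hN : 1 ≤ N) (hq : 1 < q)
    (hp : p = 2 * (q / (q - 1))) (hη : ContDiff ℝ 2 η) (hc : HasCompactSupport η)
    (h01 : ∀ y, 0 ≤ η y ∧ η y ≤ 1) (hε : 0 < ε) {a : ℝ} (ha : 0 < a) (has : a ≤ s) :
    ∫ x, u x s * heatTestFun N p ε η x s ≤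
      (∫ x, u x a * heatTestFun N p ε η x a) + (p ^ 2) ^ (q / (q - 1)) * Rnorm N q η := by
  have hq' := one_lt_conjExponent hq
  have hpos {t : ℝ} (ht : t ∈ Icc a s) : 0 < t := ha.trans_le ht.1
  have hI := (integrableOn_integral_heatPotR_rpow hη hc h01 hq').mono_set
    (fun t ht => hpos ht : Icc a s ⊆ Ioi 0)
  obtain ⟨M, hM, hgrad⟩ := exists_norm_fderiv_heatTestFun_le (p := p) hη hc h01 (by linarith) hε.le
  have hbound := hu.integral_mul_le hq ha has isOpen_Ioi subset_rfl (fun t ht => hpos ht)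
    (contDiffOn_heatTestFun (p := p) hη hc (by linarith) hε.le)
    ((integrable_polyWeight hN hε).const_mul (M + 1))
    (fun t ht x => by
      rw [abs_of_nonneg
        (heatTestFun_nonneg hη.continuous hc (fun y => (h01 y).2) hε.le x (hpos ht))]
      exact (heatTestFun_le_polyWeight hη.continuous hc h01 (by linarith) hε.le x (hpos ht)).trans
        (le_mul_of_one_le_left (polyWeight_pos hε.le x).le (le_add_of_nonneg_left hM)))
    (fun t ht x => (hgrad x t (hpos ht)).trans
      (mul_le_mul_of_nonneg_right (le_add_of_nonneg_right zero_le_one)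
        (polyWeight_pos hε.le x).le))
    (H := fun x t => (p ^ 2) ^ (q / (q - 1)) * heatPotR N η x t ^ (q / (q - 1)))
    (fun t _ x => mul_nonneg (by positivity) (Real.rpow_nonneg (heatPotR_nonneg η x t) _))
    (fun t ht => (integrable_heatPotR_rpow hη hc hq'.le (hpos ht)).const_mul _)
    (by simp_rw [integral_const_mul]; exact hI.const_mul _)
    (fun t ht x => mul_deriv_heatTestFun_add_lapl_sub_le hq hp hη hc h01 hε.le x (hpos ht)
      (hu.2.1 x t (hpos ht)).le)
  simp_rw [integral_const_mul, intervalIntegral.integral_const_mul] at hbound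
  refine hbound.trans ?_
  gcongr
  exact intervalIntegral_heatPotR_rpow_le_Rnorm hq hη hc h01 ha.le has

theorem IsSol.exists_mul_heatTestFun_le (hu : IsSol N q u K) (hq : 1 < q) (hη : ContDiff ℝ 2 η)
    (hc : HasCompactSupport η) (h01 : ∀ y, 0 ≤ η y ∧ η y ≤ 1) (hK : ∀ z ∈ K, η z = 1)
    (hp : 1 / (q - 1) ≤ p) (hε : 0 ≤ ε) :
    ∃ D : ℝ, ∀ x t, 0 < t → u x t * heatTestFun N p ε η x t ≤ D * polyWeight N ε x := by
  have hk : 0 < 1 / (q - 1) := one_div_pos.2 (sub_pos.2 hq)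
  obtain ⟨D, hD⟩ := hu.exists_mul_one_sub_heatPot_rpow_le hq hη hc h01 hK
  refine ⟨D, fun x t ht => ?_⟩
  have hΦ0 := one_sub_heatPot_nonneg hη.continuous hc (fun y => (h01 y).2) x ht
  have hu0 := (hu.2.1 x t ht).le
  calc u x t * heatTestFun N p ε η x t
      = u x t * (1 - heatPot N η x t) ^ p * parabolicWeight N p ε x t := (mul_assoc _ _ _).symm
    _ ≤ u x t * (1 - heatPot N η x t) ^ (1 / (q - 1)) * polyWeight N ε x := by
        gcongr ?_ * ?_
        · exact (parabolicWeight_pos hε x).le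
        · exact mul_le_mul_of_nonneg_left (Real.rpow_le_rpow_of_exponent_ge' hΦ0
            (one_sub_heatPot_le_one (fun y => (h01 y).1) x ht) hk.le hp) hu0
        · exact parabolicWeight_le_polyWeight (hk.le.trans hp) hε ht.le x
    _ ≤ D * polyWeight N ε x := mul_le_mul_of_nonneg_right (hD x t ht) (polyWeight_pos hε x).le

theorem IsSol.integrable_mul_heatTestFun (hu : IsSol N q u K) (hN : 1 ≤ N) (hq : 1 < q)
    (hη : ContDiff ℝ 2 η) (hc : HasCompactSupport η) (h01 : ∀ y, 0 ≤ η y ∧ η y ≤ 1)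
    (hK : ∀ z ∈ K, η z = 1) (hp : 1 / (q - 1) ≤ p) (hp2 : 2 ≤ p) (hε : 0 < ε) (ht : 0 < t) :
    Integrable fun x => u x t * heatTestFun N p ε η x t := by
  obtain ⟨D, hD⟩ := hu.exists_mul_heatTestFun_le hq hη hc h01 hK hp hε.le
  have hcont := (contDiffOn_heatTestFun (ε := ε) hη hc hp2 hε.le).continuousOn.comp_continuous
    (f := fun x => (x, t)) (by fun_prop) fun x => ⟨mem_univ x, ht⟩
  refine ((integrable_polyWeight hN hε).const_mul D).mono'
    ((hu.contDiff_space ht).continuous.mul hcont).aestronglyMeasurable (.of_forall fun x => ?_)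
  rw [Real.norm_of_nonneg (mul_nonneg (hu.2.1 x t ht).le
    (heatTestFun_nonneg hη.continuous hc (fun y => (h01 y).2) hε.le x ht))]
  exact hD x t ht

theorem IsSol.tendsto_integral_mul_heatTestFun (hu : IsSol N q u K) (hN : 1 ≤ N) (hq : 1 < q)
    (hη : ContDiff ℝ 2 η) (hc : HasCompactSupport η) (h01 : ∀ y, 0 ≤ η y ∧ η y ≤ 1)
    (hK : ∀ z ∈ K, η z = 1) (hp : 1 / (q - 1) < p) (hp2 : 2 ≤ p) (hε : 0 < ε) :
    Tendsto (fun t => ∫ x, u x t * heatTestFun N p ε η x t) (𝓝[>] 0) (𝓝 0) := by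
  obtain ⟨D, hD⟩ := hu.exists_mul_heatTestFun_le hq hη hc h01 hK hp.le hε.le
  suffices Tendsto (fun t => ∫ x, u x t * heatTestFun N p ε η x t) (𝓝[>] 0)
      (𝓝 (∫ _ : Euc N, (0 : ℝ))) by simpa only [integral_zero] using this
  refine tendsto_integral_filter_of_dominated_convergence (fun x => D * polyWeight N ε x)
    (eventually_mem_nhdsWithin.mono fun t ht => ?_)
    (eventually_mem_nhdsWithin.mono fun t ht => .of_forall fun x => ?_)
    ((integrable_polyWeight hN hε).const_mul D) (.of_forall fun x => ?_)
  · exact (hu.integrable_mul_heatTestFun hN hq hη hc h01 hK hp.le hp2 hε ht).aestronglyMeasurable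
  · rw [Real.norm_of_nonneg (mul_nonneg (hu.2.1 x t ht).le
      (heatTestFun_nonneg hη.continuous hc (fun y => (h01 y).2) hε.le x ht))]
    exact hD x t ht
  · have hω : Tendsto (parabolicWeight N p ε x) (𝓝[>] 0) (𝓝 (parabolicWeight N p ε x 0)) :=
      (Continuous.tendsto (by unfold parabolicWeight; fun_prop) 0).mono_left nhdsWithin_le_nhds
    simpa only [heatTestFun, mul_assoc, zero_mul] using
      (hu.tendsto_mul_one_sub_heatPot_rpow hq hη hc h01 hK hp x).mul hω

theorem one_div_sub_one_lt_two_mul_conjExponent (hq : 1 < q) :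
    1 / (q - 1) < 2 * (q / (q - 1)) := by
  have : 0 < q - 1 := sub_pos.2 hq
  rw [← mul_div_assoc]
  gcongr
  linarith

theorem IsSol.integral_mul_heatTestFun_le_Rnorm (hu : IsSol N q u K) (hN : 1 ≤ N) (hq : 1 < q)
    (hp : p = 2 * (q / (q - 1))) (hη : ContDiff ℝ 2 η) (hc : HasCompactSupport η)
    (h01 : ∀ y, 0 ≤ η y ∧ η y ≤ 1) (hK : ∀ z ∈ K, η z = 1) (hε : 0 < ε) (hs : 0 < s) :
    ∫ x, u x s * heatTestFun N p ε η x s ≤ (p ^ 2) ^ (q / (q - 1)) * Rnorm N q η := by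
  have hlim := (hu.tendsto_integral_mul_heatTestFun hN hq hη hc h01 hK
    (hp ▸ one_div_sub_one_lt_two_mul_conjExponent hq)
    (by linarith [one_lt_conjExponent hq]) hε).add_const ((p ^ 2) ^ (q / (q - 1)) * Rnorm N q η)
  rw [zero_add] at hlim
  refine ge_of_tendsto hlim ?_
  filter_upwards [Ioc_mem_nhdsGT hs] with a ha
  exact hu.integral_mul_heatTestFun_le hN hq hp hη hc h01 hε ha.1 ha.2

end HeatTestFun

/-! ### The pointwise estimate -/

section PointwiseEstimate

variable {N : ℕ} {q p ε s t τ c : ℝ} {u : Euc N → ℝ → ℝ} {η : Euc N → ℝ} {K : Set (Euc N)}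

theorem exp_neg_le_polyWeight (hε : 0 ≤ ε) (x : Euc N) :
    Real.exp (-(N * (ε * ‖x‖ ^ 2))) ≤ polyWeight N ε x := by
  rw [mul_comm, ← mul_neg, Real.exp_mul]
  exact Real.rpow_le_rpow_of_nonpos (by positivity)
    (by linarith [Real.add_one_le_exp (ε * ‖x‖ ^ 2)]) (neg_nonpos.2 N.cast_nonneg)

theorem heatKernel_sub_le_mul_polyWeight (hτ : 0 < τ) (hε : 0 ≤ ε)
    (hετ : 2 * N * ε ≤ 1 / (4 * τ)) (x y : Euc N) :
    heatKernel N (y - x) τ ≤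
      (4 * π * τ) ^ (-(N : ℝ) / 2) * (Real.exp (2 * N * ε * ‖x‖ ^ 2) * polyWeight N ε y) := by
  have hy : ‖y‖ ^ 2 ≤ 2 * ‖x‖ ^ 2 + 2 * ‖y - x‖ ^ 2 := by
    have htri : ‖y‖ ≤ ‖x‖ + ‖y - x‖ := norm_le_norm_add_norm_sub' y x
    nlinarith [sq_nonneg (‖x‖ - ‖y - x‖), norm_nonneg y]
  have hexp : -‖y - x‖ ^ 2 / (4 * τ) ≤ 2 * N * ε * ‖x‖ ^ 2 + -(N * (ε * ‖y‖ ^ 2)) := by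
    have hNy := mul_le_mul_of_nonneg_left hy (mul_nonneg N.cast_nonneg hε)
    have hdiff := mul_le_mul_of_nonneg_right hετ (sq_nonneg ‖y - x‖)
    rw [one_div_mul_eq_div] at hdiff
    rw [neg_div]
    linarith
  unfold heatKernel
  gcongr
  calc Real.exp (-‖y - x‖ ^ 2 / (4 * τ))
      ≤ Real.exp (2 * N * ε * ‖x‖ ^ 2 + -(N * (ε * ‖y‖ ^ 2))) := Real.exp_le_exp.2 hexp
    _ = Real.exp (2 * N * ε * ‖x‖ ^ 2) * Real.exp (-(N * (ε * ‖y‖ ^ 2))) := Real.exp_add _ _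
    _ ≤ _ := by
        gcongr
        exact exp_neg_le_polyWeight hε y

theorem polyWeight_le_mul_heatTestFun (hp : 0 ≤ p) (hε : 0 ≤ ε) (hc : 0 < c) {y : Euc N}
    (hΦ : c ≤ 1 - heatPot N η y s) :
    polyWeight N ε y ≤ Real.exp ((N * (N + 1) + p * N ^ 2) * ε * s) / c ^ p *
      heatTestFun N p ε η y s := by
  have hω : polyWeight N ε y =
      Real.exp ((N * (N + 1) + p * N ^ 2) * ε * s) * parabolicWeight N p ε y s := by
    rw [parabolicWeight, ← mul_assoc, ← Real.exp_add, neg_mul, add_neg_cancel, Real.exp_zero,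
      one_mul]
  have hcp := Real.rpow_le_rpow hc.le hΦ hp
  rw [heatTestFun, div_mul_eq_mul_div, le_div_iff₀ (by positivity), hω, mul_assoc,
    mul_comm _ (c ^ p)]
  have := (parabolicWeight_pos (p := p) (t := s) hε y).le
  gcongr

theorem IsSol.integral_mul_heatKernel_sub_le (hu : IsSol N q u K) (hN : 1 ≤ N) (hq : 1 < q)
    (hp : p = 2 * (q / (q - 1))) (hη : ContDiff ℝ 2 η) (hcs : HasCompactSupport η)
    (h01 : ∀ y, 0 ≤ η y ∧ η y ≤ 1) (hK : ∀ z ∈ K, η z = 1) (hε : 0 < ε) (hs : 0 < s)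
    (hτ : 0 < τ) (hετ : 2 * N * ε ≤ 1 / (4 * τ)) (hc : 0 < c)
    (hΦ : ∀ y, c ≤ 1 - heatPot N η y s) (x : Euc N) :
    ∫ y, u y s * heatKernel N (y - x) τ ≤
      (4 * π * τ) ^ (-(N : ℝ) / 2) * (Real.exp (2 * N * ε * ‖x‖ ^ 2) *
        (Real.exp ((N * (N + 1) + p * N ^ 2) * ε * s) / c ^ p)) *
          ((p ^ 2) ^ (q / (q - 1)) * Rnorm N q η) := by
  have hp2 : 2 ≤ p := by linarith [one_lt_conjExponent hq]
  set A := (4 * π * τ) ^ (-(N : ℝ) / 2) * (Real.exp (2 * N * ε * ‖x‖ ^ 2) *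
    (Real.exp ((N * (N + 1) + p * N ^ 2) * ε * s) / c ^ p)) with hA
  have hkernel (y : Euc N) : heatKernel N (y - x) τ ≤ A * heatTestFun N p ε η y s := by
    refine (heatKernel_sub_le_mul_polyWeight hτ hε.le hετ x y).trans ?_
    rw [hA, mul_assoc _ _ (heatTestFun N p ε η y s), mul_assoc _ _ (heatTestFun N p ε η y s)]
    gcongr
    exact polyWeight_le_mul_heatTestFun (zero_le_two.trans hp2) hε.le hc (hΦ y)
  calc ∫ y, u y s * heatKernel N (y - x) τ
      ≤ ∫ y, A * (u y s * heatTestFun N p ε η y s) := by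
        refine integral_mono (hu.integrable_mul_heatKernel_sub hq hs hτ x)
          ((hu.integrable_mul_heatTestFun hN hq hη hcs h01 hK
            (hp ▸ (one_div_sub_one_lt_two_mul_conjExponent hq).le) hp2 hε hs).const_mul A)
          fun y => ?_
        rw [mul_left_comm]
        exact mul_le_mul_of_nonneg_left (hkernel y) (hu.2.1 y s hs).le
    _ = A * ∫ y, u y s * heatTestFun N p ε η y s := integral_const_mul _ _
    _ ≤ A * ((p ^ 2) ^ (q / (q - 1)) * Rnorm N q η) := by
        gcongr
        exact hu.integral_mul_heatTestFun_le_Rnorm hN hq hp hη hcs h01 hK hε hs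

theorem IsSol.le_mul_Rnorm (hu : IsSol N q u K) (hN : 1 ≤ N) (hq : 1 < q)
    (hp : p = 2 * (q / (q - 1))) (hη : ContDiff ℝ 2 η) (hcs : HasCompactSupport η)
    (h01 : ∀ y, 0 ≤ η y ∧ η y ≤ 1) (hK : ∀ z ∈ K, η z = 1) (hs : 0 < s) (hst : s < t)
    (hc : 0 < c) (hΦ : ∀ y, c ≤ 1 - heatPot N η y s) (x : Euc N) :
    u x t ≤ (4 * π * (t - s)) ^ (-(N : ℝ) / 2) * (1 / c ^ p) *
      ((p ^ 2) ^ (q / (q - 1)) * Rnorm N q η) := by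
  have hτ := sub_pos.2 hst
  have hlim : Tendsto (fun ε : ℝ => (4 * π * (t - s)) ^ (-(N : ℝ) / 2) *
      (Real.exp (2 * N * ε * ‖x‖ ^ 2) *
        (Real.exp ((N * (N + 1) + p * N ^ 2) * ε * s) / c ^ p)) *
          ((p ^ 2) ^ (q / (q - 1)) * Rnorm N q η)) (𝓝[>] 0)
      (𝓝 ((4 * π * (t - s)) ^ (-(N : ℝ) / 2) * (1 / c ^ p) *
        ((p ^ 2) ^ (q / (q - 1)) * Rnorm N q η))) := by
    refine Tendsto.mono_left (Continuous.tendsto' (by fun_prop) _ _ ?_) nhdsWithin_le_nhds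
    simp
  have hsmall : ∀ᶠ ε : ℝ in 𝓝[>] 0, 2 * N * ε < 1 / (4 * (t - s)) :=
    (Continuous.tendsto' (by fun_prop) 0 0 (mul_zero _)).mono_left nhdsWithin_le_nhds
      |>.eventually_lt_const (by positivity)
  refine (hu.le_integral_mul_heatKernel hq hs hst x).trans (ge_of_tendsto hlim ?_)
  filter_upwards [hsmall, self_mem_nhdsWithin] with ε hετ hε
  exact hu.integral_mul_heatKernel_sub_le hN hq hp hη hcs h01 hK hε hs hτ hετ.le hc hΦ x

end PointwiseEstimate

theorem Rnorm_nonneg (N : ℕ) (q : ℝ) (η : Euc N → ℝ) : 0 ≤ Rnorm N q η :=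
  integral_nonneg fun t => integral_heatPotR_rpow_nonneg η _ t

theorem rpow_neg_four_pi_mul_sq_sub_sq_le {a r ρ : ℝ} (ha : 0 ≤ a) (hr : 0 ≤ r) (hρ : 0 < ρ) :
    (4 * π * ((r + 2 * ρ) ^ 2 - (r + ρ) ^ 2)) ^ (-a) ≤ 1 / (ρ * (r + ρ)) ^ a := by
  rw [one_div, ← Real.rpow_neg (by positivity)]
  refine Real.rpow_le_rpow_of_nonpos (by positivity) ?_ (neg_nonpos.2 ha)
  have : 0 < ρ * (r + ρ) := by positivity
  calc ρ * (r + ρ) ≤ (r + 2 * ρ) ^ 2 - (r + ρ) ^ 2 := by nlinarith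
    _ ≤ 4 * π * ((r + 2 * ρ) ^ 2 - (r + ρ) ^ 2) :=
        le_mul_of_one_le_left (by nlinarith) (by linarith [Real.pi_gt_three])

theorem stmt12_general (N : ℕ) (hN : 1 ≤ N) (q : ℝ) (hq : 1 < q) :
    ∃ C : ℝ, 0 < C ∧
      ∀ r ρ : ℝ, 0 < r → 0 < ρ →
        ∀ (K : Set (Euc N)) (η : Euc N → ℝ), ContDiff ℝ 2 η →
          tsupport η ⊆ Metric.ball (0 : Euc N) (r + ρ) → (∀ x, 0 ≤ η x ∧ η x ≤ 1) →
            (∀ x ∈ K, η x = 1) →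
              ∀ u : Euc N → ℝ → ℝ, IsSol N q u K →
                ∀ x : Euc N,
                  u x ((r + 2 * ρ) ^ 2) ≤
                    C * Rnorm N q η / (ρ * (r + ρ)) ^ ((N : ℝ) / 2) := by
  obtain ⟨c, hc, hc_le⟩ : ∃ c : ℝ, 0 < c ∧ c ≤ 1 - π ^ (-(N : ℝ) / 2) :=
    ⟨_, sub_pos.2 (pi_rpow_neg_natCast_div_two_lt_one hN), le_rfl⟩
  obtain ⟨p, hp⟩ : ∃ p : ℝ, p = 2 * (q / (q - 1)) := ⟨_, rfl⟩
  have hp0 : 0 < p := by linarith [one_lt_conjExponent hq]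
  refine ⟨1 / c ^ p * (p ^ 2) ^ (q / (q - 1)), by positivity,
    fun r ρ hr hρ K η hη hsupp h01 hK u hu x => ?_⟩
  have hΦ (y : Euc N) : c ≤ 1 - heatPot N η y ((r + ρ) ^ 2) := by
    linarith [heatPot_sq_le_pi_rpow hη.continuous h01 (by positivity) hsupp y]
  have hbound := hu.le_mul_Rnorm hN hq hp hη (hasCompactSupport_of_tsupport_subset_ball hsupp)
    h01 hK (s := (r + ρ) ^ 2) (t := (r + 2 * ρ) ^ 2) (by positivity) (by gcongr; linarith) hc hΦ x
  have htime := rpow_neg_four_pi_mul_sq_sub_sq_le (a := (N : ℝ) / 2) (by positivity) hr.le hρ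
  rw [← neg_div] at htime
  have hR := Rnorm_nonneg N q η
  calc _ ≤ _ := hbound
    _ ≤ 1 / (ρ * (r + ρ)) ^ ((N : ℝ) / 2) * (1 / c ^ p) *
          ((p ^ 2) ^ (q / (q - 1)) * Rnorm N q η) := by gcongr
    _ = _ := by ring

/-- Lemma 2.14: rough pointwise estimate at time `(r+2ρ)²`. -/
theorem stmt12 (N : ℕ) (hN : 1 ≤ N) (q : ℝ) (hq : 1 < q) :
    ∃ C : ℝ, 0 < C ∧
      ∀ r ρ : ℝ, 0 < r → 0 < ρ →
        ∀ K : Set (Euc N), IsCompact K → K ⊆ Metric.ball (0 : Euc N) r →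
          ∀ η : Euc N → ℝ, TestFun N r ρ K η →
            ∀ u : Euc N → ℝ → ℝ, IsSol N q u K →
              ∀ x : Euc N,
                u x ((r + 2 * ρ) ^ 2) ≤
                  C * Rnorm N q η / (ρ * (r + ρ)) ^ ((N : ℝ) / 2) := by
  obtain ⟨C, hC, h⟩ := stmt12_general N hN q hq
  exact ⟨C, hC, fun r ρ hr hρ K _ _ η hη => h r ρ hr hρ K η
    (hη.1.of_le (WithTop.coe_le_coe.2 (le_top (a := (2 : ℕ∞))))) hη.2.2.1 hη.2.2.2.1 hη.2.2.2.2⟩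

end
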